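/- arXiv:1304.7216 — 2 statements merged into one kernel-verified Lean document; each statement's English description precedes it below -/
import Mathlib

section
/- Let Γ be an infinite group generated by a finite set S with S = S⁻¹ and 1 ∉ S, and let G = G(Γ,S) be its Cayley graph. Let ρ ∈ Γ with ρ ≠ 1, let N be the normal closure of ρ in Γ, and suppose that the quotient group Q = Γ/N is infinite and that no element of S lies in N. Let S' ⊆ Q be the image of S under the quotient map, and let G_ρ = G(Q, S') be the Cayley graph of Q with generating set S'. If σ_n(1)^{1/n} → μ as n → ∞ (counting SAWs in G from the identity) and σ'_n(1)^{1/n} → μ' as n → ∞ (counting SAWs in G_ρ from the identity), then μ' < μ. That is, adding a further non-trivial relator strictly decreases the connective constant of the Cayley graph. -/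
open Filter

/-- The number of `n`-step self-avoiding walks in `G` starting at `v`. -/
noncomputable def sawCount {V : Type*} (G : SimpleGraph V) (v : V) (n : ℕ) : ℕ :=
  Nat.card {p : Σ w : V, G.Walk v w // p.2.IsPath ∧ p.2.length = n}

/-- The Cayley graph of a group with respect to a set `S` (assumed symmetric, `S = S⁻¹`,
and not containing `1`): distinct `g, h` are adjacent iff `g⁻¹ * h ∈ S`. -/
def cayleyGraph {G : Type*} [Group G] (S : Set G) : SimpleGraph G :=
  SimpleGraph.fromRel (fun g h => g⁻¹ * h ∈ S)

section helpers
open Classical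

/-! ### Words -/

def hv {H : Type*} [Group H] : H → List H → List H
  | _, [] => []
  | g, s :: l => g :: hv (g * s) l

theorem hv_append {H : Type*} [Group H] (l l' : List H) : ∀ g : H,
    hv g (l ++ l') = hv g l ++ hv (g * l.prod) l' := by
  induction l with
  | nil => intro g; simp [hv]
  | cons s l ih => intro g; simp [hv, ih, mul_assoc]

theorem hv_mul {H : Type*} [Group H] (l : List H) : ∀ g h : H,
    hv (g * h) l = (hv h l).map (g * ·) := by
  induction l with
  | nil => intro g h; simp [hv]
  | cons s l ih => intro g h; simp [hv, mul_assoc, ih]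

theorem hv_one {H : Type*} [Group H] (l : List H) (g : H) :
    hv g l = (hv 1 l).map (g * ·) := by
  rw [← hv_mul, mul_one]

theorem hv_hom {H K : Type*} [Group H] [Group K] (φ : H →* K) (l : List H) : ∀ g : H,
    (hv g l).map φ = hv (φ g) (l.map φ) := by
  induction l with
  | nil => intro g; simp [hv]
  | cons s l ih => intro g; simp [hv, ih]

theorem hv_nodup_iff {H : Type*} [Group H] (l : List H) (g : H) :
    (hv g l).Nodup ↔ (hv 1 l).Nodup := by
  rw [hv_one]
  exact List.nodup_map_iff (mul_right_injective g)

/-- words over `A` of length `n` -/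
noncomputable def wds {α : Type*} (A : Finset α) : ℕ → Finset (List α)
  | 0 => {[]}
  | n + 1 => (A ×ˢ wds A n).image (fun p => p.1 :: p.2)

theorem mem_wds {α : Type*} (A : Finset α) : ∀ (n : ℕ) (l : List α),
    l ∈ wds A n ↔ l.length = n ∧ ∀ x ∈ l, x ∈ A := by
  intro n
  induction n with
  | zero => intro l; simp only [wds, Finset.mem_singleton]; constructor
            · rintro rfl; simp
            · rintro ⟨h, -⟩; exact List.length_eq_zero_iff.mp h
  | succ n ih =>
    intro l
    simp only [wds, Finset.mem_image, Finset.mem_product, Prod.exists]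
    constructor
    · rintro ⟨a, b, ⟨ha, hb⟩, rfl⟩
      obtain ⟨h1, h2⟩ := (ih b).1 hb
      simp [h1, ha]; exact h2
    · rintro ⟨h1, h2⟩
      cases l with
      | nil => simp at h1
      | cons a b =>
        refine ⟨a, b, ⟨h2 a (by simp), (ih b).2 ⟨by simpa using h1, fun x hx => h2 x (by simp [hx])⟩⟩, rfl⟩

theorem card_wds_le {α : Type*} (A : Finset α) (n : ℕ) : (wds A n).card ≤ A.card ^ n := by
  induction n with
  | zero => simp [wds]
  | succ n ih =>
    calc _ ≤ (A ×ˢ wds A n).card := Finset.card_image_le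
      _ = A.card * (wds A n).card := Finset.card_product _ _
      _ ≤ _ := by rw [pow_succ, mul_comm]; exact Nat.mul_le_mul_right _ ih

/-- closed nodup word -/
def CN {H : Type*} [Group H] (l : List H) : Prop := (hv 1 l ++ [l.prod]).Nodup

theorem CN_iff {H : Type*} [Group H] (l : List H) (s : H) :
    CN l ↔ (hv 1 (l ++ [s])).Nodup := by
  simp [CN, hv_append, hv]

theorem CN.hv {H : Type*} [Group H] {l : List H} (h : CN l) : (hv 1 l).Nodup :=
  (List.nodup_append.1 h).1

theorem CN.infix {H : Type*} [Group H] {a b c : List H} (h : CN (a ++ b ++ c)) : CN b := by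
  have h2 := (CN_iff _ 1).1 h
  rw [CN_iff _ ((c ++ [1]).head (by simp))]
  have : a ++ b ++ c ++ [1] = a ++ ((b ++ [(c ++ [1]).head (by simp)]) ++ (c ++ [1]).tail) := by
    simp
  rw [this, hv_append] at h2
  have h3 := (List.nodup_append.1 h2).2.1
  rw [hv_append] at h3
  have h4 := (List.nodup_append.1 h3).1
  exact (hv_nodup_iff _ _).1 h4

noncomputable def SW {H : Type*} [Group H] (S : Finset H) (n : ℕ) : Finset (List H) :=
  (wds S n).filter CN

/-! ### Walks to words -/

def toWord {H : Type*} [Group H] {G : SimpleGraph H} : ∀ {u v : H}, G.Walk u v → List H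
  | _, _, .nil => []
  | u, _, .cons (v := v) _ p => (u⁻¹ * v) :: toWord p

theorem toWord_prod {H : Type*} [Group H] {G : SimpleGraph H} {u v : H} (p : G.Walk u v) :
    u * (toWord p).prod = v := by
  induction p with
  | nil => simp [toWord]
  | cons h p ih => rw [toWord, List.prod_cons, ← mul_assoc, mul_inv_cancel_left, ih]

theorem toWord_length {H : Type*} [Group H] {G : SimpleGraph H} {u v : H} (p : G.Walk u v) :
    (toWord p).length = p.length := by
  induction p with
  | nil => simp [toWord]
  | cons h p ih => simp [toWord, ih]

theorem toWord_support {H : Type*} [Group H] {G : SimpleGraph H} {u v : H} (p : G.Walk u v) :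
    p.support = hv u (toWord p) ++ [v] := by
  induction p with
  | nil => simp [toWord, hv]
  | cons h p ih => simp [toWord, hv, ih]

theorem toWord_mem {H : Type*} [Group H] {G : SimpleGraph H} {S : Set H}
    (hG : ∀ u v, G.Adj u v → u⁻¹ * v ∈ S) {u v : H} (p : G.Walk u v) :
    ∀ s ∈ toWord p, s ∈ S := by
  induction p with
  | nil => simp [toWord]
  | cons h p ih =>
    intro s hs
    simp only [toWord, List.mem_cons] at hs
    rcases hs with rfl | hs
    · exact hG _ _ h
    · exact ih s hs

theorem exists_walk {H : Type*} [Group H] {G : SimpleGraph H} {S : Set H}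
    (hG : ∀ u s, s ∈ S → G.Adj u (u * s)) (l : List H) : ∀ (u v : H), (∀ s ∈ l, s ∈ S) →
    u * l.prod = v → ∃ p : G.Walk u v, toWord p = l := by
  induction l with
  | nil =>
    intro u v _ hv
    simp at hv; subst hv
    exact ⟨.nil, rfl⟩
  | cons s l ih =>
    intro u v hl hv
    obtain ⟨p, hp⟩ := ih (u * s) v (fun x hx => hl x (by simp [hx])) (by simpa [mul_assoc] using hv)
    exact ⟨.cons (hG u s (hl s (by simp))) p, by simp [toWord, hp]⟩

theorem cayley_adj {H : Type*} [Group H] {S : Finset H} (hinv : ∀ s ∈ S, s⁻¹ ∈ S)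
    (h1 : (1 : H) ∉ S) (u v : H) : (cayleyGraph (S : Set H)).Adj u v ↔ u⁻¹ * v ∈ S := by
  simp only [cayleyGraph, SimpleGraph.fromRel_adj, Finset.mem_coe]
  constructor
  · rintro ⟨_, h | h⟩
    · exact h
    · simpa using hinv _ h
  · intro h
    refine ⟨?_, Or.inl h⟩
    rintro rfl
    simp at h; exact h1 h

theorem sawCount_eq {H : Type*} [Group H] {S : Finset H} (hinv : ∀ s ∈ S, s⁻¹ ∈ S)
    (h1 : (1 : H) ∉ S) (n : ℕ) : sawCount (cayleyGraph (S : Set H)) 1 n = (SW S n).card := by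
  have hadj := cayley_adj hinv h1
  have e : (SW S n).card = Nat.card (SW S n) := by simp
  rw [sawCount, e]
  refine Nat.card_congr (Equiv.ofBijective (fun p => ⟨toWord p.1.2, ?_⟩) ⟨?_, ?_⟩)
  · obtain ⟨⟨v, p⟩, hp, hl⟩ := p
    simp only [SW, Finset.mem_filter, mem_wds]
    refine ⟨⟨by rw [toWord_length]; exact hl, toWord_mem (S := (S : Set H)) (fun u v h => (hadj u v).1 h) p⟩, ?_⟩
    have := hp.support_nodup
    rw [toWord_support] at this
    have h2 := toWord_prod p
    rw [one_mul] at h2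
    rw [CN, h2]; exact this
  · rintro ⟨⟨v, p⟩, hp, hl⟩ ⟨⟨v', p'⟩, hp', hl'⟩ h
    simp only [Subtype.mk.injEq] at h
    have e : v = v' := by rw [← toWord_prod p, ← toWord_prod p', h]
    subst e
    have : p = p' := by
      apply SimpleGraph.Walk.ext_support
      rw [toWord_support, toWord_support, h]
    subst this; rfl
  · rintro ⟨l, hl⟩
    simp only [SW, Finset.mem_filter, mem_wds] at hl
    obtain ⟨⟨hl1, hl2⟩, hl3⟩ := hl
    obtain ⟨p, hp⟩ := exists_walk (G := cayleyGraph (S : Set H)) (S := (S : Set H))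
      (fun u s hs => (hadj _ _).2 (by simpa using hs)) l 1 l.prod hl2 (one_mul _)
    refine ⟨⟨⟨l.prod, p⟩, ?_, ?_⟩, ?_⟩
    · rw [SimpleGraph.Walk.isPath_def, toWord_support, hp]; exact hl3
    · rw [← toWord_length, hp]; exact hl1
    · simp [hp]

/-! ### Path lemma -/

theorem append_path {V : Type*} {G : SimpleGraph V} {u v w : V} {p : G.Walk u v} {q : G.Walk v w}
    (hp : p.IsPath) (hq : q.IsPath) (h : ∀ x ∈ p.support, x ∈ q.support → x = v) :
    (p.append q).IsPath := by
  rw [SimpleGraph.Walk.isPath_def, SimpleGraph.Walk.support_append, List.nodup_append]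
  have hq' := hq.support_nodup
  rw [← SimpleGraph.Walk.cons_tail_support, List.nodup_cons] at hq'
  refine ⟨hp.support_nodup, hq'.2, ?_⟩
  rintro a ha b hb rfl
  have := h a ha (List.mem_of_mem_tail hb)
  subst this
  exact hq'.1 hb

theorem first_hit {V : Type*} {G : SimpleGraph V} (A : Set V) {u v : V} (p : G.Walk u v) :
    v ∈ A → p.IsPath → ∃ z ∈ A, ∃ p1 : G.Walk u z, p1.IsPath ∧ p1.support ⊆ p.support ∧
      ∀ x ∈ p1.support, x ∈ A → x = z := by
  induction p with
  | nil => intro h _; exact ⟨_, h, .nil, by simp, by simp, by simp⟩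
  | @cons u v w h p ih =>
    intro hA hp
    rw [SimpleGraph.Walk.cons_isPath_iff] at hp
    by_cases hu : u ∈ A
    · exact ⟨u, hu, .nil, by simp, by simp, by simp⟩
    · obtain ⟨z, hz, p1, h1, h2, h3⟩ := ih hA hp.1
      refine ⟨z, hz, .cons h p1, ?_, ?_, ?_⟩
      · rw [SimpleGraph.Walk.cons_isPath_iff]
        exact ⟨h1, fun hh => hp.2 (h2 hh)⟩
      · simp only [SimpleGraph.Walk.support_cons]
        exact List.cons_subset_cons _ h2
      · intro x hx hxA
        simp only [SimpleGraph.Walk.support_cons, List.mem_cons] at hx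
        rcases hx with rfl | hx
        · exact absurd hxA hu
        · exact h3 x hx hxA

theorem path_repeat {V W : Type*} {G : SimpleGraph V} (π : V → W) (τ : G →g G)
    (hτ : Function.Injective τ) (hπ : ∀ v, π (τ v) = π v) (hfix : ∀ v, τ v ≠ v) (x y : V)
    (h1 : G.Reachable x y) (h2 : G.Reachable x (τ y)) :
    ∃ (y' : V) (p : G.Walk x y'), p.IsPath ∧ π y' = π y ∧ ¬ (p.support.map π).Nodup := by
  by_contra hno
  push Not at hno
  have hno' : ∀ (y' : V) (p : G.Walk x y'), p.IsPath → π y' = π y →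
      ∀ a ∈ p.support, ∀ b ∈ p.support, π a = π b → a = b :=
    fun y' p hp hy a ha b hb hab => List.inj_on_of_nodup_map (hno y' p hp hy) ha hb hab
  obtain ⟨Z, hZ⟩ := h1.exists_isPath
  obtain ⟨Y, hY⟩ := h2.exists_isPath
  obtain ⟨z, hz, c', hc', -, hc'Z⟩ := first_hit {v | v ∈ Z.support} Y.reverse (by simp) hY.reverse
  simp only [Set.mem_ofPred_eq] at hz hc'Z
  have hc : c'.reverse.IsPath := hc'.reverse
  have hcZ : ∀ v ∈ c'.reverse.support, v ∈ Z.support → v = z := by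
    intro v hv hvZ; exact hc'Z v (by simpa using hv) hvZ
  generalize c'.reverse = c at hc hcZ
  have hZinj := hno' y Z hZ rfl
  set a := Z.takeUntil z hz
  set b := Z.dropUntil z hz
  have haZ : a.support ⊆ Z.support := Z.support_takeUntil_subset_support hz
  have hbZ : b.support ⊆ Z.support := Z.support_dropUntil_subset_support hz
  have ha : a.IsPath := hZ.takeUntil hz
  have hb : b.IsPath := hZ.dropUntil hz
  have hac : (a.append c).IsPath := append_path ha hc (fun v hv hv' => hcZ v hv' (haZ hv))
  have hacinj := hno' _ _ hac (hπ y)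
  simp only [SimpleGraph.Walk.mem_support_append_iff] at hacinj
  obtain ⟨w, ⟨w0, hw0, hw⟩, c1, hc1, hc1c, hc1A⟩ := first_hit {v | ∃ u ∈ b.support, τ u = v} c
    ⟨y, by simp, rfl⟩ hc
  subst hw
  set b1 := b.takeUntil w0 hw0
  have hb1 : b1.IsPath := hb.takeUntil hw0
  have hb1b : b1.support ⊆ b.support := b.support_takeUntil_subset_support hw0
  have hq1 : ((b1.map τ).reverse.append (c.map τ)).IsPath := by
    refine append_path (SimpleGraph.Walk.IsPath.map hτ hb1).reverse
      (SimpleGraph.Walk.IsPath.map hτ hc) ?_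
    intro v hv hv'
    simp only [SimpleGraph.Walk.support_reverse, SimpleGraph.Walk.support_map, List.mem_reverse,
      List.mem_map] at hv hv'
    obtain ⟨u, hu, rfl⟩ := hv
    obtain ⟨u', hu', e⟩ := hv'
    have := hτ e; subst this
    rw [hcZ u' hu' (hbZ (hb1b hu))]
  have hq2 : (c1.append ((b1.map τ).reverse.append (c.map τ))).IsPath := by
    refine append_path hc1 hq1 ?_
    intro v hv hv'
    simp only [SimpleGraph.Walk.mem_support_append_iff, SimpleGraph.Walk.support_reverse,
      SimpleGraph.Walk.support_map, List.mem_reverse, List.mem_map] at hv'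
    rcases hv' with ⟨u, hu, rfl⟩ | ⟨u, hu, rfl⟩
    · exact hc1A _ hv ⟨u, hb1b hu, rfl⟩
    · exact absurd (hacinj _ (Or.inr (hc1c hv)) _ (Or.inr hu) (hπ u)) (hfix u)
  have hq3 : (a.append (c1.append ((b1.map τ).reverse.append (c.map τ)))).IsPath := by
    refine append_path ha hq2 ?_
    intro v hv hv'
    simp only [SimpleGraph.Walk.mem_support_append_iff, SimpleGraph.Walk.support_reverse,
      SimpleGraph.Walk.support_map, List.mem_reverse, List.mem_map] at hv'
    rcases hv' with hv' | ⟨u, hu, rfl⟩ | ⟨u, hu, rfl⟩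
    · exact hcZ v (hc1c hv') (haZ hv)
    · exact absurd (hZinj _ (haZ hv) _ (hbZ (hb1b hu)) (hπ u)) (hfix u)
    · exact absurd (hacinj _ (Or.inl hv) _ (Or.inr hu) (hπ u)) (hfix u)
  have := hno' _ _ hq3 (by rw [hπ, hπ]) (τ z) (by
      simp only [SimpleGraph.Walk.mem_support_append_iff, SimpleGraph.Walk.support_reverse,
        SimpleGraph.Walk.support_map, List.mem_reverse, List.mem_map]
      exact Or.inr (Or.inr (Or.inr ⟨z, by simp, rfl⟩))) z (by
      simp only [SimpleGraph.Walk.mem_support_append_iff]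
      exact Or.inl (by simp)) (hπ z)
  exact hfix z this

end helpers

section helpers
open Classical

theorem exists_word {Γ : Type*} [Group Γ] (S : Finset Γ)
    (hgen : Subgroup.closure (S : Set Γ) = ⊤) (hinv : ∀ s ∈ S, s⁻¹ ∈ S) (g : Γ) :
    ∃ l : List Γ, (∀ s ∈ l, s ∈ S) ∧ l.prod = g := by
  have hg : g ∈ (Subgroup.closure (S : Set Γ)).toSubmonoid := by rw [hgen]; trivial
  rw [Subgroup.closure_toSubmonoid] at hg
  obtain ⟨l, hl, h⟩ := Submonoid.exists_list_of_mem_closure hg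
  refine ⟨l, fun s hs => ?_, h⟩
  rcases hl s hs with h | h
  · exact h
  · have h' : s⁻¹ ∈ S := by simpa using h
    have := hinv _ h'
    rwa [inv_inv] at this

theorem exists_P {Γ Q : Type*} [Group Γ] [Group Q] (π : Γ →* Q) (S : Finset Γ)
    (hgen : Subgroup.closure (S : Set Γ) = ⊤) (hinv : ∀ s ∈ S, s⁻¹ ∈ S) (h1 : (1 : Γ) ∉ S)
    (ν : Γ) (hν1 : ν ≠ 1) (hν : π ν = 1) :
    ∃ D : Finset Q, 1 ∈ D ∧ ∀ x ∈ D, ∀ y ∈ D, ∃ P : List Γ, (∀ s ∈ P, s ∈ S) ∧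
      (∀ v ∈ hv 1 P ++ [P.prod], x * π v ∈ D) ∧ x * π P.prod = y ∧ CN P ∧
      ¬ ((hv 1 P ++ [P.prod]).map π).Nodup := by
  have hadj := cayley_adj hinv h1
  obtain ⟨l, hl, hlν⟩ := exists_word S hgen hinv ν
  obtain ⟨p, -⟩ := exists_walk (G := cayleyGraph (S : Set Γ)) (S := (S : Set Γ))
      (fun u s hs => (hadj _ _).2 (by simpa using hs)) l 1 ν hl (by rw [one_mul, hlν])
  set D : Finset Q := (p.support.map π).toFinset with hD
  have hpD : ∀ v ∈ p.support, π v ∈ D := by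
    intro v hv
    rw [hD, List.mem_toFinset]
    exact List.mem_map_of_mem hv
  let H : SimpleGraph Γ :=
    { Adj := fun u v => (cayleyGraph (S : Set Γ)).Adj u v ∧ π u ∈ D ∧ π v ∈ D
      symm := ⟨fun u v h => ⟨h.1.symm, h.2.2, h.2.1⟩⟩
      loopless := ⟨fun u h => h.1.ne rfl⟩ }
  have hreach : ∀ v ∈ p.support, H.Reachable 1 v := by
    intro v hv
    have ht : ∀ e ∈ p.edges, e ∈ H.edgeSet := by
      intro e he
      induction e with | _ a b
      exact ⟨p.adj_of_mem_edges he, hpD _ (p.fst_mem_support_of_mem_edges he),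
        hpD _ (p.snd_mem_support_of_mem_edges he)⟩
    exact ⟨(p.transfer H ht).takeUntil v (by simpa using hv)⟩
  let τ : H →g H := ⟨fun v => ν * v, by
    intro a b hab
    refine ⟨?_, ?_, ?_⟩
    · have := (hadj _ _).1 hab.1
      rw [hadj]; simpa [mul_assoc] using this
    · have := hab.2.1; simpa [hν] using this
    · have := hab.2.2; simpa [hν] using this⟩
  have hτ : ∀ v, τ v = ν * v := fun v => rfl
  have hsup : ∀ {u v : Γ} (q : H.Walk u v), π u ∈ D → ∀ w ∈ q.support, π w ∈ D := by
    intro u v q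
    induction q with
    | nil => intro h w hw; simp at hw; rwa [hw]
    | cons h q ih =>
      intro hu w hw
      simp only [SimpleGraph.Walk.support_cons, List.mem_cons] at hw
      rcases hw with rfl | hw
      · exact hu
      · exact ih h.2.2 w hw
  refine ⟨D, ?_, ?_⟩
  · have := hpD 1 (by simp); simpa using this
  intro x hx y hy
  rw [hD, List.mem_toFinset, List.mem_map] at hx hy
  obtain ⟨v, hvp, rfl⟩ := hx
  obtain ⟨w, hw, rfl⟩ := hy
  have hv1 := hreach v hvp
  have hw1 := hreach w hw
  have hν2 := hreach ν (by simp)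
  obtain ⟨y', q, hq, hy', hrep⟩ := path_repeat (G := H) π τ
    (by intro a b h; simpa [hτ] using h) (by intro a; simp [hτ, hν]) (by intro a; simp [hτ, hν1])
    v w (hv1.symm.trans hw1) (hv1.symm.trans (hν2.trans (by
      have := hw1.map τ
      simpa [hτ] using this)))
  have hs : q.support = (hv 1 (toWord q) ++ [(toWord q).prod]).map (v * ·) := by
    rw [toWord_support, hv_one, List.map_append]
    simp [toWord_prod]
  refine ⟨toWord q, ?_, ?_, ?_, ?_, ?_⟩
  · exact toWord_mem (G := H) (S := (S : Set Γ)) (fun u v h => (hadj u v).1 h.1) q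
  · intro u hu
    rw [← map_mul]
    apply hsup q (hpD v hvp)
    rw [hs]
    exact List.mem_map_of_mem (f := (v * ·)) hu
  · rw [← map_mul, toWord_prod, hy']
  · have := hq.support_nodup
    rw [hs] at this
    exact List.Nodup.of_map _ this
  · intro hn
    apply hrep
    rw [hs]
    have e : List.map π (List.map (v * ·) (hv 1 (toWord q) ++ [(toWord q).prod]))
        = List.map (π v * ·) (List.map π (hv 1 (toWord q) ++ [(toWord q).prod])) := by
      rw [List.map_map, List.map_map]
      congr 1
      ext a; simp
    rw [e]
    exact hn.map (mul_right_injective _)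

theorem hv_first {H : Type*} [Group H] (p : H → Prop) (l : List H) : ∀ g : H,
    (∃ v ∈ hv g l, p v) → ∃ l1 l2, l = l1 ++ l2 ∧ l2 ≠ [] ∧ (∀ v ∈ hv g l1, ¬ p v) ∧
      p (g * l1.prod) := by
  induction l with
  | nil => intro g h; simp [hv] at h
  | cons s l ih =>
    intro g h
    by_cases hg : p g
    · exact ⟨[], s :: l, by simp, by simp, by simp [hv], by simpa using hg⟩
    · have : ∃ v ∈ hv (g * s) l, p v := by
        obtain ⟨v, hv1, hv2⟩ := h
        simp only [hv, List.mem_cons] at hv1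
        rcases hv1 with rfl | h
        · exact absurd hv2 hg
        · exact ⟨v, h, hv2⟩
      obtain ⟨l1, l2, rfl, h2, h3, h4⟩ := ih _ this
      refine ⟨s :: l1, l2, by simp, h2, ?_, by simpa [mul_assoc] using h4⟩
      intro v hv1
      simp only [hv, List.mem_cons] at hv1
      rcases hv1 with rfl | h
      · exact hg
      · exact h3 v h

theorem hv_last {H : Type*} [Group H] (p : H → Prop) (l : List H) : ∀ g : H,
    (∃ v ∈ hv g l, p v) → ∃ l1 s l2, l = l1 ++ s :: l2 ∧ p (g * l1.prod) ∧
      (∀ v ∈ hv (g * l1.prod * s) l2, ¬ p v) := by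
  induction l with
  | nil => intro g h; simp [hv] at h
  | cons s l ih =>
    intro g h
    by_cases h' : ∃ v ∈ hv (g * s) l, p v
    · obtain ⟨l1, s', l2, rfl, h3, h4⟩ := ih _ h'
      exact ⟨s :: l1, s', l2, by simp, by simpa [mul_assoc] using h3, by simpa [mul_assoc] using h4⟩
    · push Not at h'
      refine ⟨[], s, l, by simp, ?_, by simpa using h'⟩
      obtain ⟨v, hv1, hv2⟩ := h
      simp only [hv, List.mem_cons] at hv1
      rcases hv1 with rfl | h
      · simpa using hv2
      · exact absurd hv2 (h' v h)

theorem mod_exists {Γ Q : Type*} [Group Γ] [Group Q] (π : Γ →* Q) (S : Finset Γ) (S' : Finset Q)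
    (f : Q → Γ) (hfS : ∀ q ∈ S', f q ∈ S) (hf : ∀ q ∈ S', π (f q) = q)
    (D : Finset Q) (hD1 : 1 ∈ D)
    (hP : ∀ x ∈ D, ∀ y ∈ D, ∃ P : List Γ, (∀ s ∈ P, s ∈ S) ∧
      (∀ v ∈ hv 1 P ++ [P.prod], x * π v ∈ D) ∧ x * π P.prod = y ∧ CN P ∧
      ¬ ((hv 1 P ++ [P.prod]).map π).Nodup)
    (b : List Q) (hbS : ∀ s ∈ b, s ∈ S') (hb : (hv 1 b).Nodup) (c : Q) (hc : c ∈ hv 1 b) :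
    ∃ m : List Γ, (∀ s ∈ m, s ∈ S) ∧ π m.prod = b.prod ∧ (hv 1 m).Nodup ∧
      (∀ v ∈ hv 1 m, π v ∈ hv 1 b ∨ c⁻¹ * π v ∈ D) ∧ ¬ (hv 1 (m.map π)).Nodup := by
  obtain ⟨b1, l2, rfl, hl2, hb1, hx⟩ := hv_first (fun v => c⁻¹ * v ∈ D) b 1 ⟨c, hc, by simpa⟩
  obtain ⟨b2, s, b3, rfl, hy, hb3⟩ := hv_last (fun v => c⁻¹ * v ∈ D) l2 b1.prod (by
    cases l2 with
    | nil => exact absurd rfl hl2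
    | cons t l => exact ⟨b1.prod, by simp [hv], by simpa using hx⟩)
  rw [one_mul] at hx
  obtain ⟨P, hPS, hPD, hPp, hPC, hPR⟩ := hP _ hx _ hy
  have hmap : ∀ l : List Q, (∀ s ∈ l, s ∈ S') → (l.map f).map π = l := by
    intro l hl
    rw [List.map_map]
    conv_rhs => rw [← List.map_id l]
    apply List.map_congr_left
    intro a ha; exact hf a (hl a ha)
  have hs1 : ∀ s ∈ b1, s ∈ S' := fun t ht => hbS t (by simp [ht])
  have hs3 : ∀ s ∈ b3, s ∈ S' := fun t ht => hbS t (by simp [ht])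
  have hss : s ∈ S' := hbS s (by simp)
  have hb1m := hmap b1 hs1
  have hb3m := hmap b3 hs3
  have hPp' : π P.prod = b2.prod := by
    have : c⁻¹ * (b1.prod * π P.prod) = c⁻¹ * (b1.prod * b2.prod) := by
      rw [← mul_assoc, hPp]
    exact mul_left_cancel (mul_left_cancel this)
  have hB1 : π (b1.map f).prod = b1.prod := by
    rw [map_list_prod, hb1m]
  set B1 := (b1.map f).prod with hB1d
  set E := B1 * P.prod * f s with hE
  have hEp : π E = b1.prod * b2.prod * s := by
    simp [hE, hB1, hPp', hf s hss]
  set m := b1.map f ++ P ++ f s :: b3.map f with hm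
  have hvm : hv 1 m = hv 1 (b1.map f) ++ ((hv 1 P ++ [P.prod]).map (B1 * ·) ++ hv E (b3.map f)) := by
    rw [hm, hv_append, hv_append, one_mul, ← hB1d, hv_one P B1]
    simp [hv, hE, mul_assoc, ← hB1d]
  have hL1 : (hv 1 (b1.map f)).map π = hv 1 b1 := by rw [hv_hom, hb1m, map_one]
  have hL3 : (hv E (b3.map f)).map π = hv (b1.prod * b2.prod * s) b3 := by rw [hv_hom, hb3m, hEp]
  have hvb : hv 1 (b1 ++ (b2 ++ s :: b3)) = hv 1 b1 ++ (hv b1.prod b2 ++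
      (b1.prod * b2.prod) :: hv (b1.prod * b2.prod * s) b3) := by
    simp [hv_append, hv]
  have hm1 : ∀ v ∈ hv 1 (b1.map f), π v ∈ hv 1 b1 := fun v hv => hL1 ▸ List.mem_map_of_mem hv
  have hm3 : ∀ v ∈ hv E (b3.map f), π v ∈ hv (b1.prod * b2.prod * s) b3 :=
    fun v hv => hL3 ▸ List.mem_map_of_mem hv
  have hm2 : ∀ v ∈ (hv 1 P ++ [P.prod]).map (B1 * ·), c⁻¹ * π v ∈ D := by
    intro v hv
    rw [List.mem_map] at hv
    obtain ⟨u, hu, rfl⟩ := hv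
    have := hPD u hu
    simpa [hB1, mul_assoc] using this
  refine ⟨m, ?_, ?_, ?_, ?_, ?_⟩
  · intro t ht
    simp only [hm, List.mem_append, List.mem_map, List.mem_cons] at ht
    rcases ht with (⟨a, ha, rfl⟩ | ht) | rfl | ⟨a, ha, rfl⟩
    · exact hfS a (hs1 a ha)
    · exact hPS t ht
    · exact hfS s hss
    · exact hfS a (hs3 a ha)
  · have h3 : π (b3.map f).prod = b3.prod := by rw [map_list_prod, hb3m]
    simp [hm, ← hB1d, hB1, hPp', h3, hf s hss]
  · rw [hvm]
    rw [hvb] at hb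
    obtain ⟨n1, n2, n3⟩ := List.nodup_append.1 hb
    obtain ⟨n4, n5, n6⟩ := List.nodup_append.1 n2
    rw [List.nodup_append, List.nodup_append]
    refine ⟨List.Nodup.of_map π (by rw [hL1]; exact n1), ⟨?_, List.Nodup.of_map π (by
      rw [hL3]; exact (List.nodup_cons.1 n5).2), ?_⟩, ?_⟩
    · exact List.Nodup.map (mul_right_injective _) hPC
    · rintro a ha a' ha' rfl
      exact hb3 _ (hm3 a ha') (hm2 a ha)
    · rintro a ha a' ha' rfl
      rcases List.mem_append.1 ha' with h | h
      · exact hb1 _ (hm1 a ha) (hm2 a h)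
      · exact n3 _ (hm1 a ha) _ (by simp [hm3 a h]) rfl
  · intro v hv
    rw [hvm, List.mem_append, List.mem_append] at hv
    rw [hvb]
    rcases hv with h | h | h
    · left; simp [hm1 v h]
    · right; exact hm2 v h
    · left; simp [hm3 v h]
  · intro hn
    apply hPR
    rw [← map_one π, ← hv_hom, hvm, List.map_append, List.map_append] at hn
    have h2 := (List.nodup_append.1 (List.nodup_append.1 hn).2.1).1
    have e : List.map π (List.map (B1 * ·) (hv 1 P ++ [P.prod]))
        = List.map (π B1 * ·) (List.map π (hv 1 P ++ [P.prod])) := by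
      rw [List.map_map, List.map_map]
      congr 1
      ext a; simp
    rw [e] at h2
    exact List.Nodup.of_map _ h2

/-! ### Decoding -/

noncomputable def fr {X : Type*} (Rep : List X → Prop) (W : List X) : ℕ := sInf {t | Rep (W.take t)}

def wd {X B : Type*} (pl md : B → List X) : List (B × Bool) → List X
  | [] => []
  | (b, false) :: e => pl b ++ wd pl md e
  | (b, true) :: e => md b ++ wd pl md e

noncomputable def cod {X B : Type*} (Rep : List X → Prop) (pl md : B → List X) :
    List X → List (B × Bool) → List (ℕ × B)
  | _, [] => []
  | acc, (b, false) :: e => cod Rep pl md (acc ++ pl b) e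
  | acc, (b, true) :: e => (fr Rep (acc ++ md b) - acc.length, b) :: cod Rep pl md [] e

def Vld {X B : Type*} (Rep : List X → Prop) (pl md : B → List X) :
    List X → List (B × Bool) → Prop
  | acc, [] => ¬ Rep acc
  | acc, (b, false) :: e => ¬ Rep acc ∧ Vld Rep pl md (acc ++ pl b) e
  | acc, (b, true) :: e => ¬ Rep acc ∧ Rep (md b) ∧ Vld Rep pl md [] e

section dec
variable {X B : Type*} (Rep : List X → Prop) (pl md : B → List X)
  (hmono : ∀ a b c : List X, Rep b → Rep (a ++ b ++ c))

include hmono in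
theorem fr_le (acc u : List X) (hu : Rep u) : fr Rep (acc ++ u) ≤ acc.length + u.length := by
  apply Nat.sInf_le
  have := hmono acc u [] hu
  simpa [List.take_of_length_le] using this

theorem fr_append (W V : List X) (hW : Rep W) : fr Rep (W ++ V) = fr Rep W := by
  have hne : ∃ t, Rep (W.take t) := ⟨W.length, by simpa using hW⟩
  have hm : Rep (W.take (fr Rep W)) := Nat.sInf_mem (s := {t | Rep (W.take t)}) hne
  have hle : fr Rep W ≤ W.length := Nat.sInf_le (by simpa using hW)
  apply le_antisymm
  · apply Nat.sInf_le
    show Rep ((W ++ V).take _)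
    rw [List.take_append_of_le_length hle]; exact hm
  · have hne' : ∃ t, Rep ((W ++ V).take t) := ⟨fr Rep W, by
      rw [List.take_append_of_le_length hle]; exact hm⟩
    have hm' : Rep ((W ++ V).take (fr Rep (W ++ V))) :=
      Nat.sInf_mem (s := {t | Rep ((W ++ V).take t)}) hne'
    by_contra hlt
    push Not at hlt
    rw [List.take_append_of_le_length (by omega)] at hm'
    exact absurd (Nat.sInf_le (s := {t | Rep (W.take t)}) hm') (by
      show ¬ fr Rep W ≤ _
      omega)

include hmono in
theorem fr_gt (W V : List X) (hW : ¬ Rep W) (hr : Rep (W ++ V)) : W.length < fr Rep (W ++ V) := by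
  by_contra hlt
  push Not at hlt
  have hne : ∃ t, Rep ((W ++ V).take t) := ⟨(W ++ V).length, by
    rw [List.take_length]; exact hr⟩
  have hm : Rep ((W ++ V).take (fr Rep (W ++ V))) :=
    Nat.sInf_mem (s := {t | Rep ((W ++ V).take t)}) hne
  rw [List.take_append_of_le_length hlt] at hm
  apply hW
  have := hmono [] _ (W.drop (fr Rep (W ++ V))) hm
  simpa using this

include hmono in
theorem cod_head (e : List (B × Bool)) : ∀ (acc : List X) (o : ℕ) (b : B) (c : List (ℕ × B)),
    Vld Rep pl md acc e → cod Rep pl md acc e = (o, b) :: c →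
    acc.length + o ≤ fr Rep (acc ++ wd pl md e) := by
  induction e with
  | nil => intro acc o b c _ h; simp [cod] at h
  | cons x e ih =>
    intro acc o b c hV h
    obtain ⟨b', t⟩ := x
    cases t with
    | false =>
      simp only [cod] at h
      have := ih _ o b c hV.2 h
      simp only [wd]
      rw [← List.append_assoc]
      simp only [List.length_append] at this
      omega
    | true =>
      simp only [cod, List.cons.injEq, Prod.mk.injEq] at h
      obtain ⟨⟨h1, rfl⟩, h2⟩ := h
      have hr : Rep (acc ++ md b') := by simpa using hmono acc _ [] hV.2.1
      have := fr_gt Rep hmono acc (md b') hV.1 hr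
      simp only [wd]
      rw [← List.append_assoc, fr_append Rep _ _ hr]
      omega

include hmono in
theorem cod_head' (e : List (B × Bool)) (acc : List X) (o : ℕ) (b b' : B) (c : List (ℕ × B))
    (hV : Vld Rep pl md acc ((b', true) :: e))
    (h : cod Rep pl md acc ((b', true) :: e) = (o, b) :: c) :
    acc.length + o = fr Rep (acc ++ wd pl md ((b', true) :: e)) := by
  simp only [cod, List.cons.injEq, Prod.mk.injEq] at h
  obtain ⟨⟨h1, rfl⟩, h2⟩ := h
  have hr : Rep (acc ++ md b') := by simpa using hmono acc _ [] hV.2.1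
  have := fr_gt Rep hmono acc (md b') hV.1 hr
  simp only [wd]
  rw [← List.append_assoc, fr_append Rep _ _ hr]
  omega

include hmono in
theorem cod_absurd (M : ℕ) (hM : 0 < M) (hpl : ∀ b, (pl b).length = M)
    (acc : List X) (e e' : List (B × Bool)) (b b' : B)
    (hV : Vld Rep pl md acc ((b, false) :: e)) (hV' : Vld Rep pl md acc ((b', true) :: e'))
    (hw : wd pl md ((b, false) :: e) = wd pl md ((b', true) :: e'))
    (hc : cod Rep pl md acc ((b, false) :: e) = cod Rep pl md acc ((b', true) :: e')) : False := by
  have h1 : cod Rep pl md acc ((b', true) :: e') = (fr Rep (acc ++ md b') - acc.length, b') ::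
    cod Rep pl md [] e' := rfl
  have h2 := cod_head' Rep pl md hmono e' acc _ _ b' _ hV' h1
  rw [h1] at hc
  have hc' : cod Rep pl md (acc ++ pl b) e = (fr Rep (acc ++ md b') - acc.length, b') ::
    cod Rep pl md [] e' := hc
  have h3 := cod_head Rep pl md hmono e _ _ _ _ hV.2 hc'
  rw [← hw] at h2
  have h4 : acc ++ wd pl md ((b, false) :: e) = acc ++ pl b ++ wd pl md e := by simp [wd]
  rw [h4] at h2
  rw [List.length_append, hpl] at h3
  omega

include hmono in
theorem cod_inj (M : ℕ) (hM : 0 < M) (hpl : ∀ b, (pl b).length = M)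
    (hinj : Function.Injective pl) (e : List (B × Bool)) : ∀ (acc : List X) (e' : List (B × Bool)),
    Vld Rep pl md acc e → Vld Rep pl md acc e' → e.length = e'.length →
    wd pl md e = wd pl md e' → cod Rep pl md acc e = cod Rep pl md acc e' → e = e' := by
  induction e with
  | nil =>
    intro acc e' _ _ hl _ _
    exact (List.length_eq_zero_iff.1 hl.symm).symm
  | cons x e ih =>
    intro acc e' hV hV' hl hw hc
    cases e' with
    | nil => simp at hl
    | cons x' e' =>
      obtain ⟨b, t⟩ := x
      obtain ⟨b', t'⟩ := x'
      have hl' : e.length = e'.length := by simpa using hl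
      cases t <;> cases t'
      · have hw2 : pl b ++ wd pl md e = pl b' ++ wd pl md e' := hw
        obtain ⟨h1, h2⟩ := List.append_inj hw2 (by rw [hpl, hpl])
        have := hinj h1
        subst this
        rw [ih _ e' hV.2 hV'.2 hl' h2 hc]
      · exact (cod_absurd Rep pl md hmono M hM hpl acc e e' b b' hV hV' hw hc).elim
      · exact (cod_absurd Rep pl md hmono M hM hpl acc e' e b' b hV' hV hw.symm hc.symm).elim
      · simp only [cod, List.cons.injEq, Prod.mk.injEq] at hc
        obtain ⟨⟨_, rfl⟩, hc2⟩ := hc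
        have hw2 : md b ++ wd pl md e = md b ++ wd pl md e' := hw
        rw [ih _ e' hV.2.2 hV'.2.2 hl' (List.append_cancel_left hw2) hc2]

include hmono in
theorem cod_mem (L : ℕ) (e : List (B × Bool)) : ∀ acc, (∀ x ∈ e, x.2 = true → (md x.1).length ≤ L) →
    Vld Rep pl md acc e →
    ∀ x ∈ cod Rep pl md acc e, x.1 ≤ L := by
  induction e with
  | nil => intro acc _ _ x hx; simp [cod] at hx
  | cons y e ih =>
    intro acc hL hV x hx
    obtain ⟨b, t⟩ := y
    cases t with
    | false => exact ih _ (fun x hx => hL x (by simp [hx])) hV.2 x hx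
    | true =>
      simp only [cod, List.mem_cons] at hx
      rcases hx with rfl | hx
      · have := fr_le Rep hmono acc (md b) hV.2.1
        have h2 := hL (b, true) (by simp) rfl
        simp only at h2 ⊢
        omega
      · exact ih _ (fun x hx => hL x (by simp [hx])) hV.2.2 x hx

theorem cod_length (e : List (B × Bool)) : ∀ acc,
    (cod Rep pl md acc e).length = e.countP (fun x => x.2) := by
  induction e with
  | nil => intro acc; simp [cod]
  | cons y e ih =>
    intro acc
    obtain ⟨b, t⟩ := y
    cases t <;> simp [cod, ih]

end dec
end helpers

section helpers
open Classical

def Ak {Q : Type*} [Group Q] (D2 : Finset Q) (k : ℕ) (l : List Q) : Prop :=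
  ∀ c ∈ hv 1 l, (hv 1 l).countP (fun v => decide (c⁻¹ * v ∈ D2)) ≤ k

theorem countP_hv {Q : Type*} [Group Q] (D2 : Finset Q) (h c : Q) (l : List Q) :
    (hv h l).countP (fun v => decide ((h * c)⁻¹ * v ∈ D2)) =
      (hv 1 l).countP (fun v => decide (c⁻¹ * v ∈ D2)) := by
  rw [hv_one l h, List.countP_map]
  congr 1
  ext v
  simp [mul_assoc]

theorem Ak_infix {Q : Type*} [Group Q] {D2 : Finset Q} {k : ℕ} {a b c : List Q}
    (h : Ak D2 k (a ++ b ++ c)) : Ak D2 k b := by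
  intro x hx
  have hx' : a.prod * x ∈ hv a.prod b := by
    rw [hv_one]; exact List.mem_map_of_mem (f := (a.prod * ·)) hx
  have := h (a.prod * x) (by simp [hv_append, hx'])
  rw [hv_append, hv_append, List.countP_append, List.countP_append, one_mul, countP_hv] at this
  omega

theorem Ak_card {Q : Type*} [Group Q] (D2 : Finset Q) {l : List Q} (h : (hv 1 l).Nodup) :
    Ak D2 D2.card l := by
  intro c hc
  rw [List.countP_eq_length_filter]
  have hn : ((hv 1 l).filter (fun v => decide (c⁻¹ * v ∈ D2))).Nodup := h.filter _
  rw [← List.toFinset_card_of_nodup hn]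
  apply Finset.card_le_card_of_injOn (fun v => c⁻¹ * v)
  · intro v hv
    simp at hv
    exact hv.2
  · intro a _ b _ hab
    exact mul_left_cancel hab

noncomputable def QA {Q : Type*} [Group Q] (S : Finset Q) (D2 : Finset Q) (k n : ℕ) :
    Finset (List Q) :=
  (wds S n).filter (fun l => CN l ∧ Ak D2 k l)

theorem QA_infix {Q : Type*} [Group Q] {S D2 : Finset Q} {k n : ℕ} {a b c : List Q}
    (h : a ++ b ++ c ∈ QA S D2 k n) : b ∈ QA S D2 k b.length := by
  simp only [QA, Finset.mem_filter, mem_wds] at h ⊢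
  exact ⟨⟨by trivial, fun x hx => h.1.2 x (by simp [hx])⟩, h.2.1.infix, Ak_infix h.2.2⟩

def fl {B Q : Type*} (wo : B → List Q) : List (B × Bool) → List Q
  | [] => []
  | x :: e => wo x.1 ++ fl wo e

theorem fl_append {B Q : Type*} (wo : B → List Q) (e e' : List (B × Bool)) :
    fl wo (e ++ e') = fl wo e ++ fl wo e' := by
  induction e with
  | nil => simp [fl]
  | cons x e ih => simp [fl, ih]

def Iso {B Q : Type*} [Group Q] (wo : B → List Q) (cc : B → Q) (D2 : Finset Q) (h : Q)
    (e : List (B × Bool)) : Prop :=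
  ∀ e1 b e2, e = e1 ++ (b, true) :: e2 →
    (∀ v ∈ hv h (fl wo e1), (h * (fl wo e1).prod * cc b)⁻¹ * v ∉ D2) ∧
    (∀ v ∈ hv (h * (fl wo e1).prod * (wo b).prod) (fl wo e2),
      (h * (fl wo e1).prod * cc b)⁻¹ * v ∉ D2)

theorem Iso_of_Ak {B Q : Type*} [Group Q] (wo : B → List Q) (cc : B → Q) (D2 : Finset Q) (k : ℕ)
    (e : List (B × Bool)) (hA : Ak D2 k (fl wo e)) (good : B → Prop)
    (hg : ∀ b, good b → cc b ∈ hv 1 (wo b) ∧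
      k ≤ (hv 1 (wo b)).countP (fun v => decide ((cc b)⁻¹ * v ∈ D2)))
    (he : ∀ x ∈ e, x.2 = true → good x.1) : Iso wo cc D2 1 e := by
  intro e1 b e2 h
  subst h
  obtain ⟨g1, g2⟩ := hg b (he (b, true) (by simp) rfl)
  rw [fl_append] at hA
  simp only [fl] at hA
  have hm : (fl wo e1).prod * cc b ∈ hv (fl wo e1).prod (wo b) := by
    rw [hv_one]; exact List.mem_map_of_mem (f := ((fl wo e1).prod * ·)) g1
  have := hA ((fl wo e1).prod * cc b) (by simp [hv_append, hm])
  rw [hv_append, hv_append, List.countP_append, List.countP_append, one_mul, countP_hv] at this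
  simp only [one_mul]
  constructor
  · have h0 : (hv 1 (fl wo e1)).countP
      (fun v => decide (((fl wo e1).prod * cc b)⁻¹ * v ∈ D2)) = 0 := by omega
    rw [List.countP_eq_zero] at h0
    intro v hv; simpa using h0 v hv
  · have h0 : (hv ((fl wo e1).prod * (wo b).prod) (fl wo e2)).countP
      (fun v => decide (((fl wo e1).prod * cc b)⁻¹ * v ∈ D2)) = 0 := by omega
    rw [List.countP_eq_zero] at h0
    intro v hv; simpa using h0 v hv

theorem Iso_tail {B Q : Type*} [Group Q] {wo : B → List Q} {cc : B → Q} {D2 : Finset Q} {h : Q}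
    {x : B × Bool} {e : List (B × Bool)} (hI : Iso wo cc D2 h (x :: e)) :
    Iso wo cc D2 (h * (wo x.1).prod) e := by
  intro e1 b e2 he
  obtain ⟨h1, h2⟩ := hI (x :: e1) b e2 (by simp [he])
  simp only [fl, hv_append, List.prod_append, List.mem_append, ← mul_assoc] at h1 h2
  exact ⟨fun v hv => h1 v (Or.inr hv), h2⟩

section big
variable {B Γ Q : Type*} [Group Γ] [Group Q] (π : Γ →* Q) (wo : B → List Q) (cc : B → Q)
  (pl md : B → List Γ) (D D2 : Finset Q) (good : B → Prop)
  (hplp : ∀ b, π (pl b).prod = (wo b).prod)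
  (hplv : ∀ b, (hv 1 (pl b)).map π = hv 1 (wo b))
  (hmdp : ∀ b, good b → π (md b).prod = (wo b).prod)
  (hmdn : ∀ b, good b → (hv 1 (md b)).Nodup)
  (hmdv : ∀ b, good b → ∀ v ∈ hv 1 (md b), π v ∈ hv 1 (wo b) ∨ (cc b)⁻¹ * π v ∈ D)
  (hcc : ∀ b, good b → cc b ∈ hv 1 (wo b))
  (hDD : ∀ x ∈ D, ∀ y ∈ D, x * y⁻¹ ∈ D2) (h1D : 1 ∈ D)

include hplv in
theorem pl_mem (b : B) (g v : Γ) (hv1 : v ∈ hv g (pl b)) : π v ∈ hv (π g) (wo b) := by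
  rw [hv_one, List.mem_map] at hv1
  obtain ⟨u, hu, rfl⟩ := hv1
  rw [hv_one, map_mul, ← hplv b]
  exact List.mem_map_of_mem (f := (π g * ·)) (List.mem_map_of_mem hu)

include hmdv in
theorem md_mem (b : B) (hb : good b) (g v : Γ) (hv1 : v ∈ hv g (md b)) :
    π v ∈ hv (π g) (wo b) ∨ (π g * cc b)⁻¹ * π v ∈ D := by
  rw [hv_one, List.mem_map] at hv1
  obtain ⟨u, hu, rfl⟩ := hv1
  rcases hmdv b hb u hu with h | h
  · left
    rw [hv_one, map_mul]
    exact List.mem_map_of_mem (f := (π g * ·)) h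
  · right
    simpa [mul_assoc] using h

include hplp hplv hmdp hmdv in
theorem cover (e : List (B × Bool)) : ∀ (g v : Γ), (∀ x ∈ e, x.2 = true → good x.1) →
    v ∈ hv g (wd pl md e) → π v ∈ hv (π g) (fl wo e) ∨
      ∃ e1 b e2, e = e1 ++ (b, true) :: e2 ∧ (π g * (fl wo e1).prod * cc b)⁻¹ * π v ∈ D := by
  induction e with
  | nil => intro g v _ h; simp [wd, hv] at h
  | cons x e ih =>
    intro g v he hv1
    obtain ⟨b, t⟩ := x
    have he' : ∀ x ∈ e, x.2 = true → good x.1 := fun x hx => he x (by simp [hx])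
    have rest : ∀ g' : Γ, π g' = π g * (wo b).prod → v ∈ hv g' (wd pl md e) →
        π v ∈ hv (π g) (fl wo ((b, t) :: e)) ∨
      ∃ e1 b' e2, (b, t) :: e = e1 ++ (b', true) :: e2 ∧
        (π g * (fl wo e1).prod * cc b')⁻¹ * π v ∈ D := by
      intro g' hg' hv2
      rcases ih g' v he' hv2 with h | ⟨e1, b', e2, h, h'⟩
      · left
        rw [hg'] at h
        simp [fl, hv_append, h]
      · right
        refine ⟨(b, t) :: e1, b', e2, by simp [h], ?_⟩
        simp only [fl, List.prod_append]
        rw [hg'] at h'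
        simpa [mul_assoc] using h'
    cases t with
    | false =>
      simp only [wd, hv_append, List.mem_append] at hv1
      rcases hv1 with h | h
      · left
        simp [fl, hv_append, pl_mem π wo pl hplv b g v h]
      · exact rest _ (by rw [map_mul, hplp]) h
    | true =>
      have hb : good b := he (b, true) (by simp) rfl
      simp only [wd, hv_append, List.mem_append] at hv1
      rcases hv1 with h | h
      · rcases md_mem π wo cc md D good hmdv b hb g v h with h | h
        · left; simp [fl, hv_append, h]
        · right
          exact ⟨[], b, e, by simp, by simpa [fl, mul_assoc] using h⟩
      · exact rest _ (by rw [map_mul, hmdp b hb]) h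

include hplp hplv hmdp hmdv hmdn hcc hDD h1D in
theorem wd_nodup (e : List (B × Bool)) : ∀ (g : Γ), (∀ x ∈ e, x.2 = true → good x.1) →
    (hv (π g) (fl wo e)).Nodup → Iso wo cc D2 (π g) e → (hv g (wd pl md e)).Nodup := by
  induction e with
  | nil => intro g _ _ _; simp [wd, hv]
  | cons x e ih =>
    intro g he hn hI
    obtain ⟨b, t⟩ := x
    have he' : ∀ x ∈ e, x.2 = true → good x.1 := fun x hx => he x (by simp [hx])
    have hI' := Iso_tail hI
    have hn0 := hn
    simp only [fl, hv_append] at hn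
    obtain ⟨n1, n2, n3⟩ := List.nodup_append.1 hn
    have hDD2 : ∀ x ∈ D, x ∈ D2 := fun x hx => by simpa using hDD x hx 1 h1D
    have key : ∀ u : List Γ, π u.prod = (wo b).prod → (hv 1 u).Nodup →
        (∀ v ∈ hv g u, π v ∈ hv (π g) (wo b) ∨ (t = true ∧ (π g * cc b)⁻¹ * π v ∈ D)) →
        (hv g (u ++ wd pl md e)).Nodup := by
      intro u hu1 hu2 hu3
      have hgu : π (g * u.prod) = π g * (wo b).prod := by rw [map_mul, hu1]
      rw [hv_append, List.nodup_append]
      refine ⟨(hv_nodup_iff _ _).2 hu2, ih _ he' (by rw [hgu]; exact n2) (by rw [hgu]; exact hI'), ?_⟩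
      rintro v hv1 v' hv2 rfl
      have h2 := cover π wo cc pl md D good hplp hplv hmdp hmdv e _ v he' hv2
      rw [hgu] at h2
      rcases hu3 v hv1 with h1 | ⟨rfl, h1⟩
      · rcases h2 with h2 | ⟨e1, b', e2, rfl, h2⟩
        · exact n3 _ h1 _ h2 rfl
        · have := (hI ((b, t) :: e1) b' e2 (by simp)).1 (π v) (by simp [fl, hv_append, h1])
          apply this
          apply hDD2
          simpa [fl, mul_assoc] using h2
      · rcases h2 with h2 | ⟨e1, b', e2, rfl, h2⟩
        · have := (hI [] b e (by simp)).2 (π v) (by simpa [fl] using h2)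
          apply this
          apply hDD2
          simpa [fl, mul_assoc] using h1
        · have hb : good b := he (b, true) (by simp) rfl
          have hcb : π g * cc b ∈ hv (π g) (wo b) := by
            rw [hv_one]; exact List.mem_map_of_mem (f := (π g * ·)) (hcc b hb)
          have := (hI ((b, true) :: e1) b' e2 (by simp)).1 (π g * cc b)
            (by simp only [fl, hv_append]; exact List.mem_append_left _ hcb)
          apply this
          have h3 := hDD _ h2 _ h1
          simpa [fl, mul_assoc] using h3
    cases t with
    | false =>
      refine key (pl b) (hplp b) ?_ ?_
      · apply List.Nodup.of_map π
        rw [hplv]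
        exact (hv_nodup_iff _ _).1 n1
      · intro v hv1
        exact Or.inl (pl_mem π wo pl hplv b g v hv1)
    | true =>
      have hb : good b := he (b, true) (by simp) rfl
      refine key (md b) (hmdp b hb) (hmdn b hb) ?_
      intro v hv1
      rcases md_mem π wo cc md D good hmdv b hb g v hv1 with h | h
      · exact Or.inl h
      · exact Or.inr ⟨rfl, h⟩

/-- fiber repeat -/
def RepQ (l : List Γ) : Prop := ¬ (hv 1 (l.map π)).Nodup

theorem RepQ_mono (a b c : List Γ) (h : RepQ π b) : RepQ π (a ++ b ++ c) := by
  intro hn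
  apply h
  rw [List.map_append, List.map_append, hv_append, hv_append] at hn
  exact (hv_nodup_iff _ _).1 (List.nodup_append.1 (List.nodup_append.1 hn).1).2.1

theorem wd_vld (hplw : ∀ b, (pl b).map π = wo b) (hmdr : ∀ b, good b → RepQ π (md b))
    (e : List (B × Bool)) : ∀ acc : List Γ, (∀ x ∈ e, x.2 = true → good x.1) →
    (hv 1 (acc.map π ++ fl wo e)).Nodup → Vld (RepQ π) pl md acc e := by
  induction e with
  | nil => intro acc _ h; simpa [Vld, RepQ, fl] using h
  | cons x e ih =>
    intro acc he h
    obtain ⟨b, t⟩ := x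
    have he' : ∀ x ∈ e, x.2 = true → good x.1 := fun x hx => he x (by simp [hx])
    have h0 : ¬ RepQ π acc := by
      rw [hv_append] at h
      simpa [RepQ] using (List.nodup_append.1 h).1
    cases t with
    | false =>
      refine ⟨h0, ih _ he' ?_⟩
      rw [List.map_append, hplw]
      simpa [fl] using h
    | true =>
      refine ⟨h0, hmdr b (he (b, true) (by simp) rfl), ih _ he' ?_⟩
      simp only [fl] at h
      rw [← List.append_assoc, hv_append] at h
      simpa using (hv_nodup_iff _ _).1 (List.nodup_append.1 h).2.1

end big

theorem wd_length_le {X B : Type*} (pl md : B → List X) (M L : ℕ) (hpl : ∀ b, (pl b).length = M)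
    (e : List (B × Bool)) (hmd : ∀ x ∈ e, x.2 = true → (md x.1).length ≤ L) :
    (wd pl md e).length ≤ M * e.length + L * e.countP (fun x => x.2) := by
  induction e with
  | nil => simp [wd]
  | cons x e ih =>
    obtain ⟨b, t⟩ := x
    have := ih (fun x hx => hmd x (by simp [hx]))
    cases t with
    | false =>
      simp only [wd, List.length_append, hpl, List.length_cons, List.countP_cons]
      simp; linarith
    | true =>
      have h2 := hmd (b, true) (by simp) rfl
      simp only [wd, List.length_append, List.length_cons, List.countP_cons]
      simp at h2 ⊢; linarith

theorem wd_mem {X B : Type*} (pl md : B → List X) (S : Finset X) (hpl : ∀ b, ∀ s ∈ pl b, s ∈ S)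
    (e : List (B × Bool)) (hmd : ∀ x ∈ e, x.2 = true → ∀ s ∈ md x.1, s ∈ S) :
    ∀ s ∈ wd pl md e, s ∈ S := by
  induction e with
  | nil => simp [wd]
  | cons x e ih =>
    obtain ⟨b, t⟩ := x
    have := ih (fun x hx => hmd x (by simp [hx]))
    intro s hs
    cases t with
    | false =>
      simp only [wd, List.mem_append] at hs
      rcases hs with h | h
      · exact hpl b s h
      · exact this s h
    | true =>
      simp only [wd, List.mem_append] at hs
      rcases hs with h | h
      · exact hmd (b, true) (by simp) rfl s h
      · exact this s h

end helpers

section helpers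
open Classical

def ee {B : Type*} {q : ℕ} (w : Fin q → B) (T : Finset (Fin q)) : List (B × Bool) :=
  List.ofFn (fun i => (w i, decide (i ∈ T)))

theorem ee_inj {B : Type*} {q : ℕ} {w w' : Fin q → B} {T T' : Finset (Fin q)}
    (h : ee w T = ee w' T') : w = w' ∧ T = T' := by
  have h2 := List.ofFn_injective h
  constructor
  · ext i
    exact congrArg Prod.fst (congrFun h2 i)
  · ext i
    have := congrArg Prod.snd (congrFun h2 i)
    simpa using this

theorem ee_count {B : Type*} {q : ℕ} (w : Fin q → B) (T : Finset (Fin q)) :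
    (ee w T).countP (fun x => x.2) = T.card := by
  rw [ee, List.ofFn_eq_map, List.countP_map, List.countP_eq_length_filter]
  rw [← List.toFinset_card_of_nodup ((List.nodup_finRange q).filter _)]
  congr 1
  ext i; simp

theorem ee_mem {B : Type*} {q : ℕ} (w : Fin q → B) (T : Finset (Fin q)) (x : B × Bool)
    (hx : x ∈ ee w T) (h2 : x.2 = true) : ∃ i ∈ T, w i = x.1 := by
  rw [ee, List.mem_ofFn] at hx
  obtain ⟨i, rfl⟩ := hx
  exact ⟨i, by simpa using h2, rfl⟩

theorem fl_ee {B Q : Type*} {q : ℕ} (wo : B → List Q) (w : Fin q → B) (T : Finset (Fin q)) :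
    fl wo (ee w T) = (List.ofFn (fun i => wo (w i))).flatten := by
  have : ∀ e : List (B × Bool), fl wo e = (e.map (fun x => wo x.1)).flatten := by
    intro e
    induction e with
    | nil => simp [fl]
    | cons x e ih => simp [fl, ih]
  rw [this, ee, List.map_ofFn]
  rfl

theorem sum_codes {α : Type*} (A : Finset α) (C : ℝ) (hC : 0 < C) (hA : (A.card : ℝ) ≤ C) (q : ℕ) :
    ∑ l ∈ (Finset.range (q + 1)).biUnion (wds A), (C⁻¹) ^ l.length ≤ q + 1 := by
  rw [Finset.sum_biUnion]
  · calc ∑ i ∈ Finset.range (q + 1), ∑ l ∈ wds A i, (C⁻¹) ^ l.length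
        ≤ ∑ i ∈ Finset.range (q + 1), (1 : ℝ) := by
          apply Finset.sum_le_sum
          intro i _
          have : ∀ l ∈ wds A i, (C⁻¹) ^ l.length = (C⁻¹) ^ i := by
            intro l hl; rw [((mem_wds A i l).1 hl).1]
          rw [Finset.sum_congr rfl this, Finset.sum_const, nsmul_eq_mul, inv_pow]
          have h1 : ((wds A i).card : ℝ) ≤ C ^ i := by
            calc ((wds A i).card : ℝ) ≤ (A.card : ℝ) ^ i := by exact_mod_cast card_wds_le A i
              _ ≤ C ^ i := by gcongr
          rw [← div_eq_mul_inv, div_le_one (by positivity)]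
          exact h1
      _ = q + 1 := by simp
  · intro i _ j _ hij
    rw [Function.onFun, Finset.disjoint_left]
    intro l h1 h2
    exact hij (((mem_wds A i l).1 h1).1.symm.trans ((mem_wds A j l).1 h2).1)

theorem upper {B X : Type*} [Fintype B] (S : Finset X) (HS : List X → Prop) (good : B → Prop)
    (pl md : B → List X) (Rep : List X → Prop)
    (hmono : ∀ a b c : List X, Rep b → Rep (a ++ b ++ c)) (M L : ℕ) (hM : 0 < M)
    (hpl : ∀ b, (pl b).length = M) (hplS : ∀ b, ∀ s ∈ pl b, s ∈ S)
    (hinj : Function.Injective pl)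
    (hmd : ∀ b, good b → (md b).length ≤ L) (hmdS : ∀ b, good b → ∀ s ∈ md b, s ∈ S)
    (z : ℝ) (hz : 0 < z) (hz1 : z ≤ 1) (C : ℝ) (hC : 0 < C)
    (hC2 : (((L + 1) * Fintype.card B : ℕ) : ℝ) ≤ C) (q : ℕ) (Ok : Finset (Fin q → B))
    (hV : ∀ w ∈ Ok, ∀ T : Finset (Fin q), (∀ i ∈ T, good (w i)) →
      Vld Rep pl md [] (ee w T) ∧ HS (wd pl md (ee w T))) :
    (∑ w ∈ Ok, (1 + z ^ L / C) ^ (Finset.univ.filter (fun i => good (w i))).card) * z ^ (M * q) ≤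
      (q + 1) * ∑ ℓ ∈ Finset.range ((M + L) * q + 1), (((wds S ℓ).filter HS).card : ℝ) * z ^ ℓ := by
  set A : Finset (ℕ × B) := Finset.range (L + 1) ×ˢ Finset.univ with hA
  have hAc : (A.card : ℝ) ≤ C := by
    rw [hA, Finset.card_product, Finset.card_range, Finset.card_univ]; exact hC2
  set WW : Finset (List X) := (Finset.range ((M + L) * q + 1)).biUnion
    (fun ℓ => (wds S ℓ).filter HS) with hWW
  set CC : Finset (List (ℕ × B)) := (Finset.range (q + 1)).biUnion (wds A) with hCC
  set PP : Finset ((Fin q → B) × Finset (Fin q)) :=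
    (Ok ×ˢ Finset.univ).filter (fun p => ∀ i ∈ p.2, good (p.1 i)) with hPP
  have hPPm : ∀ p ∈ PP, p.1 ∈ Ok ∧ ∀ i ∈ p.2, good (p.1 i) := by
    intro p hp
    simpa [hPP] using hp
  have hLHS : (∑ w ∈ Ok, (1 + z ^ L / C) ^ (Finset.univ.filter (fun i => good (w i))).card)
      * z ^ (M * q) = ∑ p ∈ PP, (z ^ L / C) ^ p.2.card * z ^ (M * q) := by
    rw [Finset.sum_mul, hPP, Finset.sum_filter, Finset.sum_product]
    apply Finset.sum_congr rfl
    intro w _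
    rw [add_comm, ← Finset.sum_pow_mul_eq_add_pow, Finset.sum_mul, ← Finset.sum_filter]
    apply Finset.sum_congr
    · ext T
      simp [Finset.subset_iff]
    · intro T _; simp
  have hmdT : ∀ p ∈ PP, ∀ x ∈ ee p.1 p.2, x.2 = true → good x.1 := by
    intro p hp x hx hx2
    obtain ⟨i, hi, h⟩ := ee_mem _ _ _ hx hx2
    rw [← h]; exact (hPPm p hp).2 i hi
  have hlen : ∀ p ∈ PP, (wd pl md (ee p.1 p.2)).length ≤ M * q + L * p.2.card := by
    intro p hp
    have := wd_length_le pl md M L hpl (ee p.1 p.2) (fun x hx hx2 => hmd _ (hmdT p hp x hx hx2))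
    rw [ee_count] at this
    simpa [ee] using this
  have hTq : ∀ p : (Fin q → B) × Finset (Fin q), p.2.card ≤ q := by
    intro p
    simpa using Finset.card_le_univ p.2
  have hcl : ∀ p : (Fin q → B) × Finset (Fin q),
      (cod Rep pl md [] (ee p.1 p.2)).length = p.2.card := by
    intro p; rw [cod_length, ee_count]
  rw [hLHS]
  calc ∑ p ∈ PP, (z ^ L / C) ^ p.2.card * z ^ (M * q)
      ≤ ∑ p ∈ PP, z ^ (wd pl md (ee p.1 p.2)).length *
          (C⁻¹) ^ (cod Rep pl md [] (ee p.1 p.2)).length := by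
        apply Finset.sum_le_sum
        intro p hp
        rw [hcl, div_pow, ← pow_mul, inv_pow]
        have : z ^ (M * q + L * p.2.card) ≤ z ^ (wd pl md (ee p.1 p.2)).length :=
          pow_le_pow_of_le_one hz.le hz1 (hlen p hp)
        calc _ = z ^ (M * q + L * p.2.card) * (C ^ p.2.card)⁻¹ := by rw [pow_add]; ring
          _ ≤ _ := by gcongr
    _ = ∑ x ∈ PP.image (fun p => (wd pl md (ee p.1 p.2), cod Rep pl md [] (ee p.1 p.2))),
          z ^ x.1.length * (C⁻¹) ^ x.2.length := by
        rw [Finset.sum_image]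
        intro p hp p' hp' h
        have h1 := congrArg Prod.fst h
        have h2 := congrArg Prod.snd h
        have hp1 := hPPm p hp
        have hp1' := hPPm p' hp'
        have := cod_inj Rep pl md hmono M hM hpl hinj (ee p.1 p.2) [] (ee p'.1 p'.2)
          (hV _ hp1.1 _ hp1.2).1 (hV _ hp1'.1 _ hp1'.2).1 (by simp [ee]) h1 h2
        obtain ⟨h3, h4⟩ := ee_inj this
        exact Prod.ext h3 h4
    _ ≤ ∑ x ∈ WW ×ˢ CC, z ^ x.1.length * (C⁻¹) ^ x.2.length := by
        apply Finset.sum_le_sum_of_subset_of_nonneg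
        · intro x hx
          rw [Finset.mem_image] at hx
          obtain ⟨p, hp, rfl⟩ := hx
          have hp1 := hPPm p hp
          obtain ⟨v1, v2⟩ := hV _ hp1.1 _ hp1.2
          simp only [Finset.mem_product, hWW, hCC, Finset.mem_biUnion, Finset.mem_range,
            Finset.mem_filter, mem_wds]
          refine ⟨⟨_, ?_, ⟨rfl, wd_mem pl md S hplS _
            (fun x hx hx2 => hmdS _ (hmdT p hp x hx hx2))⟩, v2⟩, _, ?_, rfl, ?_⟩
          · have h1 := hlen p hp
            have h2 : L * p.2.card ≤ L * q := Nat.mul_le_mul_left _ (hTq p)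
            have h3 : (M + L) * q = M * q + L * q := by ring
            omega
          · rw [hcl]; have := hTq p; omega
          · intro x hx
            have := cod_mem Rep pl md hmono L _ [] (fun x hx hx2 => hmd _ (hmdT p hp x hx hx2)) v1 x hx
            simp [hA]; omega
        · intros; positivity
    _ = (∑ l ∈ WW, z ^ l.length) * ∑ c ∈ CC, (C⁻¹) ^ c.length := by
        rw [Finset.sum_product, Finset.sum_mul_sum]
    _ ≤ (∑ ℓ ∈ Finset.range ((M + L) * q + 1), (((wds S ℓ).filter HS).card : ℝ) * z ^ ℓ) * (q + 1) := by
        have e1 : ∑ l ∈ WW, z ^ l.length =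
            ∑ ℓ ∈ Finset.range ((M + L) * q + 1), (((wds S ℓ).filter HS).card : ℝ) * z ^ ℓ := by
          rw [hWW, Finset.sum_biUnion]
          · apply Finset.sum_congr rfl
            intro ℓ _
            have : ∀ l ∈ (wds S ℓ).filter HS, z ^ l.length = z ^ ℓ := by
              intro l hl
              rw [((mem_wds S ℓ l).1 (Finset.mem_filter.1 hl).1).1]
            rw [Finset.sum_congr rfl this, Finset.sum_const, nsmul_eq_mul]
          · intro i _ j _ hij
            rw [Function.onFun, Finset.disjoint_left]
            intro l h1 h2
            exact hij (((mem_wds S i l).1 (Finset.mem_filter.1 h1).1).1.symm.trans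
              ((mem_wds S j l).1 (Finset.mem_filter.1 h2).1).1)
        rw [e1]
        have hc : ∑ c ∈ CC, (C⁻¹) ^ c.length ≤ (q : ℝ) + 1 := by
          have := sum_codes A C hC hAc q
          convert this
        apply mul_le_mul_of_nonneg_left hc
        apply Finset.sum_nonneg
        intros; positivity
    _ = _ := mul_comm _ _

theorem lower {B : Type*} [Fintype B] (good : B → Prop) (q r : ℕ) (Ok : Finset (Fin q → B))
    (lam κ x s : ℝ) (hlam : 1 ≤ lam) (hκ : 0 < κ) (hs : s = (lam ^ r)⁻¹)
    (hx : ((Finset.univ.filter (fun b : B => ¬ good b)).card : ℝ) ≤ x) :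
    (Ok.card : ℝ) ≤ (κ ^ q)⁻¹ *
      (∑ w ∈ Ok, lam ^ (Finset.univ.filter (fun i => good (w i))).card) +
      (κ ^ r * (x + s * Fintype.card B)) ^ q := by
  have hl0 : 0 < lam := by linarith
  have hs0 : 0 < s := by rw [hs]; positivity
  have pt : ∀ g : ℕ, (1 : ℝ) ≤ (κ ^ q)⁻¹ * lam ^ g + (κ ^ r) ^ q * s ^ g := by
    intro g
    rcases le_total (κ ^ q) (lam ^ g) with h | h
    · have : 1 ≤ (κ ^ q)⁻¹ * lam ^ g := by
        rw [inv_mul_eq_div, one_le_div (by positivity)]; exact h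
      have : 0 ≤ (κ ^ r) ^ q * s ^ g := by positivity
      linarith
    · have h2 : 1 ≤ (κ ^ r) ^ q * s ^ g := by
        have e : (κ ^ r) ^ q * s ^ g = (κ ^ q) ^ r / (lam ^ g) ^ r := by
          rw [hs, inv_pow, ← pow_mul, ← pow_mul, ← pow_mul, ← pow_mul, mul_comm r q, mul_comm r g]
          rfl
        rw [e, one_le_div (by positivity)]
        gcongr
      have : 0 ≤ (κ ^ q)⁻¹ * lam ^ g := by positivity
      linarith
  have hsum : ∑ w : Fin q → B, s ^ (Finset.univ.filter (fun i => good (w i))).card ≤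
      (x + s * Fintype.card B) ^ q := by
    have e : ∀ w : Fin q → B, s ^ (Finset.univ.filter (fun i => good (w i))).card =
        ∏ i, (if good (w i) then s else 1) := by
      intro w
      rw [Finset.prod_ite]; simp
    have e2 := Fintype.sum_pow (fun b => if good b then s else (1 : ℝ)) q
    rw [Finset.sum_congr rfl (fun w _ => e w), ← e2]
    apply pow_le_pow_left₀
    · apply Finset.sum_nonneg; intro b _; split_ifs <;> positivity
    · rw [Finset.sum_ite]
      simp only [Finset.sum_const, nsmul_eq_mul, mul_one]
      have : ((Finset.univ.filter (fun b : B => good b)).card : ℝ) ≤ Fintype.card B := by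
        exact_mod_cast Finset.card_le_univ _
      nlinarith
  calc (Ok.card : ℝ) = ∑ w ∈ Ok, (1 : ℝ) := by simp
    _ ≤ ∑ w ∈ Ok, ((κ ^ q)⁻¹ * lam ^ (Finset.univ.filter (fun i => good (w i))).card +
        (κ ^ r) ^ q * s ^ (Finset.univ.filter (fun i => good (w i))).card) :=
      Finset.sum_le_sum (fun w _ => pt _)
    _ = (κ ^ q)⁻¹ * (∑ w ∈ Ok, lam ^ (Finset.univ.filter (fun i => good (w i))).card) +
        (κ ^ r) ^ q * ∑ w ∈ Ok, s ^ (Finset.univ.filter (fun i => good (w i))).card := by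
      rw [Finset.sum_add_distrib, Finset.mul_sum, Finset.mul_sum]
    _ ≤ _ := by
      rw [mul_pow]
      gcongr
      refine le_trans ?_ hsum
      apply Finset.sum_le_sum_of_subset_of_nonneg (Finset.subset_univ _)
      intros; positivity

theorem chunk {Q : Type*} [Group Q] (S D2 : Finset Q) (k M : ℕ) (q : ℕ) : ∀ l : List Q,
    l ∈ QA S D2 k (M * q) → ∃ w : Fin q → {l // l ∈ QA S D2 k M},
      (List.ofFn (fun i => (w i).1)).flatten = l := by
  induction q with
  | zero =>
    intro l hl
    have := ((mem_wds _ _ _).1 (Finset.mem_filter.1 hl).1).1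
    simp at this
    exact ⟨Fin.elim0, by simp [this]⟩
  | succ q ih =>
    intro l hl
    have hlen := ((mem_wds _ _ _).1 (Finset.mem_filter.1 hl).1).1
    rw [Nat.mul_succ] at hlen
    have h1 : l.take M ∈ QA S D2 k M := by
      have := QA_infix (a := []) (b := l.take M) (c := l.drop M) (by simpa using hl)
      rwa [List.length_take, min_eq_left (by omega)] at this
    have h2 : l.drop M ∈ QA S D2 k (M * q) := by
      have := QA_infix (a := l.take M) (b := l.drop M) (c := []) (by simpa using hl)
      rwa [List.length_drop, hlen, Nat.add_sub_cancel] at this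
    obtain ⟨w, hw⟩ := ih _ h2
    refine ⟨Fin.cons ⟨l.take M, h1⟩ w, ?_⟩
    rw [List.ofFn_succ]
    simp [hw]

end helpers

section helpers
open Classical

theorem SW_nonempty {H : Type*} [Group H] [Infinite H] (S : Finset H)
    (hgen : Subgroup.closure (S : Set H) = ⊤) (hinv : ∀ s ∈ S, s⁻¹ ∈ S) (h1 : (1 : H) ∉ S)
    (n : ℕ) : 1 ≤ (SW S n).card := by
  rw [Nat.succ_le_iff, Finset.card_pos]
  by_contra hne
  rw [Finset.not_nonempty_iff_eq_empty] at hne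
  have hadj := cayley_adj hinv h1
  have key : ∀ g : H, ∃ l : List H, (l.length < n ∧ ∀ s ∈ l, s ∈ S) ∧ l.prod = g := by
    intro g
    obtain ⟨l, hl, hlg⟩ := exists_word S hgen hinv g
    obtain ⟨p, -⟩ := exists_walk (G := cayleyGraph (S : Set H)) (S := (S : Set H))
      (fun u s hs => (hadj _ _).2 (by simpa using hs)) l 1 g hl (by rw [one_mul, hlg])
    have hre : (cayleyGraph (S : Set H)).Reachable 1 g := ⟨p⟩
    obtain ⟨p, hp⟩ := hre.exists_isPath
    have hmem := toWord_mem (S := (S : Set H)) (fun u v h => (hadj u v).1 h) p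
    have h2 := toWord_prod p
    rw [one_mul] at h2
    have hCN : CN (toWord p) := by
      have := hp.support_nodup
      rw [toWord_support] at this
      rw [CN, h2]; exact this
    refine ⟨toWord p, ⟨?_, hmem⟩, h2⟩
    by_contra hlt
    push Not at hlt
    have : (toWord p).take n ∈ SW S n := by
      simp only [SW, Finset.mem_filter, mem_wds]
      refine ⟨⟨by simp [hlt], fun s hs => hmem s (List.mem_of_mem_take hs)⟩, ?_⟩
      have h3 : CN ([] ++ (toWord p).take n ++ (toWord p).drop n) := by simpa using hCN
      exact h3.infix
    rw [hne] at this
    simp at this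
  have hfin : (Set.univ : Set H).Finite := by
    apply ((((Finset.range n).biUnion (wds S)).image List.prod).finite_toSet).subset
    intro g _
    obtain ⟨l, ⟨hl, hs⟩, hg⟩ := key g
    simp only [Finset.coe_image, Set.mem_image, Finset.mem_coe, Finset.mem_biUnion, Finset.mem_range, mem_wds]
    exact ⟨l, ⟨_, hl, rfl, hs⟩, hg⟩
  exact Set.infinite_univ hfin

theorem QA_card_eq {Q : Type*} [Group Q] (S D2 : Finset Q) (n : ℕ) :
    QA S D2 D2.card n = SW S n := by
  ext l
  simp only [QA, SW, Finset.mem_filter]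
  constructor
  · rintro ⟨a, b, c⟩; exact ⟨a, b⟩
  · rintro ⟨a, b⟩; exact ⟨a, b, Ak_card D2 b.hv⟩

theorem SW_submul {Q : Type*} [Group Q] (S : Finset Q) (M q : ℕ) :
    (SW S (M * q)).card ≤ (SW S M).card ^ q := by
  rw [← QA_card_eq S ∅, ← QA_card_eq S ∅]
  generalize (∅ : Finset Q).card = k
  have : QA S ∅ k (M * q) ⊆ (Finset.univ : Finset (Fin q → {l // l ∈ QA S ∅ k M})).image
      (fun w => (List.ofFn (fun i => (w i).1)).flatten) := by
    intro l hl
    obtain ⟨w, hw⟩ := chunk S ∅ k M q l hl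
    exact Finset.mem_image.2 ⟨w, Finset.mem_univ _, hw⟩
  calc _ ≤ _ := Finset.card_le_card this
    _ ≤ _ := Finset.card_image_le
    _ = _ := by simp

/-- half-open counts -/
noncomputable def hsc {H : Type*} [Group H] (S : Finset H) (n : ℕ) : ℕ :=
  ((wds S n).filter (fun W => (hv 1 W).Nodup)).card

theorem hsc_zero {H : Type*} [Group H] (S : Finset H) : hsc S 0 ≤ 1 := by
  unfold hsc
  refine (Finset.card_filter_le _ _).trans ?_
  simp [wds]

theorem hsc_succ {H : Type*} [Group H] (S : Finset H) (n : ℕ) :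
    hsc S (n + 1) ≤ S.card * (SW S n).card := by
  unfold hsc
  have : (wds S (n + 1)).filter (fun W => (hv 1 W).Nodup) ⊆
      (S ×ˢ SW S n).image (fun p => p.2 ++ [p.1]) := by
    intro W hW
    simp only [Finset.mem_filter, mem_wds] at hW
    obtain ⟨⟨h1, h2⟩, h3⟩ := hW
    have hne : W ≠ [] := by rintro rfl; simp at h1
    simp only [Finset.mem_image, Finset.mem_product, SW, Finset.mem_filter, mem_wds]
    have e := List.dropLast_append_getLast hne
    refine ⟨(W.getLast hne, W.dropLast), ⟨h2 _ (List.getLast_mem hne), ⟨by simp [h1],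
      fun s hs => h2 s (List.mem_of_mem_dropLast hs)⟩, ?_⟩, e⟩
    rw [CN_iff _ (W.getLast hne), e]; exact h3
  calc _ ≤ _ := Finset.card_le_card this
    _ ≤ _ := Finset.card_image_le
    _ = _ := Finset.card_product _ _

theorem growth (f : ℕ → ℕ) (μ b : ℝ) (hμ : Tendsto (fun n : ℕ => (f n : ℝ) ^ ((1 : ℝ) / n)) atTop (nhds μ))
    (hb : μ < b) (hb0 : 0 < b) : ∃ D' : ℝ, 0 ≤ D' ∧ ∀ n, (f n : ℝ) ≤ D' * b ^ n := by
  have h1 : ∀ᶠ n : ℕ in atTop, (f n : ℝ) ≤ b ^ n := by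
    filter_upwards [hμ.eventually_lt_const hb, eventually_gt_atTop 0] with n hn hn0
    have h2 : ((f n : ℝ) ^ ((1 : ℝ) / n)) ^ n ≤ b ^ n := by
      gcongr
    rwa [one_div, Real.rpow_inv_natCast_pow (by positivity) hn0.ne'] at h2
  obtain ⟨N, hN⟩ := eventually_atTop.1 h1
  refine ⟨1 + ∑ n ∈ Finset.range N, (f n : ℝ) / b ^ n, ?_, ?_⟩
  · have : 0 ≤ ∑ n ∈ Finset.range N, (f n : ℝ) / b ^ n := Finset.sum_nonneg (fun _ _ => by positivity)
    linarith
  · intro n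
    have h0 : 0 ≤ ∑ n ∈ Finset.range N, (f n : ℝ) / b ^ n := Finset.sum_nonneg (fun _ _ => by positivity)
    rcases le_or_gt N n with h | h
    · have := hN n h
      have hp : 0 < b ^ n := by positivity
      nlinarith
    · have : (f n : ℝ) / b ^ n ≤ ∑ n ∈ Finset.range N, (f n : ℝ) / b ^ n :=
        Finset.single_le_sum (f := fun n => (f n : ℝ) / b ^ n) (fun _ _ => by positivity)
          (Finset.mem_range.2 h)
      rw [← div_le_iff₀ (by positivity)]
      linarith

theorem hsc_growth {H : Type*} [Group H] (S : Finset H) (μ b : ℝ)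
    (hμ : Tendsto (fun n : ℕ => ((SW S n).card : ℝ) ^ ((1 : ℝ) / n)) atTop (nhds μ))
    (hb : μ < b) (hb0 : 1 ≤ b) : ∃ D' : ℝ, 0 ≤ D' ∧ ∀ n, (hsc S n : ℝ) ≤ D' * b ^ n := by
  obtain ⟨D', h0, h⟩ := growth _ μ b hμ hb (by linarith)
  refine ⟨1 + S.card * D', by positivity, ?_⟩
  intro n
  cases n with
  | zero =>
    have : (hsc S 0 : ℝ) ≤ 1 := by exact_mod_cast hsc_zero S
    have h2 : 0 ≤ S.card * D' := by positivity
    simp; linarith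
  | succ n =>
    have h1 : (hsc S (n + 1) : ℝ) ≤ S.card * (SW S n).card := by exact_mod_cast hsc_succ S n
    have h2 : b ^ n ≤ b ^ (n + 1) := pow_le_pow_right₀ hb0 (by omega)
    have h3 : 0 ≤ b ^ (n + 1) := by positivity
    calc _ ≤ _ := h1
      _ ≤ S.card * (D' * b ^ n) := by gcongr; exact h n
      _ ≤ S.card * (D' * b ^ (n + 1)) := by gcongr
      _ ≤ _ := by nlinarith

theorem supermul {f : ℕ → ℕ} (μ : ℝ) (hμ : Tendsto (fun n : ℕ => (f n : ℝ) ^ ((1 : ℝ) / n)) atTop (nhds μ))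
    (hf : ∀ m q, f (m * q) ≤ f m ^ q) (h1 : ∀ n, 1 ≤ f n) : 1 ≤ μ ∧ ∀ n, μ ^ n ≤ f n := by
  have hμ1 : 1 ≤ μ := by
    apply ge_of_tendsto' hμ
    intro n
    apply Real.one_le_rpow
    · exact_mod_cast h1 n
    · positivity
  refine ⟨hμ1, ?_⟩
  intro n
  rcases Nat.eq_zero_or_pos n with rfl | hn
  · simpa using h1 0
  have ht : Tendsto (fun q : ℕ => n * q) atTop atTop :=
    tendsto_id.const_mul_atTop' hn
  have h2 : μ ≤ (f n : ℝ) ^ ((1 : ℝ) / n) := by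
    apply le_of_tendsto (hμ.comp ht)
    filter_upwards [eventually_gt_atTop 0] with q hq
    simp only [Function.comp]
    have h3 : (f (n * q) : ℝ) ≤ (f n : ℝ) ^ q := by exact_mod_cast hf n q
    calc _ ≤ ((f n : ℝ) ^ q) ^ ((1 : ℝ) / (n * q : ℕ)) := by gcongr
      _ = _ := by
        rw [← Real.rpow_natCast, ← Real.rpow_mul (by positivity)]
        congr 1
        push_cast
        have : (q : ℝ) ≠ 0 := by positivity
        field_simp
  calc μ ^ n ≤ ((f n : ℝ) ^ ((1 : ℝ) / n)) ^ n := by gcongr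
    _ = _ := by rw [one_div, Real.rpow_inv_natCast_pow (by positivity) hn.ne']

theorem analytic (m : ℝ) (hm : 1 ≤ m) (M L : ℕ) (lam x y : ℝ) (hlam : 1 < lam) (hx0 : 0 ≤ x)
    (hx : x < m ^ M) (hy : 0 ≤ y) (h : ℕ → ℝ)
    (hh : ∀ b, m < b → ∃ D' : ℝ, 0 ≤ D' ∧ ∀ n, h n ≤ D' * b ^ n)
    (hmain : ∀ (r q : ℕ) (κ : ℝ), 0 < κ → m ^ (M * q) ≤ (κ ^ q)⁻¹ *
      (((q + 1) * ∑ ℓ ∈ Finset.range ((M + L) * q + 1), h ℓ * (m⁻¹) ^ ℓ) * m ^ (M * q)) +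
      (κ ^ r * (x + (lam ^ r)⁻¹ * y)) ^ q) : False := by
  have hm0 : 0 < m := by linarith
  obtain ⟨r, hr⟩ : ∃ r : ℕ, x + (lam ^ r)⁻¹ * y < m ^ M := by
    have : Tendsto (fun r : ℕ => x + (lam ^ r)⁻¹ * y) atTop (nhds (x + 0 * y)) := by
      apply Tendsto.const_add
      apply Tendsto.mul_const
      exact (tendsto_pow_atTop_atTop_of_one_lt hlam).inv_tendsto_atTop
    rw [zero_mul, add_zero] at this
    exact (this.eventually_lt_const hx).exists
  set t := x + (lam ^ r)⁻¹ * y with ht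
  have ht0 : 0 ≤ t := by positivity
  obtain ⟨κ, hκ1, hκ⟩ : ∃ κ : ℝ, 1 < κ ∧ κ ^ r * t < m ^ M := by
    have hc : ContinuousAt (fun κ : ℝ => κ ^ r * t) 1 := by fun_prop
    have h1 := hc.eventually_lt_const (u := m ^ M) (by simpa using hr)
    have h2 : ∀ᶠ κ in nhdsWithin (1 : ℝ) (Set.Ioi 1), κ ^ r * t < m ^ M := h1.filter_mono nhdsWithin_le_nhds
    obtain ⟨κ, a, b⟩ := (h2.and self_mem_nhdsWithin).exists
    exact ⟨κ, b, a⟩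
  obtain ⟨w, hw1, hw⟩ : ∃ w : ℝ, 1 < w ∧ w ^ (M + L) < κ := by
    have hc : ContinuousAt (fun w : ℝ => w ^ (M + L)) 1 := by fun_prop
    have h1 := hc.eventually_lt_const (u := κ) (by simpa using hκ1)
    have h2 : ∀ᶠ w in nhdsWithin (1 : ℝ) (Set.Ioi 1), w ^ (M + L) < κ := h1.filter_mono nhdsWithin_le_nhds
    obtain ⟨w, a, b⟩ := (h2.and self_mem_nhdsWithin).exists
    exact ⟨w, b, a⟩
  obtain ⟨D', hD0, hD⟩ := hh (m * w) (by nlinarith)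
  have hκ0 : 0 < κ := by linarith
  have hw0 : 0 < w := by linarith
  have hsum : ∀ q : ℕ, ∑ ℓ ∈ Finset.range ((M + L) * q + 1), h ℓ * (m⁻¹) ^ ℓ ≤
      ((M + L) * q + 1) * (D' * (w ^ (M + L)) ^ q) := by
    intro q
    have : ∀ ℓ ∈ Finset.range ((M + L) * q + 1), h ℓ * (m⁻¹) ^ ℓ ≤ D' * (w ^ (M + L)) ^ q := by
      intro ℓ hℓ
      rw [Finset.mem_range] at hℓ
      calc h ℓ * (m⁻¹) ^ ℓ ≤ (D' * (m * w) ^ ℓ) * (m⁻¹) ^ ℓ := by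
            gcongr; exact hD ℓ
        _ = D' * w ^ ℓ := by
            rw [mul_pow, inv_pow]; field_simp
        _ ≤ D' * (w ^ (M + L)) ^ q := by
            rw [← pow_mul]
            gcongr
            · exact hw1.le
            · omega
    refine (Finset.sum_le_sum this).trans ?_
    rw [Finset.sum_const, nsmul_eq_mul, Finset.card_range]
    push_cast; exact le_rfl
  set α := w ^ (M + L) / κ with hα
  set θ := κ ^ r * t / m ^ M with hθ
  have hα0 : 0 ≤ α := by positivity
  have hα1 : α < 1 := by rw [hα, div_lt_one hκ0]; exact hw
  have hθ0 : 0 ≤ θ := by positivity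
  have hθ1 : θ < 1 := by rw [hθ, div_lt_one (by positivity)]; exact hκ
  have key : ∀ q : ℕ, 1 ≤ ((q + 1) * ((M + L) * q + 1) * D') * α ^ q + θ ^ q := by
    intro q
    have h1 := hmain r q κ hκ0
    have h2 : (κ ^ q)⁻¹ *
      (((q + 1) * ∑ ℓ ∈ Finset.range ((M + L) * q + 1), h ℓ * (m⁻¹) ^ ℓ) * m ^ (M * q)) ≤
      (κ ^ q)⁻¹ * (((q + 1) * (((M + L) * q + 1) * (D' * (w ^ (M + L)) ^ q))) * m ^ (M * q)) := by
      gcongr; exact hsum q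
    have h3 := h1.trans (add_le_add_left h2 _)
    have hp : 0 < m ^ (M * q) := by positivity
    have e : (κ ^ q)⁻¹ * (((q + 1) * (((M + L) * q + 1) * (D' * (w ^ (M + L)) ^ q))) * m ^ (M * q)) +
      (κ ^ r * t) ^ q = (((q + 1) * ((M + L) * q + 1) * D') * α ^ q + θ ^ q) * m ^ (M * q) := by
      rw [hα, hθ, div_pow, div_pow, ← pow_mul m]
      field_simp
    rw [e] at h3
    by_contra hlt
    push Not at hlt
    nlinarith
  have hlim : Tendsto (fun q : ℕ => (((q : ℝ) + 1) * ((M + L) * q + 1) * D') * α ^ q + θ ^ q) atTop (nhds 0) := by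
    have a0 := tendsto_pow_const_mul_const_pow_of_abs_lt_one 0 (r := α) (by rwa [abs_of_nonneg hα0])
    have a1 := tendsto_pow_const_mul_const_pow_of_abs_lt_one 1 (r := α) (by rwa [abs_of_nonneg hα0])
    have a2 := tendsto_pow_const_mul_const_pow_of_abs_lt_one 2 (r := α) (by rwa [abs_of_nonneg hα0])
    have a3 := tendsto_pow_atTop_nhds_zero_of_lt_one hθ0 hθ1
    have := (((a2.const_mul ((M + L) * D')).add (a1.const_mul ((M + L + 1) * D'))).add (a0.const_mul D')).add a3
    simp only [mul_zero, add_zero] at this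
    refine this.congr (fun q => ?_)
    ring
  have := ge_of_tendsto' hlim key
  linarith

end helpers

section helpers
open Classical

theorem comb {Γ Q : Type*} [Group Γ] [Group Q] (π : Γ →* Q) (S : Finset Γ) (S' : Finset Q)
    (f : Q → Γ) (hfS : ∀ q ∈ S', f q ∈ S) (hf : ∀ q ∈ S', π (f q) = q)
    (D D2 : Finset Q) (hD1 : 1 ∈ D)
    (hP : ∀ x ∈ D, ∀ y ∈ D, ∃ P : List Γ, (∀ s ∈ P, s ∈ S) ∧
      (∀ v ∈ hv 1 P ++ [P.prod], x * π v ∈ D) ∧ x * π P.prod = y ∧ CN P ∧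
      ¬ ((hv 1 P ++ [P.prod]).map π).Nodup)
    (hDD : ∀ x ∈ D, ∀ y ∈ D, x * y⁻¹ ∈ D2) (k M : ℕ) (hM : 0 < M) (m : ℝ) (hm : 1 ≤ m) :
    ∃ (L : ℕ) (lam : ℝ), 1 < lam ∧ ∀ (r q : ℕ) (κ : ℝ), 0 < κ →
      ((QA S' D2 (k + 1) (M * q)).card : ℝ) ≤ (κ ^ q)⁻¹ *
      (((q + 1) * ∑ ℓ ∈ Finset.range ((M + L) * q + 1), (hsc S ℓ : ℝ) * (m⁻¹) ^ ℓ) * m ^ (M * q)) +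
      (κ ^ r * ((QA S' D2 k M).card + (lam ^ r)⁻¹ * (QA S' D2 (k + 1) M).card)) ^ q := by
  have hm0 : 0 < m := by linarith
  let B := {l // l ∈ QA S' D2 (k + 1) M}
  let instB : Fintype B := inferInstanceAs (Fintype {l // l ∈ QA S' D2 (k + 1) M})
  let wo : B → List Q := fun b => b.1
  let pl : B → List Γ := fun b => b.1.map f
  let good : B → Prop := fun b => ¬ Ak D2 k b.1
  have hB : ∀ b : B, (wo b).length = M ∧ (∀ s ∈ wo b, s ∈ S') ∧ CN (wo b) ∧ Ak D2 (k + 1) (wo b) := by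
    intro b
    have := b.2
    simp only [QA, Finset.mem_filter, mem_wds] at this
    exact ⟨this.1.1, this.1.2, this.2.1, this.2.2⟩
  have hcc : ∀ b : B, ∃ c : Q, good b → c ∈ hv 1 (wo b) ∧
      k + 1 ≤ (hv 1 (wo b)).countP (fun v => decide (c⁻¹ * v ∈ D2)) := by
    intro b
    by_cases hg : good b
    · have hg' : ¬ Ak D2 k b.1 := hg
      unfold Ak at hg'
      push Not at hg'
      obtain ⟨c, h1, h2⟩ := hg'
      exact ⟨c, fun _ => ⟨h1, h2⟩⟩
    · exact ⟨1, fun h => absurd h hg⟩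
  choose cc hcc using hcc
  have hmd : ∀ b : B, ∃ mm : List Γ, good b → (∀ s ∈ mm, s ∈ S) ∧ π mm.prod = (wo b).prod ∧
      (hv 1 mm).Nodup ∧
      (∀ v ∈ hv 1 mm, π v ∈ hv 1 (wo b) ∨ (cc b)⁻¹ * π v ∈ D) ∧ ¬ (hv 1 (mm.map π)).Nodup := by
    intro b
    by_cases hg : good b
    · obtain ⟨mm, h⟩ := mod_exists π S S' f hfS hf D hD1 hP (wo b) (hB b).2.1 (hB b).2.2.1.hv (cc b)
        (hcc b hg).1
      exact ⟨mm, fun _ => h⟩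
    · exact ⟨[], fun h => absurd h hg⟩
  choose md hmd using hmd
  let L := ∑ b : B, (md b).length
  have hL : ∀ b : B, (md b).length ≤ L := fun b =>
    Finset.single_le_sum (f := fun b => (md b).length) (fun _ _ => Nat.zero_le _) (Finset.mem_univ b)
  let C : ℝ := (((L + 1) * Fintype.card B : ℕ) : ℝ) + 1
  have hC : 0 < C := by positivity
  have hplw : ∀ b, (pl b).map π = wo b := by
    intro b
    show (b.1.map f).map π = b.1
    rw [List.map_map]
    have : ∀ x ∈ b.1, (π ∘ f) x = id x := fun x hx => hf x ((hB b).2.1 x hx)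
    rw [List.map_congr_left this, List.map_id]
  have hplp : ∀ b, π (pl b).prod = (wo b).prod := by
    intro b; rw [map_list_prod, hplw]
  have hplv : ∀ b, (hv 1 (pl b)).map π = hv 1 (wo b) := by
    intro b; rw [hv_hom, map_one, hplw]
  have hinj : Function.Injective pl := by
    intro b b' h
    have : wo b = wo b' := by rw [← hplw, ← hplw, h]
    exact Subtype.ext this
  have hcard : Fintype.card B = (QA S' D2 (k + 1) M).card := Fintype.card_coe _
  refine ⟨L, 1 + (m⁻¹) ^ L / C, ?_, ?_⟩
  · have : 0 < (m⁻¹) ^ L / C := by positivity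
    linarith
  intro r q κ hκ
  let Ok : Finset (Fin q → B) := Finset.univ.filter
    (fun w => (List.ofFn (fun i => (w i).1)).flatten ∈ QA S' D2 (k + 1) (M * q))
  have hOk : (QA S' D2 (k + 1) (M * q)).card ≤ Ok.card := by
    have : QA S' D2 (k + 1) (M * q) ⊆ Ok.image (fun w => (List.ofFn (fun i => (w i).1)).flatten) := by
      intro l hl
      obtain ⟨w, hw⟩ := chunk S' D2 (k + 1) M q l hl
      exact Finset.mem_image.2 ⟨w, Finset.mem_filter.2 ⟨Finset.mem_univ _, by rw [hw]; exact hl⟩, hw⟩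
    exact (Finset.card_le_card this).trans Finset.card_image_le
  have hV : ∀ w ∈ Ok, ∀ T : Finset (Fin q), (∀ i ∈ T, good (w i)) →
      Vld (RepQ π) pl md [] (ee w T) ∧ (hv 1 (wd pl md (ee w T))).Nodup := by
    intro w hw T hT
    have hw2 := (Finset.mem_filter.1 hw).2
    have hfl : fl wo (ee w T) ∈ QA S' D2 (k + 1) (M * q) := by rw [fl_ee]; exact hw2
    simp only [QA, Finset.mem_filter] at hfl
    have he : ∀ x ∈ ee w T, x.2 = true → good x.1 := by
      intro x hx hx2
      obtain ⟨i, hi, h⟩ := ee_mem _ _ _ hx hx2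
      rw [← h]; exact hT i hi
    constructor
    · exact wd_vld π wo pl md good hplw (fun b hb => (hmd b hb).2.2.2.2) (ee w T) [] he
        (by simpa using hfl.2.1.hv)
    · refine wd_nodup π wo cc pl md D D2 good hplp hplv (fun b hb => (hmd b hb).2.1)
        (fun b hb => (hmd b hb).2.2.1) (fun b hb => (hmd b hb).2.2.2.1) (fun b hb => (hcc b hb).1)
        hDD hD1 (ee w T) 1 he ?_ ?_
      · rw [map_one]; exact hfl.2.1.hv
      · rw [map_one]; exact Iso_of_Ak wo cc D2 (k + 1) (ee w T) hfl.2.2 good hcc he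
  have hup := upper S (fun W => (hv 1 W).Nodup) good pl md (RepQ π) (RepQ_mono π) M L hM
    (fun b => by show (b.1.map f).length = M; rw [List.length_map]; exact (hB b).1)
    (fun b s hs => by
      obtain ⟨x, hx, rfl⟩ := List.mem_map.1 hs
      exact hfS x ((hB b).2.1 x hx))
    hinj (fun b _ => hL b) (fun b hb => (hmd b hb).1) (m⁻¹) (by positivity) (inv_le_one_of_one_le₀ hm)
    C hC (by show _ ≤ _ + (1 : ℝ); linarith) q Ok hV
  have hlo := lower good q r Ok (1 + (m⁻¹) ^ L / C) κ (QA S' D2 k M).card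
    (((1 + (m⁻¹) ^ L / C) ^ r)⁻¹) (by
      have : 0 < (m⁻¹) ^ L / C := by positivity
      linarith) hκ rfl (by
      have : (Finset.univ.filter (fun b : B => ¬ good b)).card ≤ (QA S' D2 k M).card := by
        apply Finset.card_le_card_of_injOn (fun b => b.1)
        · intro b hb
          have hb2 : Ak D2 k b.1 := by simpa [good] using hb
          simp only [QA, Finset.coe_filter, Set.mem_ofPred_eq, mem_wds]
          exact ⟨⟨(hB b).1, (hB b).2.1⟩, (hB b).2.2.1, hb2⟩
        · intro b _ b' _ h; exact Subtype.ext h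
      refine Nat.cast_le.2 ?_
      convert this)
  rw [hcard] at hlo
  have hOk' : ((QA S' D2 (k + 1) (M * q)).card : ℝ) ≤ Ok.card := by exact_mod_cast hOk
  refine hOk'.trans (hlo.trans ?_)
  gcongr
  rw [inv_pow m (M * q), ← div_eq_mul_inv, div_le_iff₀ (by positivity)] at hup
  unfold hsc
  convert hup

theorem main_aux {Γ Q : Type*} [Group Γ] [Group Q] [Infinite Q] (π : Γ →* Q) (S : Finset Γ)
    (hπ : Function.Surjective π)
    (hgen : Subgroup.closure (S : Set Γ) = ⊤) (hinv : ∀ s ∈ S, s⁻¹ ∈ S) (h1 : (1 : Γ) ∉ S)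
    (ν : Γ) (hν1 : ν ≠ 1) (hν : π ν = 1) (hSN : ∀ s ∈ S, π s ≠ 1) (μ μ' : ℝ)
    (hμ : Tendsto (fun n : ℕ => (sawCount (cayleyGraph (S : Set Γ)) 1 n : ℝ) ^ ((1 : ℝ) / n))
      atTop (nhds μ))
    (hμ' : Tendsto (fun n : ℕ =>
        (sawCount (cayleyGraph (π '' (S : Set Γ))) 1 n : ℝ) ^ ((1 : ℝ) / n)) atTop (nhds μ')) :
    μ' < μ := by
  by_contra hlt
  push Not at hlt
  have hS'c : π '' (S : Set Γ) = ((S.image π : Finset Q) : Set Q) := by simp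
  rw [hS'c] at hμ'
  set S' := S.image π with hS'
  have hinv' : ∀ s ∈ S', s⁻¹ ∈ S' := by
    intro s hs
    rw [hS', Finset.mem_image] at hs ⊢
    obtain ⟨a, ha, rfl⟩ := hs
    exact ⟨a⁻¹, hinv a ha, by simp⟩
  have h1' : (1 : Q) ∉ S' := by
    rw [hS', Finset.mem_image]
    rintro ⟨a, ha, h⟩
    exact hSN a ha h
  have hgen' : Subgroup.closure (S' : Set Q) = ⊤ := by
    rw [← hS'c, ← MonoidHom.map_closure, hgen]
    exact Subgroup.map_top_of_surjective π hπ
  simp only [sawCount_eq hinv h1] at hμ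
  simp only [sawCount_eq hinv' h1'] at hμ'
  obtain ⟨hm1, hsup⟩ := supermul μ' hμ' (fun m q => SW_submul S' m q)
    (SW_nonempty S' hgen' hinv' h1')
  obtain ⟨D, hD1, hP⟩ := exists_P π S hgen hinv h1 ν hν1 hν
  let D2 : Finset Q := (D ×ˢ D).image (fun p => p.1 * p.2⁻¹)
  have hDD : ∀ x ∈ D, ∀ y ∈ D, x * y⁻¹ ∈ D2 := fun x hx y hy =>
    Finset.mem_image.2 ⟨(x, y), Finset.mem_product.2 ⟨hx, hy⟩, rfl⟩
  have h1D2 : (1 : Q) ∈ D2 := by simpa using hDD 1 hD1 1 hD1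
  have hex : ∃ k, ∀ n, μ' ^ n ≤ ((QA S' D2 k n).card : ℝ) :=
    ⟨D2.card, fun n => by rw [QA_card_eq]; exact hsup n⟩
  have hspec := Nat.find_spec hex
  have hmin := fun j => Nat.find_min (H := hex) (m := j)
  generalize Nat.find hex = K at hspec hmin
  cases K with
  | zero =>
    have h := hspec 1
    have he : QA S' D2 0 1 = ∅ := by
      apply Finset.eq_empty_of_forall_notMem
      intro l hl
      simp only [QA, Finset.mem_filter, mem_wds] at hl
      obtain ⟨⟨hl1, -⟩, -, hA⟩ := hl
      obtain ⟨a, rfl⟩ := List.length_eq_one_iff.1 hl1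
      have := hA 1 (by simp [hv])
      simp [hv, h1D2] at this
    rw [he] at h
    simp at h
    linarith
  | succ k =>
    have hk := hmin k (by omega)
    push Not at hk
    obtain ⟨M, hMlt⟩ := hk
    have hM : 0 < M := by
      rcases Nat.eq_zero_or_pos M with rfl | h
      · exfalso
        have : ([] : List Q) ∈ QA S' D2 k 0 := by
          refine Finset.mem_filter.2 ⟨(mem_wds _ _ _).2 ⟨rfl, by simp⟩, ?_, ?_⟩
          · simp [CN, hv]
          · simp [Ak, hv]
        have h2 : 1 ≤ (QA S' D2 k 0).card := Finset.card_pos.2 ⟨_, this⟩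
        have h3 : (1 : ℝ) ≤ (QA S' D2 k 0).card := by exact_mod_cast h2
        simp at hMlt
        rw [hMlt] at this
        simp at this
      · exact h
    have hf : ∀ q : Q, ∃ a : Γ, q ∈ S' → a ∈ S ∧ π a = q := by
      intro q
      by_cases hq : q ∈ S'
      · obtain ⟨a, ha, h⟩ := Finset.mem_image.1 hq
        exact ⟨a, fun _ => ⟨ha, h⟩⟩
      · exact ⟨1, fun h => absurd h hq⟩
    choose f hf using hf
    obtain ⟨L, lam, hlam, hmain⟩ := comb π S S' f (fun q hq => (hf q hq).1) (fun q hq => (hf q hq).2)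
      D D2 hD1 hP hDD k M hM μ' hm1
    exact analytic μ' hm1 M L lam _ _ hlam (by positivity) hMlt (by positivity)
      (fun n => (hsc S n : ℝ))
      (fun b hb => hsc_growth S μ b hμ (by linarith) (by linarith))
      (fun r q κ hκ => (hspec (M * q)).trans (hmain r q κ hκ))

end helpers

/-- Adding a further non-trivial relator `ρ` strictly decreases the connective constant of
the Cayley graph: here `N` is the normal closure of `ρ`, the quotient `Γ/N` is assumed
infinite with no generator mapped to the identity, and `μ', μ` are the connective constants
of the Cayley graphs of `Γ/N` and `Γ`. -/
theorem cayley_add_relator_strict_decrease {Γ : Type*} [Group Γ] [Infinite Γ]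
    (S : Finset Γ)
    (hgen : Subgroup.closure (S : Set Γ) = ⊤)
    (hSinv : ∀ s ∈ S, s⁻¹ ∈ S)
    (h1S : (1 : Γ) ∉ S)
    (ρ : Γ) (hρ : ρ ≠ 1)
    (hQinf : Infinite (Γ ⧸ Subgroup.normalClosure ({ρ} : Set Γ)))
    (hSN : ∀ s ∈ S, s ∉ Subgroup.normalClosure ({ρ} : Set Γ))
    (μ μ' : ℝ)
    (hμ : Tendsto (fun n : ℕ => (sawCount (cayleyGraph (S : Set Γ)) 1 n : ℝ) ^ ((1 : ℝ) / n))
      atTop (nhds μ))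
    (hμ' : Tendsto (fun n : ℕ =>
        (sawCount (cayleyGraph
          ((QuotientGroup.mk '' (S : Set Γ)) : Set (Γ ⧸ Subgroup.normalClosure ({ρ} : Set Γ))))
          1 n : ℝ) ^ ((1 : ℝ) / n))
      atTop (nhds μ')) :
    μ' < μ := by
  have := hQinf
  refine main_aux (QuotientGroup.mk' (Subgroup.normalClosure ({ρ} : Set Γ))) S
    (QuotientGroup.mk'_surjective _) hgen hSinv h1S ρ hρ ?_ ?_ μ μ' hμ hμ'
  · exact (QuotientGroup.eq_one_iff ρ).2 (Subgroup.subset_normalClosure rfl)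
  · intro s hs h
    exact hSN s hs ((QuotientGroup.eq_one_iff s).1 h)
end

section
/- Let Γ be an infinite group generated by a finite set S with S = S⁻¹ and 1 ∉ S, and let G = G(Γ,S) be its Cayley graph. Let w ∈ Γ with w ≠ 1 and w ∉ S, and set S' = S ∪ {w, w⁻¹}, with Ḡ = G(Γ, S') the Cayley graph of Γ with the enlarged generating set. If σ_n(1)^{1/n} → μ as n → ∞ (counting SAWs in G from the identity) and σ̄_n(1)^{1/n} → μ̄ as n → ∞ (counting SAWs in Ḡ from the identity), then μ < μ̄. That is, declaring a non-trivial non-generator element to be a generator strictly increases the connective constant of the Cayley graph. -/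
open Filter

namespace SawP
open Classical

variable {Γ : Type*} [Group Γ]

/-- points of a walk -/
def pts : Γ → List Γ → List Γ
  | g, [] => [g]
  | g, (s :: l) => g :: pts (g * s) l

lemma mem_pts {g z : Γ} {l : List Γ} :
    z ∈ pts g l ↔ ∃ l1 l2, l = l1 ++ l2 ∧ z = g * l1.prod := by
  induction l generalizing g with
  | nil =>
    simp only [pts, List.mem_singleton]
    constructor
    · rintro rfl; exact ⟨[], [], rfl, by simp⟩
    · rintro ⟨l1, l2, h, rfl⟩
      have : l1 = [] := by
        cases l1 with
        | nil => rfl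
        | cons a b => simp at h
      simp [this]
  | cons s l ih =>
    simp only [pts, List.mem_cons, ih]
    constructor
    · rintro (rfl | ⟨l1, l2, rfl, rfl⟩)
      · exact ⟨[], s :: l, rfl, by simp⟩
      · exact ⟨s :: l1, l2, rfl, by simp [mul_assoc]⟩
    · rintro ⟨l1, l2, h, rfl⟩
      cases l1 with
      | nil => left; simp
      | cons a b =>
        simp only [List.cons_append, List.cons.injEq] at h
        obtain ⟨rfl, rfl⟩ := h
        right
        exact ⟨b, l2, rfl, by simp [mul_assoc]⟩

lemma pts_mul (h g : Γ) (l : List Γ) : pts (h * g) l = (pts g l).map (fun x => h * x) := by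
  induction l generalizing g with
  | nil => simp [pts]
  | cons s l ih => simp [pts, ← ih, mul_assoc]

lemma mem_pts_mul {h g z : Γ} {l : List Γ} : z ∈ pts (h * g) l ↔ h⁻¹ * z ∈ pts g l := by
  rw [pts_mul, List.mem_map]
  constructor
  · rintro ⟨x, hx, rfl⟩; simpa using hx
  · intro hx; exact ⟨_, hx, by simp⟩

lemma mem_pts_one {g z : Γ} {l : List Γ} : z ∈ pts g l ↔ g⁻¹ * z ∈ pts 1 l := by
  have := @mem_pts_mul Γ _ g 1 z l
  simpa using this

lemma nodup_pts {g : Γ} {l : List Γ} : (pts g l).Nodup ↔ (pts 1 l).Nodup := by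
  have := pts_mul g 1 l
  rw [mul_one] at this
  rw [this]
  exact List.nodup_map_iff (mul_right_injective g)

lemma pts_length (g : Γ) (l : List Γ) : (pts g l).length = l.length + 1 := by
  induction l generalizing g with
  | nil => simp [pts]
  | cons s l ih => simp [pts, ih]

lemma start_mem (g : Γ) (l : List Γ) : g ∈ pts g l := by
  cases l <;> simp [pts]

lemma end_mem (g : Γ) (l : List Γ) : g * l.prod ∈ pts g l :=
  mem_pts.2 ⟨l, [], by simp, rfl⟩

lemma mem_pts_append {g z : Γ} {l m : List Γ} :
    z ∈ pts g (l ++ m) ↔ z ∈ pts g l ∨ z ∈ pts (g * l.prod) m := by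
  induction l generalizing g with
  | nil =>
    simp only [List.nil_append, pts, List.mem_singleton, List.prod_nil, mul_one]
    constructor
    · exact Or.inr
    · rintro (rfl | h)
      · exact start_mem _ _
      · exact h
  | cons s l ih => simp [pts, ih, or_assoc, mul_assoc]

lemma nodup_append {g : Γ} {l m : List Γ} :
    (pts g (l ++ m)).Nodup ↔ (pts g l).Nodup ∧ (pts (g * l.prod) m).Nodup ∧
      ∀ z ∈ pts g l, z ∈ pts (g * l.prod) m → z = g * l.prod := by
  induction l generalizing g with
  | nil => simp [pts]
  | cons s l ih =>
    simp only [List.cons_append, pts, List.nodup_cons, ih, mem_pts_append, List.prod_cons,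
      List.mem_cons, forall_eq_or_imp, ← mul_assoc, not_or]
    constructor
    · rintro ⟨⟨h1, h2⟩, h3, h4, h5⟩
      exact ⟨⟨h1, h3⟩, h4, fun h => absurd h h2, h5⟩
    · rintro ⟨⟨h1, h3⟩, h4, h6, h5⟩
      refine ⟨⟨h1, fun h => h1 ?_⟩, h3, h4, h5⟩
      have h7 := end_mem (g * s) l
      rwa [← h6 h] at h7

/-- self-avoiding words -/
def SAW (l : List Γ) : Prop := (pts 1 l).Nodup

lemma saw_append {l m : List Γ} : SAW (l ++ m) ↔ SAW l ∧ SAW m ∧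
    ∀ z ∈ pts 1 l, z ∈ pts l.prod m → z = l.prod := by
  unfold SAW
  rw [nodup_append, one_mul, nodup_pts (g := l.prod)]

lemma replace {X K M Y : List Γ} (h : SAW (X ++ (K ++ Y))) (hM : SAW M) (hp : M.prod = K.prod)
    (hv : ∀ z ∈ pts 1 M, X.prod * z ∈ pts 1 (X ++ (K ++ Y)) → z ∈ pts 1 K) :
    SAW (X ++ (M ++ Y)) := by
  rw [saw_append, saw_append] at h ⊢
  obtain ⟨hX, ⟨hK, hY, hKY⟩, hXK⟩ := h
  refine ⟨hX, ⟨hM, hY, ?_⟩, ?_⟩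
  · intro z hz hz'
    rw [hp] at hz' ⊢
    refine hKY z (hv z hz ?_) hz'
    rw [mem_pts_append, mem_pts_append, one_mul]
    right; right
    rw [mem_pts_mul]; simpa using hz'
  · intro z hz hz'
    rw [mem_pts_append] at hz'
    rcases hz' with hz' | hz'
    · apply hXK z hz
      rw [mem_pts_append]; left
      rw [mem_pts_one] at hz' ⊢
      apply hv _ hz'
      rw [mem_pts_append]; left; simpa using hz
    · apply hXK z hz
      rw [mem_pts_append]; right; rwa [← hp]

/-- inverse word -/
def inv (l : List Γ) : List Γ := (l.map (·⁻¹)).reverse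

lemma inv_prod (l : List Γ) : (inv l).prod = l.prod⁻¹ := by
  unfold inv; rw [List.prod_inv_reverse]

lemma pts_snoc (g s : Γ) (l : List Γ) : pts g (l ++ [s]) = pts g l ++ [g * l.prod * s] := by
  induction l generalizing g with
  | nil => simp [pts]
  | cons a l ih => simp [pts, ih, mul_assoc]

lemma pts_inv (g : Γ) (l : List Γ) : pts (g * l.prod) (inv l) = (pts g l).reverse := by
  induction l generalizing g with
  | nil => simp [pts, inv]
  | cons s l ih =>
    have h1 : inv (s :: l) = inv l ++ [s⁻¹] := by simp [inv]
    rw [h1, pts_snoc, List.prod_cons, ← mul_assoc, ih, inv_prod]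
    simp [pts]

lemma saw_inv {l : List Γ} (h : SAW l) : SAW (inv l) := by
  unfold SAW at *
  rw [← nodup_pts (g := 1 * l.prod), pts_inv]
  exact List.nodup_reverse.2 h

lemma inv_mem {T : Finset Γ} (hT : ∀ s ∈ T, s⁻¹ ∈ T) {l : List Γ} (h : ∀ x ∈ l, x ∈ T) :
    ∀ x ∈ inv l, x ∈ T := by
  intro x hx
  simp only [inv, List.mem_reverse, List.mem_map] at hx
  obtain ⟨a, ha, rfl⟩ := hx
  exact hT _ (h _ ha)

/-- connectedness off the identity -/
def conn (T : Finset Γ) (a b : Γ) : Prop :=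
  ∃ l : List Γ, (∀ x ∈ l, x ∈ T) ∧ (1 : Γ) ∉ pts a l ∧ a * l.prod = b

lemma conn_trans {T : Finset Γ} {a b c : Γ} (h : conn T a b) (h' : conn T b c) : conn T a c := by
  obtain ⟨l, h1, h2, rfl⟩ := h
  obtain ⟨m, h3, h4, rfl⟩ := h'
  refine ⟨l ++ m, ?_, ?_, by simp [mul_assoc]⟩
  · intro x hx
    rcases List.mem_append.1 hx with hx | hx
    · exact h1 _ hx
    · exact h3 _ hx
  · rw [mem_pts_append]; tauto

lemma conn_symm {T : Finset Γ} (hT : ∀ s ∈ T, s⁻¹ ∈ T) {a b : Γ} (h : conn T a b) :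
    conn T b a := by
  obtain ⟨l, h1, h2, rfl⟩ := h
  refine ⟨inv l, inv_mem hT h1, ?_, by simp [inv_prod]⟩
  rw [pts_inv]; simpa using h2

lemma insert_saw {T : Finset Γ} {w s s' : Γ} {X Y : List Γ}
    (hX : ∀ x ∈ X ++ [s], x ∈ T) (hY : ∀ x ∈ s' :: Y, x ∈ T)
    (h : SAW ((X ++ [s]) ++ (s' :: Y))) (hw : w ≠ 1)
    (c1 : ¬ conn T w s⁻¹) (c2 : ¬ conn T s' w⁻¹) :
    SAW ((X ++ [s]) ++ (w :: s' :: Y)) := by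
  rw [saw_append] at h
  obtain ⟨h1, h2, h3⟩ := h
  -- key: `w * pts Y` avoids 1
  have key : (1 : Γ) ∉ pts w (s' :: Y) := by
    intro h
    rw [mem_pts_one, mul_one] at h
    have h2' : SAW (s' :: Y) := h2
    unfold SAW at h2'
    simp only [pts, List.mem_cons, one_mul] at h h2'
    rw [List.nodup_cons] at h2'
    rcases h with h | h
    · exact hw (by simpa using h)
    · obtain ⟨l1, l2, rfl, e⟩ := mem_pts.1 h
      apply c2
      refine ⟨l1, fun x hx => hY x (by simp [hx]), fun hh => h2'.1 ?_, e.symm⟩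
      rw [mem_pts_append]; exact Or.inl hh
  have h4 : SAW (w :: s' :: Y) := by
    unfold SAW
    rw [pts, List.nodup_cons, one_mul]
    exact ⟨key, nodup_pts.2 h2⟩
  rw [saw_append]
  refine ⟨h1, h4, ?_⟩
  intro z hz hz'
  rw [pts, List.mem_cons] at hz'
  rcases hz' with hz' | hz'
  · exact hz'
  · exfalso
    set v := (X ++ [s]).prod with hv
    rw [mem_pts_mul] at hz'
    set x := v⁻¹ * z with hx
    have hx1 : x ≠ 1 := fun h => key (h ▸ hz')
    have hwx : conn T w x := by
      obtain ⟨l1, l2, e, e'⟩ := mem_pts.1 hz'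
      refine ⟨l1, fun y hy => hY y (by rw [e]; simp [hy]), fun hh => key ?_, e'.symm⟩
      rw [e, mem_pts_append]; exact Or.inl hh
    apply c1
    refine conn_trans hwx ?_
    rw [pts_snoc] at hz
    unfold SAW at h1
    rw [pts_snoc] at h1
    have hv' : v = X.prod * s := by simp [hv]
    rw [List.mem_append, List.mem_singleton, one_mul, ← hv'] at hz
    rcases hz with hz | hz
    · obtain ⟨l1, l2, e, e'⟩ := mem_pts.1 hz
      rw [one_mul] at e'
      refine ⟨l2, fun y hy => hX y (by rw [e]; simp [hy]), fun hh => ?_, ?_⟩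
      · have : v ∈ pts 1 X := by
          rw [e, mem_pts_append]; right
          rw [mem_pts_mul] at hh
          rw [one_mul, ← e']
          rw [mem_pts_one]
          rw [mem_pts_one] at hh
          simpa using hh
        rw [List.nodup_append] at h1
        exact h1.2.2 v this (1 * X.prod * s) (by simp) (by rw [hv', one_mul])
      · rw [hx, hv', e, e']; simp [mul_assoc]
    · exact absurd (by rw [hx, hz]; simp) hx1

lemma not_nodup_split {g : Γ} {l : List Γ} (h : ¬ (pts g l).Nodup) :
    ∃ x y z, l = x ++ (y ++ z) ∧ y ≠ [] ∧ y.prod = 1 := by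
  induction l generalizing g with
  | nil => simp [pts] at h
  | cons s l ih =>
    rw [pts, List.nodup_cons, not_and_or, not_not] at h
    rcases h with h | h
    · obtain ⟨l1, l2, rfl, e⟩ := mem_pts.1 h
      refine ⟨[], s :: l1, l2, by simp, by simp, ?_⟩
      rw [mul_assoc] at e
      simpa using e
    · obtain ⟨x, y, z, rfl, h1, h2⟩ := ih h
      exact ⟨s :: x, y, z, by simp, h1, h2⟩

/-- minimal detour path -/
lemma min_path {T : Finset Γ} {a : Γ} {R : ℕ} {P : Γ → Prop}
    (ex : ∃ l : List Γ, (∀ x ∈ l, x ∈ T) ∧ l.length ≤ R ∧ (1 : Γ) ∉ pts a l ∧ P (a * l.prod)) :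
    ∃ l : List Γ, (∀ x ∈ l, x ∈ T) ∧ l.length ≤ R ∧ (1 : Γ) ∉ pts a l ∧ P (a * l.prod) ∧
      (pts a l).Nodup ∧ ∀ z ∈ pts a l, P z → z = a * l.prod := by
  have ex' : ∃ n, ∃ l : List Γ, l.length = n ∧ (∀ x ∈ l, x ∈ T) ∧ l.length ≤ R ∧
      (1 : Γ) ∉ pts a l ∧ P (a * l.prod) := by
    obtain ⟨l, h⟩ := ex
    exact ⟨_, l, rfl, h⟩
  obtain ⟨l, h0, h1, h2, h3, h4⟩ := Nat.find_spec ex'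
  have hmin : ∀ m : List Γ, m.length < l.length → (∀ x ∈ m, x ∈ T) → (1 : Γ) ∉ pts a m →
      ¬ P (a * m.prod) := by
    intro m hm h5 h6 h7
    rw [h0] at hm
    exact Nat.find_min ex' hm ⟨m, rfl, h5, by omega, h6, h7⟩
  refine ⟨l, h1, h2, h3, h4, ?_, ?_⟩
  · by_contra hnd
    obtain ⟨x, y, z, rfl, hy, hy1⟩ := not_nodup_split hnd
    refine hmin (x ++ z) ?_ ?_ ?_ ?_
    · have := List.length_pos_iff.2 hy
      simp only [List.length_append]; omega
    · intro t ht
      apply h1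
      rcases List.mem_append.1 ht with ht | ht <;> simp [ht]
    · simp only [mem_pts_append, hy1, mul_one] at h3 ⊢
      tauto
    · simpa [hy1] using h4
  · intro z hz hPz
    obtain ⟨l1, l2, rfl, rfl⟩ := mem_pts.1 hz
    by_cases hl2 : l2 = []
    · simp [hl2]
    · exfalso
      refine hmin l1 ?_ ?_ ?_ hPz
      · have := List.length_pos_iff.2 hl2
        simp only [List.length_append]; omega
      · intro t ht; exact h1 _ (by simp [ht])
      · rw [mem_pts_append] at h3; tauto

lemma detour {T : Finset Γ} (hT : ∀ s ∈ T, s⁻¹ ∈ T) {a : Γ} {R : ℕ} {U1 U2 : List Γ}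
    (hU : ∀ x ∈ U1 ++ U2, x ∈ T) (h : SAW (U1 ++ U2)) (ha : a ∈ T)
    (ex : ∃ l : List Γ, (∀ x ∈ l, x ∈ T) ∧ l.length ≤ R ∧ (1 : Γ) ∉ pts a l ∧
      U1.prod * (a * l.prod) ∈ pts 1 (U1 ++ U2)) :
    ∃ U' : List Γ, (∀ x ∈ U', x ∈ T) ∧ (a ∈ U' ∨ a⁻¹ ∈ U') ∧
      U'.length ≤ (U1 ++ U2).length + (R + 1) ∧ U'.prod = (U1 ++ U2).prod ∧ SAW U' ∧
      ∀ z ∈ pts 1 U', z ∈ pts 1 (U1 ++ U2) ∨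
        ∃ l : List Γ, (∀ x ∈ l, x ∈ T) ∧ l.length ≤ R + 1 ∧ z = U1.prod * l.prod := by
  obtain ⟨l, h1, h2, h3, h4, h5, h6⟩ :=
    min_path (P := fun x => U1.prod * x ∈ pts 1 (U1 ++ U2)) ex
  set M := a :: l with hM
  have hMT : ∀ x ∈ M, x ∈ T := by
    intro x hx
    rcases List.mem_cons.1 hx with rfl | hx
    · exact ha
    · exact h1 _ hx
  have hMs : SAW M := by
    unfold SAW; rw [hM, pts, List.nodup_cons, one_mul]; exact ⟨h3, h5⟩
  have hMP : ∀ z ∈ pts 1 M, U1.prod * z ∈ pts 1 (U1 ++ U2) → z = 1 ∨ z = M.prod := by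
    intro z hz hz'
    rw [hM, pts, List.mem_cons, one_mul] at hz
    rcases hz with hz | hz
    · exact Or.inl hz
    · right; rw [h6 z hz hz', hM]; simp
  have hMl : M.length ≤ R + 1 := by simp [hM]; exact h2
  have hMpt : ∀ z ∈ pts 1 M, ∃ l : List Γ, (∀ x ∈ l, x ∈ T) ∧ l.length ≤ R + 1 ∧ z = l.prod := by
    intro z hz
    obtain ⟨l1, l2, e, e'⟩ := mem_pts.1 hz
    refine ⟨l1, fun x hx => hMT x (by rw [e]; simp [hx]), ?_, by simpa using e'⟩
    have := congrArg List.length e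
    rw [List.length_append] at this; omega
  have hMe : U1.prod * M.prod ∈ pts 1 (U1 ++ U2) := by rw [hM]; simpa using h4
  obtain ⟨Z1, Z2, e, e'⟩ := mem_pts.1 hMe
  rw [one_mul] at e'
  rcases List.append_eq_append_iff.1 e with ⟨K, rfl, rfl⟩ | ⟨K, rfl, rfl⟩
  · -- forward detour
    have hKM : M.prod = K.prod := by simpa using e'
    refine ⟨U1 ++ (M ++ Z2), ?_, ?_, ?_, ?_, ?_, ?_⟩
    · intro x hx
      simp only [List.mem_append] at hx hU
      rcases hx with hx | hx | hx
      · exact hU _ (by tauto)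
      · exact hMT _ hx
      · exact hU _ (by tauto)
    · left; simp [hM]
    · simp only [List.length_append]; omega
    · simp [hKM]
    · refine replace h hMs hKM ?_
      intro z hz hz'
      rcases hMP z hz hz' with rfl | rfl
      · exact start_mem _ _
      · rw [hKM]; simpa using end_mem 1 K
    · intro z hz
      rw [mem_pts_append, mem_pts_append, one_mul] at hz
      rw [mem_pts_append, mem_pts_append, one_mul]
      rcases hz with hz | hz | hz
      · tauto
      · right
        rw [mem_pts_one] at hz
        obtain ⟨l, q1, q2, q3⟩ := hMpt _ hz
        exact ⟨l, q1, q2, by rw [← q3]; simp⟩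
      · rw [hKM] at hz; tauto
  · -- backward detour
    have hKM : (inv M).prod = K.prod := by
      rw [inv_prod]
      rw [List.prod_append, mul_assoc] at e'
      have : K.prod * M.prod = 1 := by simpa using e'
      rw [eq_comm, ← mul_eq_one_iff_eq_inv]; exact this
    have hpt : ∀ z ∈ pts 1 (inv M), ∃ y ∈ pts 1 M, z = K.prod * y := by
      intro z hz
      have q := pts_inv K.prod M
      have : K.prod * M.prod = 1 := by rw [← hKM, inv_prod]; simp
      rw [this] at q
      rw [q, List.mem_reverse, mem_pts_one] at hz
      exact ⟨_, hz, by simp⟩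
    refine ⟨Z1 ++ (inv M ++ U2), ?_, ?_, ?_, ?_, ?_, ?_⟩
    · intro x hx
      simp only [List.mem_append] at hx hU
      rcases hx with hx | hx | hx
      · exact hU _ (by tauto)
      · exact inv_mem hT hMT _ hx
      · exact hU _ (by tauto)
    · right; simp [hM, inv]
    · have : (inv M).length = M.length := by simp [inv]
      simp only [List.length_append]; omega
    · simp [hKM]
    · have h' : SAW (Z1 ++ (K ++ U2)) := by rw [← List.append_assoc]; exact h
      refine replace h' (saw_inv hMs) hKM ?_
      intro z hz hz'
      obtain ⟨y, hy, rfl⟩ := hpt z hz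
      have : y = 1 ∨ y = M.prod := by
        apply hMP y hy
        rw [List.append_assoc]
        simpa [mul_assoc] using hz'
      rcases this with rfl | rfl
      · simpa using end_mem 1 K
      · rw [← hKM, inv_prod]; simpa using start_mem 1 K
    · intro z hz
      rw [mem_pts_append, mem_pts_append, one_mul] at hz
      rw [List.append_assoc, mem_pts_append, mem_pts_append, one_mul]
      rcases hz with hz | hz | hz
      · tauto
      · right
        rw [mem_pts_one] at hz
        obtain ⟨y, hy, e2⟩ := hpt _ hz
        obtain ⟨l, q1, q2, q3⟩ := hMpt _ hy
        refine ⟨l, q1, q2, ?_⟩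
        rw [← q3, List.prod_append, mul_assoc, ← e2]; simp
      · rw [hKM] at hz; tauto

/-- sequences of given length with entries in a finset -/
noncomputable def seqs {α : Type*} (A : Finset α) : ℕ → Finset (List α)
  | 0 => {[]}
  | (n + 1) => (A ×ˢ seqs A n).image (fun p => p.1 :: p.2)

lemma mem_seqs {α : Type*} {A : Finset α} {n : ℕ} {L : List α} :
    L ∈ seqs A n ↔ L.length = n ∧ ∀ a ∈ L, a ∈ A := by
  induction n generalizing L with
  | zero =>
    simp only [seqs, Finset.mem_singleton, List.length_eq_zero_iff]
    constructor
    · rintro rfl; simp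
    · exact fun h => h.1
  | succ n ih =>
    simp only [seqs, Finset.mem_image, Finset.mem_product, Prod.exists, ih]
    constructor
    · rintro ⟨a, l, ⟨h1, h2, h3⟩, rfl⟩
      simp only [List.length_cons, h2, List.mem_cons, forall_eq_or_imp, true_and]
      exact ⟨h1, h3⟩
    · rintro ⟨h1, h2⟩
      cases L with
      | nil => simp at h1
      | cons a l =>
        exact ⟨a, l, ⟨h2 a (by simp), by simpa using h1, fun x hx => h2 x (by simp [hx])⟩, rfl⟩

lemma sum_seqs_succ {α : Type*} (A : Finset α) (n : ℕ) (f : List α → ℝ) :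
    ∑ L ∈ seqs A (n + 1), f L = ∑ a ∈ A, ∑ L ∈ seqs A n, f (a :: L) := by
  rw [seqs, Finset.sum_image, Finset.sum_product]
  rintro ⟨a, l⟩ _ ⟨b, m⟩ _ h
  simpa using h

/-- number of flags -/
def fl {α : Type*} : List (α × Bool) → ℕ
  | [] => 0
  | (a :: L) => (if a.2 then 1 else 0) + fl L

/-- output block -/
def piece {β : Type*} (md : List β → List β) (a : List β × Bool) : List β :=
  if a.2 then md a.1 else a.1

/-- output word -/
def out {β : Type*} (md : List β → List β) : List (List β × Bool) → List β
  | [] => []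
  | (a :: L) => piece md a ++ out md L

noncomputable def Wt {β : Type*} (md : List β → List β) (I : Finset (List β × Bool)) (y : ℝ) (q : ℕ)
    (r : List β) : ℝ :=
  ∑ L ∈ seqs I q, if out md L = r then y ^ fl L else 0

lemma Wt_nonneg {β : Type*} (md : List β → List β) (I : Finset (List β × Bool)) {y : ℝ}
    (hy : 0 ≤ y) (q : ℕ) (r : List β) : 0 ≤ Wt md I y q r := by
  unfold Wt
  apply Finset.sum_nonneg
  intro L _
  split_ifs <;> positivity

lemma Wt_succ {β : Type*} (md : List β → List β) (I : Finset (List β × Bool)) (y : ℝ) (q : ℕ)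
    (r : List β) : Wt md I y (q + 1) r = ∑ a ∈ I, if piece md a <+: r then
      y ^ (if a.2 then 1 else 0) * Wt md I y q (r.drop (piece md a).length) else 0 := by
  unfold Wt
  rw [sum_seqs_succ]
  refine Finset.sum_congr rfl fun a _ => ?_
  by_cases h : piece md a <+: r
  · rw [if_pos h]
    obtain ⟨t, rfl⟩ := h
    rw [Finset.mul_sum]
    refine Finset.sum_congr rfl fun L _ => ?_
    simp only [out, fl, List.append_cancel_left_eq, List.drop_left, pow_add, mul_ite, mul_zero]
  · rw [if_neg h]
    apply Finset.sum_eq_zero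
    intro L _
    rw [if_neg]
    intro h'
    exact h ⟨_, h'⟩

lemma Wt_bound {β : Type*} (md : List β → List β) (I : Finset (List β × Bool)) {y : ℝ}
    (hy : 0 ≤ y) (New : β → Prop) {m M : ℕ} (hm : 1 ≤ m)
    (h1 : ∀ a ∈ I, a.1.length = m ∧ ∀ x ∈ a.1, ¬ New x)
    (h2 : ∀ a ∈ I, a.2 = true → (∃ x ∈ md a.1, New x) ∧ (md a.1).length ≤ M)
    (hK : (M : ℝ) * (y * I.card) ≤ 1) (q : ℕ) :
    ∀ r, Wt md I y q r ≤ 1 ∧ ∀ r1 x r2, r = r1 ++ x :: r2 → New x →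
      Wt md I y q r ≤ (r1.length + 1) * (y * I.card) := by
  have hyK : 0 ≤ y * I.card := by positivity
  induction q with
  | zero =>
    intro r
    constructor
    · simp only [Wt, seqs, Finset.sum_singleton, fl, pow_zero]
      split_ifs <;> norm_num
    · rintro r1 x r2 rfl _
      simp only [Wt, seqs, Finset.sum_singleton, fl, pow_zero, out]
      rw [if_neg (by simp)]
      positivity
  | succ q ih =>
    intro r
    -- split
    have split : Wt md I y (q + 1) r ≤
        (∑ a ∈ I.filter (fun a => a.2 = false), if a.1 <+: r then
          Wt md I y q (r.drop m) else 0) +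
        ∑ a ∈ I.filter (fun a => ¬ a.2 = false), (if md a.1 <+: r then y else 0) := by
      rw [Wt_succ, ← Finset.sum_filter_add_sum_filter_not I (fun a => a.2 = false)]
      apply add_le_add
      · apply Finset.sum_le_sum
        intro a ha
        rw [Finset.mem_filter] at ha
        simp only [piece, ha.2]
        simp [(h1 a ha.1).1]
      · apply Finset.sum_le_sum
        intro a ha
        rw [Finset.mem_filter, Bool.not_eq_false] at ha
        simp only [piece, ha.2, if_true, pow_one]
        split_ifs
        · exact mul_le_of_le_one_right hy (ih _).1
        · exact le_rfl
    have sA : (∑ a ∈ I.filter (fun a => a.2 = false), if a.1 <+: r then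
          Wt md I y q (r.drop m) else 0) ≤ Wt md I y q (r.drop m) := by
      rw [← Finset.sum_filter, Finset.sum_const, nsmul_eq_mul]
      have : ((I.filter (fun a => a.2 = false)).filter (fun a => a.1 <+: r)).card ≤ 1 := by
        rw [Finset.card_le_one]
        intro a ha b hb
        simp only [Finset.mem_filter] at ha hb
        have e1 := List.prefix_iff_eq_take.1 ha.2
        have e2 := List.prefix_iff_eq_take.1 hb.2
        rw [(h1 a ha.1.1).1] at e1
        rw [(h1 b hb.1.1).1] at e2
        exact Prod.ext (e1.trans e2.symm) (ha.1.2.trans hb.1.2.symm)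
      have h' : ((((I.filter (fun a => a.2 = false)).filter (fun a => a.1 <+: r)).card : ℕ) : ℝ)
          ≤ 1 := by exact_mod_cast this
      exact mul_le_of_le_one_left (Wt_nonneg _ _ hy _ _) h'
    have sB : (∑ a ∈ I.filter (fun a => ¬ a.2 = false), (if md a.1 <+: r then y else 0))
        ≤ y * I.card := by
      calc _ ≤ ∑ a ∈ I.filter (fun a => ¬ a.2 = false), y := by
            apply Finset.sum_le_sum; intro a _; split_ifs
            · exact le_rfl
            · exact hy
        _ = (I.filter (fun a => ¬ a.2 = false)).card * y := by simp
        _ ≤ I.card * y := by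
            apply mul_le_mul_of_nonneg_right _ hy
            exact_mod_cast Finset.card_filter_le _ _
        _ = _ := mul_comm _ _
    have part2 : ∀ r1 x r2, r = r1 ++ x :: r2 → New x →
      Wt md I y (q + 1) r ≤ (r1.length + 1) * (y * I.card) := by
      intro r1 x r2 hr hx
      by_cases hp : m ≤ r1.length
      · have := (ih (r.drop m)).2 (r1.drop m) x r2
          (by rw [hr, List.drop_append_of_le_length hp]) hx
        rw [List.length_drop, Nat.cast_sub hp] at this
        have hm' : (1 : ℝ) ≤ m := by exact_mod_cast hm
        nlinarith
      · have s0 : (∑ a ∈ I.filter (fun a => a.2 = false), if a.1 <+: r then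
          Wt md I y q (r.drop m) else 0) = 0 := by
          apply Finset.sum_eq_zero
          intro a ha
          rw [Finset.mem_filter] at ha
          rw [if_neg]
          intro hpre
          have e1 := List.prefix_iff_eq_take.1 hpre
          rw [(h1 a ha.1).1] at e1
          refine (h1 a ha.1).2 x ?_ hx
          rw [e1, hr]
          obtain ⟨j, hj⟩ : ∃ j, m - r1.length = j + 1 := ⟨m - r1.length - 1, by omega⟩
          rw [List.take_append, hj]
          simp
        have : (0 : ℝ) ≤ r1.length := by positivity
        nlinarith
    refine ⟨?_, part2⟩
    by_cases hN : ∃ r1 x r2, r = r1 ++ x :: r2 ∧ New x ∧ r1.length < M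
    · obtain ⟨r1, x, r2, e, hx, hl⟩ := hN
      refine (part2 r1 x r2 e hx).trans (le_trans ?_ hK)
      apply mul_le_mul_of_nonneg_right _ hyK
      exact_mod_cast hl
    · have s0 : (∑ a ∈ I.filter (fun a => ¬ a.2 = false), (if md a.1 <+: r then y else 0)) = 0 := by
        apply Finset.sum_eq_zero
        intro a ha
        rw [Finset.mem_filter, Bool.not_eq_false] at ha
        rw [if_neg]
        rintro ⟨t, ht⟩
        obtain ⟨⟨x, hx, hx'⟩, hl⟩ := h2 a ha.1 ha.2
        obtain ⟨u, v, e⟩ := List.append_of_mem hx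
        apply hN
        refine ⟨u, x, v ++ t, by rw [← ht, e]; simp, hx', ?_⟩
        have := congrArg List.length e
        simp at this
        omega
      have := (ih (r.drop m)).1
      linarith

lemma sum_flags {β : Type*} (B : Finset (List β)) (Tp : List β → Prop) (t : ℝ) (q : ℕ)
    (f : List (List β) → ℝ) :
    ∑ L ∈ seqs ((B ×ˢ ({false, true} : Finset Bool)).filter (fun a => a.2 = true → Tp a.1)) q,
      f (L.map Prod.fst) * t ^ fl L =
    ∑ p ∈ seqs B q, f p * (1 + t) ^ (p.countP (fun U => Tp U)) := by
  induction q generalizing f with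
  | zero => simp [seqs, fl]
  | succ q ih =>
    rw [sum_seqs_succ, sum_seqs_succ, Finset.sum_filter, Finset.sum_product]
    refine Finset.sum_congr rfl fun U _ => ?_
    rw [Finset.sum_pair (by simp)]
    simp only [List.map_cons, fl, Bool.false_eq_true, if_false, if_true, zero_add, false_imp_iff,
      true_imp_iff, List.countP_cons, pow_add, pow_one]
    rw [ih (fun p => f (U :: p))]
    by_cases h : Tp U
    · have : ∀ L : List (List β × Bool), f (U :: L.map Prod.fst) * (t * t ^ fl L) =
        (t * f (U :: L.map Prod.fst)) * t ^ fl L := fun L => by ring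
      simp only [this, h, if_true, decide_true]
      rw [ih (fun p => t * f (U :: p)), ← Finset.sum_add_distrib]
      refine Finset.sum_congr rfl fun p _ => ?_
      ring
    · simp [h]


section bridge

/-- word of a walk -/
def toWord {S : Set Γ} : ∀ {u v : Γ}, (cayleyGraph S).Walk u v → List Γ
  | _, _, .nil => []
  | _, _, @SimpleGraph.Walk.cons _ _ u v _ _ p => (u⁻¹ * v) :: toWord p

lemma support_toWord {S : Set Γ} {u v : Γ} (p : (cayleyGraph S).Walk u v) :
    p.support = pts u (toWord p) := by
  induction p with
  | nil => simp [toWord, pts]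
  | cons h p ih => simp [toWord, pts, ih]

lemma length_toWord {S : Set Γ} {u v : Γ} (p : (cayleyGraph S).Walk u v) :
    (toWord p).length = p.length := by
  induction p with
  | nil => simp [toWord]
  | cons h p ih => simp [toWord, ih]

lemma adj_iff {S : Finset Γ} (hS : ∀ s ∈ S, s⁻¹ ∈ S) {u v : Γ} :
    (cayleyGraph (S : Set Γ)).Adj u v ↔ u ≠ v ∧ u⁻¹ * v ∈ S := by
  simp only [cayleyGraph, SimpleGraph.fromRel_adj, Finset.mem_coe]
  constructor
  · rintro ⟨h, h1 | h1⟩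
    · exact ⟨h, h1⟩
    · exact ⟨h, by simpa using hS _ h1⟩
  · rintro ⟨h, h1⟩
    exact ⟨h, Or.inl h1⟩

lemma mem_toWord {S : Finset Γ} (hS : ∀ s ∈ S, s⁻¹ ∈ S) {u v : Γ}
    (p : (cayleyGraph (S : Set Γ)).Walk u v) : ∀ x ∈ toWord p, x ∈ S := by
  induction p with
  | nil => simp [toWord]
  | cons h p ih =>
    simp only [toWord, List.mem_cons, forall_eq_or_imp]
    exact ⟨((adj_iff hS).1 h).2, ih⟩

lemma toWord_inj {S : Set Γ} {u v v' : Γ} (p : (cayleyGraph S).Walk u v)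
    (p' : (cayleyGraph S).Walk u v') (h : toWord p = toWord p') :
    (⟨v, p⟩ : Σ w : Γ, (cayleyGraph S).Walk u w) = ⟨v', p'⟩ := by
  induction p generalizing v' with
  | nil =>
    cases p' with
    | nil => rfl
    | cons h' p' => simp [toWord] at h
  | @cons a b c hab p ih =>
    cases p' with
    | nil => simp [toWord] at h
    | @cons _ b' _ h' p' =>
      simp only [toWord, List.cons.injEq, mul_right_inj] at h
      obtain ⟨rfl, h⟩ := h
      have := ih p' h
      cases this
      rfl

lemma toWord_surj {S : Finset Γ} (hS : ∀ s ∈ S, s⁻¹ ∈ S) (h1 : (1 : Γ) ∉ S) (l : List Γ)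
    (hl : ∀ x ∈ l, x ∈ S) (u : Γ) :
    ∃ v, ∃ p : (cayleyGraph (S : Set Γ)).Walk u v, toWord p = l := by
  induction l generalizing u with
  | nil => exact ⟨u, .nil, rfl⟩
  | cons s l ih =>
    obtain ⟨v, p, hp⟩ := ih (fun x hx => hl x (by simp [hx])) (u * s)
    have hs := hl s (by simp)
    have : (cayleyGraph (S : Set Γ)).Adj u (u * s) := by
      rw [adj_iff hS]
      refine ⟨?_, by simpa using hs⟩
      intro h
      have : s = 1 := by simpa using h
      exact h1 (this ▸ hs)
    exact ⟨v, .cons this p, by simp [toWord, hp]⟩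

/-- SAW words -/
noncomputable def sawF (S : Finset Γ) (n : ℕ) : Finset (List Γ) := (seqs S n).filter SAW

lemma mem_sawF {S : Finset Γ} {n : ℕ} {l : List Γ} :
    l ∈ sawF S n ↔ l.length = n ∧ (∀ x ∈ l, x ∈ S) ∧ SAW l := by
  simp [sawF, mem_seqs, and_assoc]

lemma sawCount_eq {S : Finset Γ} (hS : ∀ s ∈ S, s⁻¹ ∈ S) (h1 : (1 : Γ) ∉ S) (n : ℕ) :
    sawCount (cayleyGraph (S : Set Γ)) 1 n = (sawF S n).card := by
  unfold sawCount
  have e : Nat.card {l // l ∈ sawF S n} = (sawF S n).card := by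
    rw [Nat.card_eq_fintype_card, Fintype.card_coe]
  rw [← e]
  refine Nat.card_eq_of_bijective (fun p => ⟨toWord p.1.2, ?_⟩) ⟨?_, ?_⟩
  · rw [mem_sawF]
    refine ⟨by rw [length_toWord]; exact p.2.2, mem_toWord hS _, ?_⟩
    unfold SAW
    rw [← support_toWord]
    exact p.2.1.support_nodup
  · rintro ⟨⟨v, p⟩, hp⟩ ⟨⟨v', p'⟩, hp'⟩ h
    apply Subtype.ext
    exact toWord_inj p p' (by simpa using h)
  · rintro ⟨l, hl⟩
    rw [mem_sawF] at hl
    obtain ⟨v, p, rfl⟩ := toWord_surj hS h1 l hl.2.1 1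
    refine ⟨⟨⟨v, p⟩, ?_, ?_⟩, rfl⟩
    · rw [SimpleGraph.Walk.isPath_def, support_toWord]
      exact hl.2.2
    · rw [← length_toWord]; exact hl.1

end bridge

lemma out_length {md : List Γ → List Γ} {m D : ℕ} (L : List (List Γ × Bool))
    (h : ∀ a ∈ L, a.1.length = m ∧ (a.2 = true → (md a.1).length ≤ m + D)) :
    (out md L).length ≤ m * L.length + D * fl L := by
  induction L with
  | nil => simp [out]
  | cons a L ih =>
    have h1 := ih (fun b hb => h b (by simp [hb]))
    obtain ⟨h2, h3⟩ := h a (by simp)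
    simp only [out, piece, List.length_append, List.length_cons, fl]
    by_cases ha : a.2 = true
    · have := h3 ha
      simp only [ha, if_true]
      nlinarith
    · simp only [ha]
      simp
      nlinarith

lemma fl_le {α : Type*} (L : List (α × Bool)) : fl L ≤ L.length := by
  induction L with
  | nil => simp [fl]
  | cons a L ih =>
    simp only [fl, List.length_cons]
    split_ifs <;> omega

lemma out_mem {md : List Γ → List Γ} {T : Finset Γ} (L : List (List Γ × Bool))
    (h : ∀ a ∈ L, (∀ x ∈ a.1, x ∈ T) ∧ (a.2 = true → ∀ x ∈ md a.1, x ∈ T)) :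
    ∀ x ∈ out md L, x ∈ T := by
  induction L with
  | nil => simp [out]
  | cons a L ih =>
    have h1 := ih (fun b hb => h b (by simp [hb]))
    obtain ⟨h2, h3⟩ := h a (by simp)
    intro x hx
    simp only [out, piece, List.mem_append] at hx
    rcases hx with hx | hx
    · split_ifs at hx with ha
      · exact h3 ha x hx
      · exact h2 x hx
    · exact h1 x hx

lemma main_count {S T : Finset Γ} (hST : S ⊆ T) (md : List Γ → List Γ) (Tp : List Γ → Prop)
    {m D q : ℕ} (hm : 1 ≤ m) (A : Finset (List (List Γ))) (hA : A ⊆ seqs (sawF S m) q)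
    (hmd : ∀ U ∈ sawF S m, Tp U → (∃ x ∈ md U, x ∉ S) ∧ (md U).length ≤ m + D ∧
      ∀ x ∈ md U, x ∈ T)
    (valid : ∀ L : List (List Γ × Bool), (∀ a ∈ L, a.1 ∈ sawF S m ∧ (a.2 = true → Tp a.1)) →
      L.map Prod.fst ∈ A → SAW (out md L))
    {y z : ℝ} (hy : 0 ≤ y) (hz : 0 < z) (hz1 : z ≤ 1)
    (hK : ((m + D : ℕ) : ℝ) * (y * (2 * (sawF S m).card)) ≤ 1) :
    ∑ p ∈ A, (1 + y * z ^ D) ^ (p.countP (fun U => Tp U)) * z ^ (m * q) ≤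
      ∑ j ∈ Finset.range ((m + D) * q + 1), ((sawF T j).card : ℝ) * z ^ j := by
  set I := ((sawF S m) ×ˢ ({false, true} : Finset Bool)).filter (fun a => a.2 = true → Tp a.1)
    with hI
  have memI : ∀ a, a ∈ I ↔ a.1 ∈ sawF S m ∧ (a.2 = true → Tp a.1) := by
    intro a
    rw [hI, Finset.mem_filter, Finset.mem_product]
    simp
  have hIc : (I.card : ℝ) ≤ 2 * (sawF S m).card := by
    have h1 : I.card ≤ _ := Finset.card_filter_le _ _
    rw [Finset.card_product] at h1
    have h2 : ({false, true} : Finset Bool).card = 2 := rfl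
    rw [h2] at h1
    have : (I.card : ℝ) ≤ (((sawF S m).card * 2 : ℕ) : ℝ) := by exact_mod_cast h1
    push_cast at this
    linarith
  have hK' : ((m + D : ℕ) : ℝ) * (y * I.card) ≤ 1 := by
    refine le_trans ?_ hK
    gcongr
  have hW := Wt_bound md I hy (fun x => x ∉ S) hm (M := m + D)
    (by
      intro a ha
      have := mem_sawF.1 ((memI a).1 ha).1
      exact ⟨this.1, fun x hx => not_not.2 (this.2.1 x hx)⟩)
    (by
      intro a ha hf
      obtain ⟨h1, h2⟩ := (memI a).1 ha
      obtain ⟨h3, h4, h5⟩ := hmd _ h1 (h2 hf)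
      exact ⟨h3, h4⟩) hK' q
  have e1 : ∑ p ∈ A, (1 + y * z ^ D) ^ (p.countP (fun U => Tp U)) * z ^ (m * q) =
      ∑ p ∈ seqs (sawF S m) q, (if p ∈ A then z ^ (m * q) else 0) *
        (1 + y * z ^ D) ^ (p.countP (fun U => Tp U)) := by
    simp only [ite_mul, zero_mul]
    rw [← Finset.sum_filter, Finset.filter_mem_eq_inter, Finset.inter_eq_right.2 hA]
    exact Finset.sum_congr rfl fun p _ => mul_comm _ _
  rw [e1, ← sum_flags (sawF S m) Tp (y * z ^ D) q (fun p => if p ∈ A then z ^ (m * q) else 0)]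
  rw [← hI]
  calc _ ≤ ∑ L ∈ seqs I q, ∑ j ∈ Finset.range ((m + D) * q + 1), ∑ r ∈ sawF T j,
        (if out md L = r then y ^ fl L else 0) * z ^ j := by
        apply Finset.sum_le_sum
        intro L hL
        rw [mem_seqs] at hL
        have nn : ∀ j ∈ Finset.range ((m + D) * q + 1), ∀ r ∈ sawF T j,
            0 ≤ (if out md L = r then y ^ fl L else 0) * z ^ j := by
          intro j _ r _
          split_ifs <;> positivity
        split_ifs with hLA
        · have hs := valid L (fun a ha => (memI a).1 (hL.2 a ha)) hLA
          have hlen := out_length (md := md) (m := m) (D := D) L (by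
            intro a ha
            have h := (memI a).1 (hL.2 a ha)
            exact ⟨(mem_sawF.1 h.1).1, fun hf => (hmd _ h.1 (h.2 hf)).2.1⟩)
          have hmem := out_mem (md := md) (T := T) L (by
            intro a ha
            have h := (memI a).1 (hL.2 a ha)
            exact ⟨fun x hx => hST ((mem_sawF.1 h.1).2.1 x hx),
              fun hf => (hmd _ h.1 (h.2 hf)).2.2⟩)
          have hfl := fl_le L
          rw [hL.1] at hlen hfl
          have hj : (out md L).length ∈ Finset.range ((m + D) * q + 1) := by
            rw [Finset.mem_range]
            nlinarith
          have hr : out md L ∈ sawF T (out md L).length := mem_sawF.2 ⟨rfl, hmem, hs⟩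
          calc z ^ (m * q) * (y * z ^ D) ^ fl L = y ^ fl L * z ^ (m * q + D * fl L) := by
                rw [mul_pow, ← pow_mul, pow_add]; ring
            _ ≤ y ^ fl L * z ^ (out md L).length := by
                apply mul_le_mul_of_nonneg_left _ (by positivity)
                exact pow_le_pow_of_le_one hz.le hz1 hlen
            _ = (if out md L = out md L then y ^ fl L else 0) * z ^ (out md L).length := by simp
            _ ≤ ∑ r ∈ sawF T (out md L).length,
                (if out md L = r then y ^ fl L else 0) * z ^ (out md L).length :=
                Finset.single_le_sum (f := fun r =>
                  (if out md L = r then y ^ fl L else 0) * z ^ (out md L).length) (nn _ hj) hr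
            _ ≤ _ := Finset.single_le_sum (f := fun j => ∑ r ∈ sawF T j,
                (if out md L = r then y ^ fl L else 0) * z ^ j)
                (fun j hj => Finset.sum_nonneg (nn j hj)) hj
        · rw [zero_mul]
          exact Finset.sum_nonneg fun j hj => Finset.sum_nonneg (nn j hj)
    _ = ∑ j ∈ Finset.range ((m + D) * q + 1), ∑ r ∈ sawF T j, Wt md I y q r * z ^ j := by
        rw [Finset.sum_comm]
        refine Finset.sum_congr rfl fun j _ => ?_
        rw [Finset.sum_comm]
        refine Finset.sum_congr rfl fun r _ => ?_
        rw [Wt, Finset.sum_mul]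
    _ ≤ _ := by
        apply Finset.sum_le_sum
        intro j _
        rw [← Finset.sum_mul]
        apply mul_le_mul_of_nonneg_right _ (by positivity)
        calc _ ≤ ∑ r ∈ sawF T j, (1 : ℝ) := Finset.sum_le_sum fun r _ => (hW r).1
          _ = _ := by simp

lemma saw_prod_one {l : List Γ} (h : SAW l) (h1 : l.prod = 1) : l = [] := by
  cases l with
  | nil => rfl
  | cons a l =>
    exfalso
    unfold SAW at h
    rw [pts, List.nodup_cons, one_mul] at h
    apply h.1
    rw [← h1, List.prod_cons]
    exact end_mem _ _

/-- number of points near `v` -/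
noncomputable def Ng (B : Finset Γ) (U : List Γ) (v : Γ) : ℕ :=
  ((pts 1 U).toFinset.filter (fun x => v⁻¹ * x ∈ B)).card

def kgood (B : Finset Γ) (k : ℕ) (U : List Γ) : Prop :=
  ∃ U1 U2, U = U1 ++ U2 ∧ U1 ≠ [] ∧ U2 ≠ [] ∧ k ≤ Ng B U U1.prod

lemma Ng_image_sub (B : Finset Γ) (X U Y : List Γ) (v : Γ) :
    ((pts 1 U).toFinset.filter (fun x => v⁻¹ * x ∈ B)).image (fun x => X.prod * x) ⊆
    (pts 1 (X ++ (U ++ Y))).toFinset.filter (fun x => (X.prod * v)⁻¹ * x ∈ B) := by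
  intro z hz
  simp only [Finset.mem_image, Finset.mem_filter, List.mem_toFinset] at hz ⊢
  obtain ⟨x, ⟨h1, h2⟩, rfl⟩ := hz
  refine ⟨?_, by simpa [mul_assoc] using h2⟩
  rw [mem_pts_append, mem_pts_append, one_mul]
  right; left
  rw [mem_pts_one]; simpa using h1

lemma Ng_mono (B : Finset Γ) (X U Y : List Γ) (v : Γ) :
    Ng B U v ≤ Ng B (X ++ (U ++ Y)) (X.prod * v) := by
  unfold Ng
  rw [← Finset.card_image_of_injective _ (mul_right_injective X.prod)]
  exact Finset.card_le_card (Ng_image_sub B X U Y v)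

lemma kgood_infix {B : Finset Γ} {k : ℕ} {U : List Γ} (X Y : List Γ) (h : kgood B k U) :
    kgood B k (X ++ (U ++ Y)) := by
  obtain ⟨U1, U2, rfl, h1, h2, h3⟩ := h
  refine ⟨X ++ U1, U2 ++ Y, by simp, by simp [h1], by simp [h2], h3.trans ?_⟩
  rw [List.prod_append]
  exact Ng_mono _ _ _ _ _

lemma locB {B : Finset Γ} {k : ℕ} {X U1 U2 Y : List Γ} (h1 : U1 ≠ []) (h2 : U2 ≠ [])
    (h3 : k ≤ Ng B (U1 ++ U2) U1.prod) (h4 : ¬ kgood B (k + 1) (X ++ ((U1 ++ U2) ++ Y))) :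
    ∀ z ∈ pts 1 (X ++ ((U1 ++ U2) ++ Y)), (X.prod * U1.prod)⁻¹ * z ∈ B →
      X.prod⁻¹ * z ∈ pts 1 (U1 ++ U2) := by
  intro z hz hz'
  have h5 : Ng B (X ++ ((U1 ++ U2) ++ Y)) (X.prod * U1.prod) ≤ k := by
    by_contra hc
    apply h4
    refine ⟨X ++ U1, U2 ++ Y, by simp, by simp [h1], by simp [h2], ?_⟩
    rw [List.prod_append]; omega
  have h6 := Finset.eq_of_subset_of_card_le (Ng_image_sub B X (U1 ++ U2) Y U1.prod) (by
    rw [Finset.card_image_of_injective _ (mul_right_injective X.prod)]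
    exact h5.trans h3)
  have h7 : z ∈ (pts 1 (X ++ ((U1 ++ U2) ++ Y))).toFinset.filter
      (fun x => (X.prod * U1.prod)⁻¹ * x ∈ B) := by
    rw [Finset.mem_filter, List.mem_toFinset]; exact ⟨hz, hz'⟩
  rw [← h6, Finset.mem_image] at h7
  obtain ⟨x, hx, rfl⟩ := h7
  rw [Finset.mem_filter, List.mem_toFinset] at hx
  simpa using hx.1

/-- underlying word -/
def flat {β : Type*} (L : List (List β × Bool)) : List β := (L.map Prod.fst).flatten

lemma flat_cons {β : Type*} (a : List β × Bool) (L : List (List β × Bool)) :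
    flat (a :: L) = a.1 ++ flat L := by simp [flat]

lemma flat_append {β : Type*} (K L : List (List β × Bool)) :
    flat (K ++ L) = flat K ++ flat L := by simp [flat]

/-- flagged blocks with their starting points -/
def marks : Γ → List (List Γ × Bool) → List (Γ × List Γ)
  | _, [] => []
  | x, (a :: L) => if a.2 then (x, a.1) :: marks (x * a.1.prod) L else marks (x * a.1.prod) L

lemma mem_marks {x : Γ} {L : List (List Γ × Bool)} {k : Γ × List Γ} (h : k ∈ marks x L) :
    ∃ L1 L2, L = L1 ++ (k.2, true) :: L2 ∧ k.1 = x * (flat L1).prod := by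
  induction L generalizing x with
  | nil => simp [marks] at h
  | cons a L ih =>
    obtain ⟨U, b⟩ := a
    have key : k ∈ marks (x * U.prod) L →
        ∃ L1 L2, (U, b) :: L = L1 ++ (k.2, true) :: L2 ∧ k.1 = x * (flat L1).prod := by
      intro h
      obtain ⟨L1, L2, rfl, e⟩ := ih h
      exact ⟨(U, b) :: L1, L2, by simp, by rw [e, flat_cons]; simp [mul_assoc]⟩
    cases b with
    | false => exact key (by simpa [marks] using h)
    | true =>
      simp only [marks, if_true, List.mem_cons] at h
      rcases h with rfl | h
      · exact ⟨[], L, by simp, by simp [flat]⟩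
      · exact key h

lemma valid2_aux {E : Finset Γ} {v : List Γ → Γ} {md : List Γ → List Γ}
    (L : List (List Γ × Bool)) (X : List Γ)
    (hmd : ∀ a ∈ L, a.2 = true → (md a.1).prod = a.1.prod ∧ SAW (md a.1) ∧
      ∀ z ∈ pts 1 (md a.1), z ∈ pts 1 a.1 ∨ (v a.1)⁻¹ * z ∈ E)
    (hs : SAW (X ++ flat L))
    (loc : ∀ k ∈ marks X.prod L, ∀ z ∈ pts 1 (X ++ flat L), (k.1 * v k.2)⁻¹ * z ∈ E →
      k.1⁻¹ * z ∈ pts 1 k.2)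
    (disj : (marks X.prod L).Pairwise (fun k k' => ∀ g, (k.1 * v k.2)⁻¹ * g ∈ E →
      (k'.1 * v k'.2)⁻¹ * g ∉ E)) : SAW (X ++ out md L) := by
  induction L generalizing X with
  | nil => simpa [flat, out] using hs
  | cons a L ih =>
    obtain ⟨U, b⟩ := a
    rw [flat_cons] at hs loc
    cases b with
    | false =>
      simp only [marks] at loc disj
      have := ih (X ++ U) (fun c hc => hmd c (by simp [hc])) (by simpa using hs)
        (by simpa using loc) (by simpa using disj)
      simpa [out, piece] using this
    | true =>
      simp only [marks, if_true, List.pairwise_cons, List.mem_cons, forall_eq_or_imp] at loc disj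
      obtain ⟨p1, p2, p3⟩ := hmd (U, true) (by simp) rfl
      simp only at p1 p2 p3
      have hs' : SAW (X ++ (md U ++ flat L)) := by
        refine replace hs p2 p1 ?_
        intro z hz hz'
        rcases p3 z hz with h | h
        · exact h
        · have := loc.1 _ hz' (by simpa [mul_assoc] using h)
          simpa using this
      have := ih (X ++ md U) (fun c hc => hmd c (by simp [hc])) (by simpa using hs') (by
        intro k hk z hz hzE
        rw [List.prod_append, p1] at hk
        rw [List.append_assoc, mem_pts_append, mem_pts_append, one_mul, p1] at hz
        by_cases hold : z ∈ pts 1 (X ++ (U ++ flat L))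
        · exact loc.2 k hk z hold hzE
        · exfalso
          rw [mem_pts_append, mem_pts_append, one_mul] at hold
          have hz2 : z ∈ pts X.prod (md U) := by tauto
          rw [mem_pts_one] at hz2
          rcases p3 _ hz2 with h | h
          · rw [← mem_pts_one] at h; tauto
          · exact disj.1 k hk z (by simpa [mul_assoc] using h) hzE)
        (by rw [List.prod_append, p1]; exact disj.2)
      simpa [out, piece] using this

lemma disj_aux {E B : Finset Γ} {v : List Γ → Γ} (hEB : ∀ e ∈ E, ∀ e' ∈ E, e * e'⁻¹ ∈ B)
    (L : List (List Γ × Bool)) (X : List Γ)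
    (hv : ∀ a ∈ L, a.2 = true → ∃ U1 U2, a.1 = U1 ++ U2 ∧ U2 ≠ [] ∧ v a.1 = U1.prod)
    (hs : SAW (X ++ flat L))
    (loc : ∀ k ∈ marks X.prod L, ∀ z ∈ pts 1 (X ++ flat L), (k.1 * v k.2)⁻¹ * z ∈ B →
      k.1⁻¹ * z ∈ pts 1 k.2) :
    (marks X.prod L).Pairwise (fun k k' => ∀ g, (k.1 * v k.2)⁻¹ * g ∈ E →
      (k'.1 * v k'.2)⁻¹ * g ∉ E) := by
  induction L generalizing X with
  | nil => simp [marks]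
  | cons a L ih =>
    obtain ⟨U, b⟩ := a
    rw [flat_cons] at hs loc
    have loc' : ∀ k ∈ marks (X ++ U).prod L, ∀ z ∈ pts 1 ((X ++ U) ++ flat L),
        (k.1 * v k.2)⁻¹ * z ∈ B → k.1⁻¹ * z ∈ pts 1 k.2 := by
      intro k hk
      rw [List.append_assoc]
      apply loc
      rw [List.prod_append] at hk
      simp only [marks]
      split_ifs
      · exact List.mem_cons_of_mem _ hk
      · exact hk
    have hrec := ih (X ++ U) (fun c hc => hv c (by simp [hc])) (by simpa using hs) loc'
    cases b with
    | false => simpa [marks] using hrec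
    | true =>
      simp only [marks, if_true, List.pairwise_cons]
      rw [List.prod_append] at hrec
      refine ⟨?_, hrec⟩
      intro k hk g hg hg'
      obtain ⟨U1, U2, e, hU2, hvU⟩ := hv (U, true) (by simp) rfl
      simp only at e hg hvU
      have hcU : X.prod * v U ∈ pts 1 (X ++ U) := by
        rw [hvU, e]
        exact mem_pts.2 ⟨X ++ U1, U2, by simp, by simp⟩
      have hB := hEB _ hg' _ hg
      have hB' : (k.1 * v k.2)⁻¹ * (X.prod * v U) ∈ B := by
        convert hB using 1; group
      have h1 := loc' k (by simpa using hk) _ (by rw [mem_pts_append]; exact Or.inl hcU) hB'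
      rw [← mem_pts_one] at h1
      obtain ⟨L1, L2, eL, ek⟩ := mem_marks hk
      have h2 : X.prod * v U ∈ pts (X ++ U).prod (flat L) := by
        rw [eL, flat_append, flat_cons, mem_pts_append, mem_pts_append, List.prod_append, ← ek]
        exact Or.inr (Or.inl h1)
      rw [← List.append_assoc, saw_append] at hs
      have h3 := hs.2.2 _ hcU h2
      rw [List.prod_append, mul_right_inj, hvU, e, List.prod_append] at h3
      have hU : SAW U := (saw_append.1 hs.1).2.1
      rw [e] at hU
      exact hU2 (saw_prod_one (saw_append.1 hU).2.1 (by simpa using h3))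

lemma valid2 {E B : Finset Γ} {v : List Γ → Γ} {md : List Γ → List Γ} {k : ℕ}
    (hEB : ∀ e ∈ E, ∀ e' ∈ E, e * e'⁻¹ ∈ B) (hEB' : E ⊆ B)
    (L : List (List Γ × Bool))
    (hmd : ∀ a ∈ L, a.2 = true → (md a.1).prod = a.1.prod ∧ SAW (md a.1) ∧
      ∀ z ∈ pts 1 (md a.1), z ∈ pts 1 a.1 ∨ (v a.1)⁻¹ * z ∈ E)
    (hv : ∀ a ∈ L, a.2 = true → ∃ U1 U2, a.1 = U1 ++ U2 ∧ U1 ≠ [] ∧ U2 ≠ [] ∧ v a.1 = U1.prod ∧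
      k ≤ Ng B (U1 ++ U2) U1.prod)
    (hs : SAW (flat L)) (hk : ¬ kgood B (k + 1) (flat L)) : SAW (out md L) := by
  have loc : ∀ k ∈ marks ([] : List Γ).prod L, ∀ z ∈ pts 1 ([] ++ flat L),
      (k.1 * v k.2)⁻¹ * z ∈ B → k.1⁻¹ * z ∈ pts 1 k.2 := by
    intro k' hk' z hz hzB
    obtain ⟨L1, L2, eL, ek⟩ := mem_marks hk'
    rw [List.prod_nil, one_mul] at ek
    obtain ⟨U1, U2, e, h1, h2, h3, h4⟩ := hv (k'.2, true) (by rw [eL]; simp) rfl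
    simp only at e h3
    have ef : flat L = flat L1 ++ ((U1 ++ U2) ++ flat L2) := by
      rw [eL, flat_append, flat_cons, ← e]
    rw [ef] at hk
    rw [List.nil_append, ef] at hz
    rw [h3, ek] at hzB
    rw [ek, e]
    exact locB h1 h2 h4 hk z hz hzB
  have := valid2_aux (E := E) (v := v) (md := md) L [] hmd (by simpa using hs)
    (fun k hk z hz hzE => loc k hk z hz (hEB' hzE))
    (disj_aux hEB L [] (fun a ha hf => by
      obtain ⟨U1, U2, e, h1, h2, h3, h4⟩ := hv a ha hf
      exact ⟨U1, U2, e, h2, h3⟩) (by simpa using hs) loc)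
  simpa using this

lemma valid1 {T : Finset Γ} {w : Γ} (hw : w ≠ 1) (hwT : w ∈ T) {md : List Γ → List Γ}
    (L : List (List Γ × Bool)) (X : List Γ) (hX : ∀ x ∈ X, x ∈ T)
    (hL : ∀ x ∈ flat L, x ∈ T)
    (hmd : ∀ a ∈ L, a.2 = true → ∃ Z s s' Y, a.1 = (Z ++ [s]) ++ (s' :: Y) ∧
      md a.1 = (Z ++ [s]) ++ (w :: s' :: Y) ∧ ¬ conn T w s⁻¹ ∧ ¬ conn T s' w⁻¹)
    (hs : SAW (X ++ flat L)) : SAW (X ++ out md L) := by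
  induction L generalizing X with
  | nil => simpa [flat, out] using hs
  | cons a L ih =>
    obtain ⟨U, b⟩ := a
    rw [flat_cons] at hs hL
    simp only [List.mem_append] at hL
    cases b with
    | false =>
      have := ih (X ++ U) (by
        intro x hx
        rcases List.mem_append.1 hx with hx | hx
        · exact hX x hx
        · exact hL x (Or.inl hx)) (fun x hx => hL x (Or.inr hx))
        (fun c hc => hmd c (by simp [hc])) (by simpa using hs)
      simpa [out, piece] using this
    | true =>
      obtain ⟨Z, s, s', Y, e1, e2, c1, c2⟩ := hmd (U, true) (by simp) rfl
      simp only at e1 e2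
      have hUT : ∀ x ∈ U, x ∈ T := fun x hx => hL x (Or.inl hx)
      have hs2 : SAW (((X ++ Z) ++ [s]) ++ (w :: s' :: (Y ++ flat L))) := by
        apply insert_saw (T := T) _ _ _ hw c1 c2
        · intro x hx
          simp only [List.append_assoc, List.mem_append] at hx
          rcases hx with hx | hx
          · exact hX x hx
          · apply hUT; rw [e1]; simp only [List.mem_append]; tauto
        · intro x hx
          rw [← List.cons_append, List.mem_append] at hx
          rcases hx with hx | hx
          · apply hUT; rw [e1]; simp only [List.mem_append]; tauto
          · exact hL x (Or.inr hx)
        · rw [e1] at hs; simpa using hs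
      have := ih (X ++ md U) (by
        intro x hx
        rcases List.mem_append.1 hx with hx | hx
        · exact hX x hx
        · rw [e2] at hx
          rw [e1] at hUT
          simp only [List.mem_append, List.mem_cons] at hx hUT
          rcases hx with hx | hx | hx | hx
          · exact hUT x (Or.inl hx)
          · rw [hx]; exact hwT
          · exact hUT x (by tauto)
          · exact hUT x (by tauto)) (fun x hx => hL x (Or.inr hx))
        (fun c hc => hmd c (by simp [hc])) (by rw [e2]; simpa using hs2)
      simpa [out, piece] using this

/-- words of SAWs with a property -/
noncomputable def cF (S : Finset Γ) (P : List Γ → Prop) (n : ℕ) : Finset (List Γ) :=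
  (sawF S n).filter P

lemma mem_cF {S : Finset Γ} {P : List Γ → Prop} {n : ℕ} {l : List Γ} :
    l ∈ cF S P n ↔ (l.length = n ∧ (∀ x ∈ l, x ∈ S) ∧ SAW l) ∧ P l := by
  rw [cF, Finset.mem_filter, mem_sawF]

lemma cF_add (S : Finset Γ) (P : List Γ → Prop) (hP : ∀ l m, P (l ++ m) → P l ∧ P m) (n m : ℕ) :
    (cF S P (n + m)).card ≤ (cF S P n).card * (cF S P m).card := by
  rw [← Finset.card_product]
  refine Finset.card_le_card_of_injOn (fun l => (l.take n, l.drop n)) ?_ ?_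
  · intro l hl
    rw [Finset.mem_coe, mem_cF] at hl
    obtain ⟨⟨h1, h2, h3⟩, h4⟩ := hl
    rw [← List.take_append_drop n l] at h3 h4
    rw [Finset.mem_coe, Finset.mem_product, mem_cF, mem_cF]
    refine ⟨⟨⟨by simp [h1], fun x hx => h2 x (List.mem_of_mem_take hx), (saw_append.1 h3).1⟩,
      (hP _ _ h4).1⟩, ⟨by simp [h1], fun x hx => h2 x (List.mem_of_mem_drop hx),
      (saw_append.1 h3).2.1⟩, (hP _ _ h4).2⟩
  · intro l _ l' _ h
    simp only [Prod.mk.injEq] at h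
    rw [← List.take_append_drop n l, h.1, h.2, List.take_append_drop]

lemma cF_mul (S : Finset Γ) (P : List Γ → Prop) (hP : ∀ l m, P (l ++ m) → P l ∧ P m) (m q : ℕ) :
    (cF S P (m * q)).card ≤ (cF S P m).card ^ q := by
  induction q with
  | zero =>
    have : cF S P (m * 0) ⊆ {[]} := by
      intro l hl
      rw [mem_cF] at hl
      simpa using hl.1.1
    simpa using Finset.card_le_card this
  | succ q ih =>
    rw [mul_add, mul_one, pow_succ]
    exact (cF_add S P hP _ _).trans (Nat.mul_le_mul_right _ ih)

lemma blocks {S : Finset Γ} {m q : ℕ} {l : List Γ} (hl : l ∈ sawF S (m * q)) :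
    ∃ p ∈ seqs (sawF S m) q, p.flatten = l := by
  induction q generalizing l with
  | zero =>
    rw [mem_sawF] at hl
    have : l = [] := by simpa using hl.1
    exact ⟨[], by simp [mem_seqs], by simp [this]⟩
  | succ q ih =>
    rw [mem_sawF] at hl
    obtain ⟨h1, h2, h3⟩ := hl
    rw [mul_add, mul_one] at h1
    rw [← List.take_append_drop m l] at h3
    obtain ⟨p, hp, e⟩ := ih (l := l.drop m) (by
      rw [mem_sawF]
      exact ⟨by rw [List.length_drop]; omega, fun x hx => h2 x (List.mem_of_mem_drop hx),
        (saw_append.1 h3).2.1⟩)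
    rw [mem_seqs] at hp
    refine ⟨l.take m :: p, ?_, by simp [e]⟩
    rw [mem_seqs]
    refine ⟨by simp [hp.1], ?_⟩
    intro a ha
    rcases List.mem_cons.1 ha with rfl | ha
    · rw [mem_sawF]
      exact ⟨by rw [List.length_take]; omega, fun x hx => h2 x (List.mem_of_mem_take hx),
        (saw_append.1 h3).1⟩
    · exact hp.2 a ha

lemma card_blocks (S : Finset Γ) (P : List Γ → Prop) (m q : ℕ) :
    (cF S P (m * q)).card ≤
      ((seqs (sawF S m) q).filter (fun p => SAW p.flatten ∧ P p.flatten)).card := by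
  have : cF S P (m * q) ⊆
      ((seqs (sawF S m) q).filter (fun p => SAW p.flatten ∧ P p.flatten)).image List.flatten := by
    intro l hl
    rw [cF, Finset.mem_filter] at hl
    obtain ⟨p, hp, rfl⟩ := blocks hl.1
    rw [Finset.mem_image]
    exact ⟨p, by rw [Finset.mem_filter]; exact ⟨hp, (mem_sawF.1 hl.1).2.2, hl.2⟩, rfl⟩
  exact (Finset.card_le_card this).trans Finset.card_image_le

lemma exists_saw_word {S : Finset Γ} (hS : ∀ s ∈ S, s⁻¹ ∈ S)
    (hgen : Subgroup.closure (S : Set Γ) = ⊤) (g : Γ) :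
    ∃ l : List Γ, (∀ x ∈ l, x ∈ S) ∧ SAW l ∧ l.prod = g := by
  have h0 : ∃ n, ∃ l : List Γ, l.length = n ∧ (∀ x ∈ l, x ∈ S) ∧ l.prod = g := by
    have : g ∈ Subgroup.closure (S : Set Γ) := by rw [hgen]; trivial
    induction this using Subgroup.closure_induction with
    | mem x hx => exact ⟨_, [x], rfl, by simpa using hx, by simp⟩
    | one => exact ⟨_, [], rfl, by simp, by simp⟩
    | mul x y _ _ h1 h2 =>
      obtain ⟨_, l, _, h1, h1'⟩ := h1
      obtain ⟨_, m, _, h2, h2'⟩ := h2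
      refine ⟨_, l ++ m, rfl, ?_, by simp [h1', h2']⟩
      intro x hx
      rcases List.mem_append.1 hx with hx | hx
      · exact h1 x hx
      · exact h2 x hx
    | inv x _ h =>
      obtain ⟨_, l, _, h1, h1'⟩ := h
      refine ⟨_, inv l, rfl, ?_, by rw [inv_prod, h1']⟩
      exact inv_mem hS h1
  obtain ⟨l, e, h1, h2⟩ := Nat.find_spec h0
  refine ⟨l, h1, ?_, h2⟩
  by_contra hc
  obtain ⟨x, y, z, rfl, hy, hy1⟩ := not_nodup_split hc
  apply Nat.find_min h0 (m := (x ++ z).length)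
  · rw [← e]
    have := List.length_pos_iff.2 hy
    simp only [List.length_append]; omega
  · refine ⟨x ++ z, rfl, ?_, ?_⟩
    · intro t ht
      apply h1
      simp only [List.mem_append] at ht ⊢
      tauto
    · rw [← h2]; simp [hy1]

lemma sawF_pos [Infinite Γ] {S : Finset Γ} (hS : ∀ s ∈ S, s⁻¹ ∈ S)
    (hgen : Subgroup.closure (S : Set Γ) = ⊤) (n : ℕ) : 1 ≤ (sawF S n).card := by
  by_contra hc
  have h0 : sawF S n = ∅ := by rw [← Finset.card_eq_zero]; omega
  have : (Set.univ : Set Γ) ⊆ ((Finset.range n).biUnion (fun j => (sawF S j).image List.prod) : Finset Γ) := by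
    intro g _
    obtain ⟨l, h1, h2, h3⟩ := exists_saw_word hS hgen g
    rw [Finset.mem_coe, Finset.mem_biUnion]
    refine ⟨l.length, ?_, ?_⟩
    · rw [Finset.mem_range]
      by_contra hl
      have : l.take n ∈ sawF S n := by
        rw [mem_sawF]
        rw [← List.take_append_drop n l] at h2
        exact ⟨by rw [List.length_take]; omega, fun x hx => h1 x (List.mem_of_mem_take hx),
          (saw_append.1 h2).1⟩
      rw [h0] at this
      simp at this
    · rw [Finset.mem_image]
      exact ⟨l, mem_sawF.2 ⟨rfl, h1, h2⟩, h3⟩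
  exact Set.infinite_univ ((Finset.finite_toSet _).subset this)

lemma lim_le {c : ℕ → ℕ} {μ : ℝ} (hc : ∀ m q, c (m * q) ≤ c m ^ q)
    (hμ : Filter.Tendsto (fun n : ℕ => (c n : ℝ) ^ ((1 : ℝ) / n)) Filter.atTop (nhds μ))
    (hμ0 : 0 ≤ μ) {m : ℕ} (hm : 1 ≤ m) : μ ^ m ≤ c m := by
  have hm0 : (m : ℝ) ≠ 0 := by positivity
  have h1 : μ ≤ (c m : ℝ) ^ ((1 : ℝ) / m) := by
    have ht : Filter.Tendsto (fun q : ℕ => m * q) Filter.atTop Filter.atTop :=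
      Filter.tendsto_id.const_mul_atTop' (by omega)
    refine le_of_tendsto (hμ.comp ht) ?_
    filter_upwards [Filter.eventually_ge_atTop 1] with q hq
    have hq0 : (q : ℝ) ≠ 0 := by positivity
    have h2 : (c (m * q) : ℝ) ≤ (c m : ℝ) ^ q := by exact_mod_cast hc m q
    simp only [Function.comp]
    calc (c (m * q) : ℝ) ^ ((1 : ℝ) / (m * q : ℕ)) ≤ ((c m : ℝ) ^ q) ^ ((1 : ℝ) / (m * q : ℕ)) :=
          Real.rpow_le_rpow (by positivity) h2 (by positivity)
      _ = (c m : ℝ) ^ ((1 : ℝ) / m) := by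
          rw [← Real.rpow_natCast, ← Real.rpow_mul (by positivity)]
          congr 1; push_cast; field_simp
  calc μ ^ m ≤ ((c m : ℝ) ^ ((1 : ℝ) / m)) ^ m := by gcongr
    _ = c m := by
      rw [← Real.rpow_natCast, ← Real.rpow_mul (by positivity), one_div, inv_mul_cancel₀ hm0,
        Real.rpow_one]

lemma one_le_lim {c : ℕ → ℕ} {μ : ℝ} (hc : ∀ n, 1 ≤ c n)
    (hμ : Filter.Tendsto (fun n : ℕ => (c n : ℝ) ^ ((1 : ℝ) / n)) Filter.atTop (nhds μ)) :
    1 ≤ μ := by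
  refine ge_of_tendsto' hμ fun n => ?_
  exact Real.one_le_rpow (by exact_mod_cast hc n) (by positivity)

lemma lim_upper {c : ℕ → ℕ} {μ ν : ℝ} (hν : 1 ≤ ν) (hlt : μ < ν)
    (hμ : Filter.Tendsto (fun n : ℕ => (c n : ℝ) ^ ((1 : ℝ) / n)) Filter.atTop (nhds μ)) :
    ∃ C : ℝ, 0 < C ∧ ∀ j, (c j : ℝ) ≤ C * ν ^ j := by
  have h := (hμ.eventually (gt_mem_nhds hlt)).and (Filter.eventually_ge_atTop 1)
  obtain ⟨N, hN⟩ := Filter.eventually_atTop.1 h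
  refine ⟨1 + ∑ j ∈ Finset.range N, (c j : ℝ), by positivity, fun j => ?_⟩
  have hS : 0 ≤ ∑ j ∈ Finset.range N, (c j : ℝ) := by positivity
  have hp : 1 ≤ ν ^ j := one_le_pow₀ hν
  by_cases hj : j < N
  · have : (c j : ℝ) ≤ ∑ j ∈ Finset.range N, (c j : ℝ) :=
      Finset.single_le_sum (f := fun j => (c j : ℝ)) (fun _ _ => by positivity) (Finset.mem_range.2 hj)
    nlinarith
  · obtain ⟨h1, h2⟩ := hN j (by omega)
    have hj0 : (j : ℝ) ≠ 0 := by positivity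
    have : (c j : ℝ) ≤ ν ^ j := by
      calc (c j : ℝ) = ((c j : ℝ) ^ ((1 : ℝ) / j)) ^ j := by
            rw [← Real.rpow_natCast, ← Real.rpow_mul (by positivity), one_div, inv_mul_cancel₀ hj0,
              Real.rpow_one]
        _ ≤ ν ^ j := by gcongr
    nlinarith

lemma few_sum {α : Type*} (A : Finset α) (good : α → Prop) (s : ℝ) (q : ℕ) :
    ∑ p ∈ seqs A q, s ^ (p.countP (fun U => good U)) =
      (∑ a ∈ A, if good a then s else 1) ^ q := by
  induction q with
  | zero => simp [seqs]
  | succ q ih =>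
    rw [sum_seqs_succ, pow_succ, ← ih, mul_comm, Finset.sum_mul]
    refine Finset.sum_congr rfl fun a _ => ?_
    rw [Finset.mul_sum]
    refine Finset.sum_congr rfl fun p _ => ?_
    by_cases h : good a <;> simp [List.countP_cons, h, pow_succ, mul_comm]

lemma few_bound {α : Type*} (A : Finset α) (good : α → Prop) {Q : ℝ} (hQ : 0 < Q)
    (hQA : Q ≤ (A.card : ℝ) ^ 2)
    (hb : ((A.filter (fun a => ¬ good a)).card : ℝ) * A.card ≤ Q / 16) (q : ℕ) :
    (((seqs A (4 * q)).filter (fun p => p.countP (fun U => good U) < 2 * q)).card : ℝ) ≤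
      (Q ^ 2 / 16) ^ q := by
  set σ : ℝ := (A.card : ℝ) with hσ
  have hσ0 : 0 < σ := by
    rcases (Nat.cast_nonneg (α := ℝ) A.card).lt_or_eq with h | h
    · exact h
    · rw [← hσ] at h; rw [← h] at hQA; norm_num at hQA; linarith
  set s : ℝ := Q / (16 * σ ^ 2) with hs
  have hs0 : 0 < s := by positivity
  have hs1 : s ≤ 1 := by
    rw [hs, div_le_one (by positivity)]; nlinarith
  set W : ℝ := ∑ a ∈ A, if good a then s else 1 with hW
  have hW0 : 0 ≤ W := Finset.sum_nonneg fun a _ => by split_ifs <;> positivity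
  have hW1 : W ≤ 2 * (s * σ) := by
    have e : W = (A.filter good).card * s + (A.filter (fun a => ¬ good a)).card := by
      rw [hW, Finset.sum_ite]; simp
    have h1 : ((A.filter good).card : ℝ) ≤ σ := by
      rw [hσ]; exact_mod_cast Finset.card_filter_le _ _
    have h2 : ((A.filter (fun a => ¬ good a)).card : ℝ) ≤ s * σ := by
      have : s * σ = Q / 16 / σ := by rw [hs]; field_simp
      rw [this, le_div_iff₀ hσ0]; exact hb
    rw [e]; nlinarith
  have hW4 : W ^ 4 ≤ s ^ 2 * (Q ^ 2 / 16) := by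
    calc W ^ 4 ≤ (2 * (s * σ)) ^ 4 := by gcongr
      _ = s ^ 2 * (16 * (s * σ ^ 2) ^ 2) := by ring
      _ = s ^ 2 * (Q ^ 2 / 16) := by
        have : s * σ ^ 2 = Q / 16 := by rw [hs]; field_simp
        rw [this]; ring
  have key : (((seqs A (4 * q)).filter (fun p => p.countP (fun U => good U) < 2 * q)).card : ℝ) *
      s ^ (2 * q) ≤ W ^ (4 * q) := by
    rw [hW, ← few_sum, ← nsmul_eq_mul, ← Finset.sum_const]
    refine (Finset.sum_le_sum fun p hp => ?_).trans
      (Finset.sum_le_sum_of_subset_of_nonneg (Finset.filter_subset _ _) fun _ _ _ => by positivity)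
    rw [Finset.mem_filter] at hp
    exact pow_le_pow_of_le_one hs0.le hs1 hp.2.le
  have h3 : W ^ (4 * q) ≤ s ^ (2 * q) * (Q ^ 2 / 16) ^ q := by
    rw [pow_mul, pow_mul, ← mul_pow]; gcongr
  have h4 := key.trans h3
  rw [mul_comm] at h4
  exact le_of_mul_le_mul_left h4 (by positivity)

lemma choose_m {b c : ℕ → ℕ} {μ : ℝ} (hμ1 : 1 ≤ μ) (hb : ∀ m q, b (m * q) ≤ b m ^ q)
    (hμ : Filter.Tendsto (fun n : ℕ => (c n : ℝ) ^ ((1 : ℝ) / n)) Filter.atTop (nhds μ))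
    {m0 : ℕ} (hm0 : 1 ≤ m0) (h : (b m0 : ℝ) < μ ^ m0) :
    ∃ m, 1 ≤ m ∧ (b m : ℝ) * c m ≤ (μ ^ m) ^ 2 / 16 := by
  have hμ0 : 0 < μ := by linarith
  have hcont : Continuous (fun ν : ℝ => (b m0 : ℝ) * ν ^ m0) := by fun_prop
  have hlt : (b m0 : ℝ) * μ ^ m0 < (μ ^ m0) ^ 2 := by
    rw [sq]; exact mul_lt_mul_of_pos_right h (by positivity)
  have hev : ∀ᶠ ν in nhds μ, (b m0 : ℝ) * ν ^ m0 < (μ ^ m0) ^ 2 :=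
    (hcont.tendsto μ).eventually (gt_mem_nhds hlt)
  obtain ⟨ν, hν, hνμ⟩ := (hev.filter_mono nhdsWithin_le_nhds |>.and
    (self_mem_nhdsWithin (s := Set.Ioi μ))).exists
  have hνμ' : μ < ν := hνμ
  obtain ⟨C, hC, hCb⟩ := lim_upper (hμ1.trans hνμ'.le) hνμ' hμ
  set r : ℝ := (b m0 : ℝ) * ν ^ m0 / (μ ^ m0) ^ 2 with hr
  have hν0 : 0 < ν := hμ0.trans hνμ'
  have hr0 : 0 ≤ r := by positivity
  have hr1 : r < 1 := by rw [hr, div_lt_one (by positivity)]; exact hν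
  obtain ⟨j, hj⟩ := exists_pow_lt_of_lt_one (show (0 : ℝ) < 1 / (16 * C) by positivity) hr1
  have hj' : r ^ (j + 1) ≤ 1 / (16 * C) := by
    refine le_trans ?_ hj.le
    exact pow_le_pow_of_le_one hr0 hr1.le (by omega)
  refine ⟨m0 * (j + 1), by nlinarith, ?_⟩
  calc (b (m0 * (j + 1)) : ℝ) * c (m0 * (j + 1)) ≤
      (b m0 : ℝ) ^ (j + 1) * (C * ν ^ (m0 * (j + 1))) := by
        have := hb m0 (j + 1)
        have h2 : (b (m0 * (j + 1)) : ℝ) ≤ (b m0 : ℝ) ^ (j + 1) := by exact_mod_cast this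
        have h3 := hCb (m0 * (j + 1))
        gcongr
    _ = C * (r ^ (j + 1) * ((μ ^ m0) ^ 2) ^ (j + 1)) := by
        rw [← mul_pow, hr, div_mul_cancel₀ _ (by positivity), mul_pow, pow_mul]; ring
    _ ≤ C * (1 / (16 * C) * ((μ ^ m0) ^ 2) ^ (j + 1)) := by gcongr
    _ = (μ ^ (m0 * (j + 1))) ^ 2 / 16 := by
        have e : ((μ ^ m0) ^ 2) ^ (j + 1) = (μ ^ (m0 * (j + 1))) ^ 2 := by
          rw [pow_mul μ m0 (j + 1), pow_right_comm]
        rw [e]; field_simp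

lemma final_contra {c : ℕ → ℕ} {μ ν t : ℝ} (hμ1 : 1 ≤ μ) (ht : 0 < t) {M : ℕ}
    (hν : Filter.Tendsto (fun n : ℕ => (c n : ℝ) ^ ((1 : ℝ) / n)) Filter.atTop (nhds ν))
    (h : ∀ q, 1 ≤ q → (1 + t) ^ q ≤
      4 * ∑ j ∈ Finset.range (M * q + 1), (c j : ℝ) * (1 / μ) ^ j) : μ < ν := by
  by_contra hle
  push Not at hle
  have hμ0 : 0 < μ := by linarith
  have hcont : Continuous (fun x : ℝ => (x / μ) ^ M) := by fun_prop
  have hlt : (μ / μ) ^ M < 1 + t := by rw [div_self hμ0.ne', one_pow]; linarith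
  have hev : ∀ᶠ x in nhds μ, (x / μ) ^ M < 1 + t :=
    (hcont.tendsto μ).eventually (gt_mem_nhds hlt)
  obtain ⟨x, hx, hxμ⟩ := (hev.filter_mono nhdsWithin_le_nhds |>.and
    (self_mem_nhdsWithin (s := Set.Ioi μ))).exists
  have hxμ' : μ < x := hxμ
  obtain ⟨C, hC, hCb⟩ := lim_upper (hμ1.trans hxμ'.le) (hle.trans_lt hxμ') hν
  have hx0 : 0 < x := hμ0.trans hxμ'
  have hxm : 1 ≤ x / μ := by rw [one_le_div hμ0]; exact hxμ'.le
  set ρ : ℝ := (x / μ) ^ M with hρ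
  have hρ0 : 0 < ρ := by positivity
  have key : ∀ q, 1 ≤ q → (1 + t) ^ q ≤ 4 * ((M * q + 1 : ℕ) * (C * ρ ^ q)) := by
    intro q hq
    refine (h q hq).trans ?_
    gcongr
    rw [← nsmul_eq_mul]
    refine (Finset.sum_le_card_nsmul _ _ (C * ρ ^ q) fun j hj => ?_).trans (by simp)
    rw [Finset.mem_range] at hj
    calc (c j : ℝ) * (1 / μ) ^ j ≤ C * x ^ j * (1 / μ) ^ j := by gcongr; exact hCb j
      _ = C * (x / μ) ^ j := by rw [mul_assoc, ← mul_pow]; ring_nf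
      _ ≤ C * (x / μ) ^ (M * q) := by gcongr <;> first | exact hxm | omega
      _ = C * ρ ^ q := by rw [hρ, pow_mul]
  set r : ℝ := ρ / (1 + t) with hr
  have hr0 : 0 < r := by positivity
  have hr1 : r < 1 := by rw [hr, div_lt_one (by positivity)]; exact hx
  have t1 := tendsto_self_mul_const_pow_of_lt_one hr0.le hr1
  have t2 := tendsto_pow_atTop_nhds_zero_of_lt_one hr0.le hr1
  have t3 := ((t1.const_mul (M : ℝ)).add t2).const_mul (4 * C)
  simp only [mul_zero, add_zero] at t3
  obtain ⟨q, hq1, hq⟩ := ((t3.eventually (gt_mem_nhds (show (0 : ℝ) < 1 by norm_num))).and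
    (Filter.eventually_ge_atTop 1)).exists
  have h2 := key q hq
  have h3 : ρ ^ q = r ^ q * (1 + t) ^ q := by
    rw [← mul_pow, hr, div_mul_cancel₀ _ (by positivity)]
  rw [h3] at h2
  have hp : 0 < (1 + t) ^ q := by positivity
  push_cast at h2
  have h4 : 4 * (((M : ℝ) * q + 1) * (C * (r ^ q * (1 + t) ^ q))) =
    (4 * C * (M * (q * r ^ q) + r ^ q)) * (1 + t) ^ q := by ring
  rw [h4] at h2
  nlinarith

noncomputable def ballE (T : Finset Γ) (n : ℕ) : Finset Γ :=
  (Finset.range (n + 1)).biUnion fun j => (seqs T j).image List.prod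

lemma mem_ballE {T : Finset Γ} {n : ℕ} {z : Γ} :
    z ∈ ballE T n ↔ ∃ l : List Γ, (∀ x ∈ l, x ∈ T) ∧ l.length ≤ n ∧ z = l.prod := by
  simp only [ballE, Finset.mem_biUnion, Finset.mem_range, Finset.mem_image, mem_seqs]
  constructor
  · rintro ⟨j, hj, l, ⟨h1, h2⟩, rfl⟩
    exact ⟨l, h2, by omega, rfl⟩
  · rintro ⟨l, h1, h2, rfl⟩
    exact ⟨l.length, by omega, l, ⟨rfl, h1⟩, rfl⟩

lemma exists_R (T : Finset Γ) : ∃ R : ℕ, ∀ a ∈ T, ∀ c ∈ T, conn T a c →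
    ∃ l : List Γ, (∀ x ∈ l, x ∈ T) ∧ l.length ≤ R ∧ (1 : Γ) ∉ pts a l ∧ a * l.prod = c := by
  have h : ∀ x : Γ × Γ, ∃ n : ℕ, conn T x.1 x.2 →
      ∃ l : List Γ, (∀ x ∈ l, x ∈ T) ∧ l.length ≤ n ∧ (1 : Γ) ∉ pts x.1 l ∧ x.1 * l.prod = x.2 := by
    intro x
    by_cases hx : conn T x.1 x.2
    · obtain ⟨l, h1, h2, h3⟩ := hx
      exact ⟨l.length, fun _ => ⟨l, h1, le_rfl, h2, h3⟩⟩
    · exact ⟨0, fun h => absurd h hx⟩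
  choose f hf using h
  refine ⟨∑ x ∈ T ×ˢ T, f x, fun a ha c hc hac => ?_⟩
  obtain ⟨l, h1, h2, h3⟩ := hf (a, c) hac
  refine ⟨l, h1, h2.trans ?_, h3⟩
  exact Finset.single_le_sum (f := f) (fun _ _ => Nat.zero_le _) (Finset.mk_mem_product ha hc)

def T1 (T : Finset Γ) (w : Γ) (U : List Γ) : Prop :=
  ∃ Z s s' Y, U = (Z ++ [s]) ++ (s' :: Y) ∧ ¬ conn T w s⁻¹ ∧ ¬ conn T s' w⁻¹

def T2 (S T B E : Finset Γ) (k D : ℕ) (U : List Γ) (c : Γ × List Γ) : Prop :=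
  (∃ U1 U2, U = U1 ++ U2 ∧ U1 ≠ [] ∧ U2 ≠ [] ∧ c.1 = U1.prod ∧ k ≤ Ng B (U1 ++ U2) U1.prod) ∧
  (∃ x ∈ c.2, x ∉ S) ∧ c.2.length ≤ U.length + D ∧ (∀ x ∈ c.2, x ∈ T) ∧ c.2.prod = U.prod ∧
  SAW c.2 ∧ ∀ z ∈ pts 1 c.2, z ∈ pts 1 U ∨ c.1⁻¹ * z ∈ E

lemma good_split {S T B : Finset Γ} {w : Γ} {R k : ℕ} (hST : S ⊆ T)
    (hS : ∀ s ∈ S, s⁻¹ ∈ S) (hT : ∀ s ∈ T, s⁻¹ ∈ T) (hwT : w ∈ T) (hwS : w ∉ S)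
    (hR : ∀ a ∈ T, ∀ c ∈ T, conn T a c →
    ∃ l : List Γ, (∀ x ∈ l, x ∈ T) ∧ l.length ≤ R ∧ (1 : Γ) ∉ pts a l ∧ a * l.prod = c)
    {U : List Γ} (hU : ∀ x ∈ U, x ∈ S) (hs : SAW U) (hg : kgood B k U) :
    T1 T w U ∨ ∃ c, T2 S T B (ballE T (R + 1)) k (R + 1) U c := by
  obtain ⟨U1, U2, rfl, h1, h2, h3⟩ := hg
  have hUT : ∀ x ∈ U1 ++ U2, x ∈ T := fun x hx => hST (hU x hx)
  have hwS' : w⁻¹ ∉ S := fun h => hwS (by simpa using hS _ h)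
  have key : ∀ a, a ∈ T → a ∉ S → a⁻¹ ∉ S → (∃ c ∈ T, conn T a c ∧ U1.prod * c ∈ pts 1 (U1 ++ U2)) →
      ∃ c, T2 S T B (ballE T (R + 1)) k (R + 1) (U1 ++ U2) c := by
    intro a haT haS haS' ⟨c, hc, hconn, hmem⟩
    obtain ⟨l, l1, l2, l3, l4⟩ := hR a haT c hc hconn
    obtain ⟨U', u1, u2, u3, u4, u5, u6⟩ := detour hT hUT hs haT
      ⟨l, l1, l2, l3, by rw [l4]; exact hmem⟩
    refine ⟨(U1.prod, U'), ⟨U1, U2, rfl, h1, h2, rfl, h3⟩, ?_, u3, u1, u4, u5, ?_⟩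
    · rcases u2 with h | h
      · exact ⟨a, h, haS⟩
      · exact ⟨_, h, haS'⟩
    · intro z hz
      rcases u6 z hz with h | ⟨l, q1, q2, rfl⟩
      · exact Or.inl h
      · right; rw [mem_ballE]; exact ⟨l, q1, q2, by simp⟩
  obtain ⟨Z, s, rfl⟩ : ∃ Z s, U1 = Z ++ [s] := ⟨_, _, (List.dropLast_append_getLast h1).symm⟩
  obtain ⟨s', Y, rfl⟩ := List.exists_cons_of_ne_nil h2
  by_cases c1 : conn T w s⁻¹
  · right
    refine key w hwT hwS hwS' ⟨s⁻¹, hT _ (hUT s (by simp)), c1, ?_⟩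
    rw [mem_pts]
    exact ⟨Z, [s] ++ s' :: Y, by simp, by simp⟩
  by_cases c2 : conn T s' w⁻¹
  · right
    refine key w⁻¹ (hT _ hwT) hwS' (by simpa using hwS) ⟨s', hUT s' (by simp), conn_symm hT c2, ?_⟩
    rw [mem_pts]
    exact ⟨Z ++ [s] ++ [s'], Y, by simp, by simp [mul_assoc]⟩
  exact Or.inl ⟨Z, s, s', Y, rfl, c1, c2⟩

lemma Ng_le (B : Finset Γ) (U : List Γ) (v : Γ) : Ng B U v ≤ B.card := by
  unfold Ng
  refine Finset.card_le_card_of_injOn (fun x => v⁻¹ * x) ?_ ?_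
  · intro x hx
    rw [Finset.mem_coe, Finset.mem_filter] at hx
    exact hx.2
  · intro x _ y _ h
    simpa using h

lemma exists_k {S B : Finset Γ} {μ : ℝ} (hμ : 1 ≤ μ)
    (hσ : ∀ m, 1 ≤ m → μ ^ m ≤ ((sawF S m).card : ℝ)) :
    ∃ k, (∃ m, 1 ≤ m ∧ ((cF S (fun l => ¬ kgood B k l) m).card : ℝ) < μ ^ m) ∧
      ∀ m, 1 ≤ m → μ ^ m ≤ ((cF S (fun l => ¬ kgood B (k + 1) l) m).card : ℝ) := by
  by_contra hc
  push Not at hc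
  have all : ∀ k, ∃ m, 1 ≤ m ∧ ((cF S (fun l => ¬ kgood B k l) m).card : ℝ) < μ ^ m := by
    intro k
    induction k with
    | zero =>
      refine ⟨2, by norm_num, ?_⟩
      have : cF S (fun l => ¬ kgood B 0 l) 2 = ∅ := by
        rw [Finset.eq_empty_iff_forall_notMem]
        intro l hl
        rw [mem_cF] at hl
        apply hl.2
        obtain ⟨a, b, rfl⟩ := List.length_eq_two.1 hl.1.1
        exact ⟨[a], [b], rfl, by simp, by simp, Nat.zero_le _⟩
      rw [this, Finset.card_empty, Nat.cast_zero]
      have : 0 < μ := by linarith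
      positivity
    | succ k ih =>
      exact hc k ih
  obtain ⟨m, hm, hlt⟩ := all (B.card + 1)
  have : cF S (fun l => ¬ kgood B (B.card + 1) l) m = sawF S m := by
    ext l
    rw [mem_cF, mem_sawF, and_iff_left_iff_imp]
    rintro _ ⟨U1, U2, _, _, _, h⟩
    have := Ng_le B l U1.prod
    omega
  rw [this] at hlt
  exact absurd (hσ m hm) (not_le.2 hlt)

lemma countP_or {α : Type*} (A : List α) (P Q G : α → Prop) (h : ∀ a ∈ A, G a → P a ∨ Q a) :
    A.countP (fun a => G a) ≤ A.countP (fun a => P a) + A.countP (fun a => Q a) := by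
  induction A with
  | nil => simp
  | cons a A ih =>
    have := ih fun b hb => h b (by simp [hb])
    have h' := h a (by simp)
    simp only [List.countP_cons, decide_eq_true_eq]
    split_ifs <;> first | omega | (exfalso; tauto)

lemma count1 {S T : Finset Γ} (hST : S ⊆ T) {w : Γ} (hw : w ≠ 1) (hwT : w ∈ T) (hwS : w ∉ S)
    {m D q : ℕ} (hm : 1 ≤ m) (hD : 1 ≤ D) (A : Finset (List (List Γ)))
    (hA : A ⊆ seqs (sawF S m) q) (hAs : ∀ p ∈ A, SAW p.flatten)
    {y z : ℝ} (hy : 0 ≤ y) (hz : 0 < z) (hz1 : z ≤ 1)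
    (hK : ((m + D : ℕ) : ℝ) * (y * (2 * (sawF S m).card)) ≤ 1) :
    ∑ p ∈ A, (1 + y * z ^ D) ^ (p.countP (fun U => T1 T w U)) * z ^ (m * q) ≤
      ∑ j ∈ Finset.range ((m + D) * q + 1), ((sawF T j).card : ℝ) * z ^ j := by
  have hch : ∀ U : List Γ, ∃ U' : List Γ, T1 T w U → ∃ Z s s' Y, U = (Z ++ [s]) ++ (s' :: Y) ∧
      U' = (Z ++ [s]) ++ (w :: s' :: Y) ∧ ¬ conn T w s⁻¹ ∧ ¬ conn T s' w⁻¹ := by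
    intro U
    by_cases h : T1 T w U
    · obtain ⟨Z, s, s', Y, e, c1, c2⟩ := h
      exact ⟨_, fun _ => ⟨Z, s, s', Y, e, rfl, c1, c2⟩⟩
    · exact ⟨[], fun h' => absurd h' h⟩
  choose md hmd using hch
  refine main_count hST md (T1 T w) hm A hA ?_ ?_ hy hz hz1 hK
  · intro U hU h1
    obtain ⟨Z, s, s', Y, e, e', c1, c2⟩ := hmd U h1
    rw [mem_sawF] at hU
    rw [e']
    refine ⟨⟨w, by simp, hwS⟩, ?_, ?_⟩
    · have := hU.1
      rw [e] at this
      simp only [List.length_append, List.length_cons, List.length_nil] at this ⊢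
      omega
    · intro x hx
      have h2 := hU.2.1
      rw [e] at h2
      simp only [List.mem_append, List.mem_cons] at hx h2
      rcases hx with hx | hx | hx | hx
      · exact hST (h2 x (by tauto))
      · rw [hx]; exact hwT
      · exact hST (h2 x (by tauto))
      · exact hST (h2 x (by tauto))
  · intro L hL hLA
    have := valid1 (T := T) hw hwT (md := md) L [] (by simp) (by
      intro x hx
      unfold flat at hx
      rw [List.mem_flatten] at hx
      obtain ⟨U, hU, hx⟩ := hx
      rw [List.mem_map] at hU
      obtain ⟨a, ha, rfl⟩ := hU
      exact hST ((mem_sawF.1 (hL a ha).1).2.1 x hx))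
      (fun a ha hf => hmd a.1 ((hL a ha).2 hf)) (by rw [List.nil_append]; exact hAs _ hLA)
    simpa using this

lemma count2 {S T B E : Finset Γ} (hST : S ⊆ T) {k : ℕ}
    (hEB : ∀ e ∈ E, ∀ e' ∈ E, e * e'⁻¹ ∈ B) (hEB' : E ⊆ B)
    {m D q : ℕ} (hm : 1 ≤ m) (A : Finset (List (List Γ)))
    (hA : A ⊆ seqs (sawF S m) q) (hAs : ∀ p ∈ A, SAW p.flatten ∧ ¬ kgood B (k + 1) p.flatten)
    {y z : ℝ} (hy : 0 ≤ y) (hz : 0 < z) (hz1 : z ≤ 1)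
    (hK : ((m + D : ℕ) : ℝ) * (y * (2 * (sawF S m).card)) ≤ 1) :
    ∑ p ∈ A, (1 + y * z ^ D) ^ (p.countP (fun U => ∃ c, T2 S T B E k D U c)) * z ^ (m * q) ≤
      ∑ j ∈ Finset.range ((m + D) * q + 1), ((sawF T j).card : ℝ) * z ^ j := by
  have hch : ∀ U : List Γ, ∃ c, (∃ c, T2 S T B E k D U c) → T2 S T B E k D U c := by
    intro U
    by_cases h : ∃ c, T2 S T B E k D U c
    · obtain ⟨c, hc⟩ := h
      exact ⟨c, fun _ => hc⟩
    · exact ⟨(1, []), fun h' => absurd h' h⟩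
  choose f hf using hch
  refine main_count hST (fun U => (f U).2) (fun U => ∃ c, T2 S T B E k D U c) hm A hA ?_ ?_ hy hz
    hz1 hK
  · intro U hU h1
    obtain ⟨_, h2, h3, h4, _⟩ := hf U h1
    rw [(mem_sawF.1 hU).1] at h3
    exact ⟨h2, h3, h4⟩
  · intro L hL hLA
    refine valid2 (v := fun U => (f U).1) hEB hEB' L ?_ ?_ (hAs _ hLA).1 (hAs _ hLA).2
    · intro a ha h
      obtain ⟨_, _, _, _, h5⟩ := hf a.1 ((hL a ha).2 h)
      exact h5
    · intro a ha h
      obtain ⟨h5, _⟩ := hf a.1 ((hL a ha).2 h)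
      exact h5

lemma core [Infinite Γ] {S T : Finset Γ} (hST : S ⊆ T)
    (hgen : Subgroup.closure (S : Set Γ) = ⊤)
    (hS : ∀ s ∈ S, s⁻¹ ∈ S) (hT : ∀ s ∈ T, s⁻¹ ∈ T)
    {w : Γ} (hw : w ≠ 1) (hwT : w ∈ T) (hwS : w ∉ S) {μ ν : ℝ}
    (hμ : Filter.Tendsto (fun n : ℕ => ((sawF S n).card : ℝ) ^ ((1 : ℝ) / n)) Filter.atTop (nhds μ))
    (hν : Filter.Tendsto (fun n : ℕ => ((sawF T n).card : ℝ) ^ ((1 : ℝ) / n)) Filter.atTop (nhds ν)) :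
    μ < ν := by
  have hμ1 : 1 ≤ μ := one_le_lim (sawF_pos hS hgen) hμ
  have hμ0 : 0 < μ := by linarith
  have hσ : ∀ m, 1 ≤ m → μ ^ m ≤ ((sawF S m).card : ℝ) := by
    intro m hm
    refine lim_le (c := fun n => (sawF S n).card) (fun m q => ?_) hμ hμ0.le hm
    have := cF_mul S (fun _ => True) (fun _ _ _ => ⟨trivial, trivial⟩) m q
    have e : ∀ n, cF S (fun _ => True) n = sawF S n := by
      intro n; ext l; rw [mem_cF, mem_sawF, and_true]
    rwa [e, e] at this
  obtain ⟨R, hR⟩ := exists_R T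
  set E := ballE T (R + 1) with hE
  set B : Finset Γ := E ∪ (E ×ˢ E).image (fun e => e.1 * e.2⁻¹) with hB
  have hEB : ∀ e ∈ E, ∀ e' ∈ E, e * e'⁻¹ ∈ B := by
    intro e he e' he'
    rw [hB, Finset.mem_union]
    right
    rw [Finset.mem_image]
    exact ⟨(e, e'), Finset.mk_mem_product he he', rfl⟩
  have hEB' : E ⊆ B := Finset.subset_union_left
  obtain ⟨k, ⟨m0, hm0, hk0⟩, hk1⟩ := exists_k (S := S) (B := B) hμ1 hσ
  obtain ⟨m, hm, hbm⟩ := choose_m (b := fun n => (cF S (fun l => ¬ kgood B k l) n).card) hμ1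
    (cF_mul S _ (by
      intro l l' h
      refine ⟨fun h' => h ?_, fun h' => h ?_⟩
      · simpa using kgood_infix [] l' h'
      · simpa using kgood_infix l [] h')) hμ hm0 hk0
  set σ : ℝ := ((sawF S m).card : ℝ) with hσd
  have hσm : μ ^ m ≤ σ := hσ m hm
  have hσ0 : 0 < σ := lt_of_lt_of_le (by positivity) hσm
  set D := R + 1 with hD
  set y : ℝ := 1 / ((m + D : ℕ) * (2 * σ)) with hy
  have hmD : (0 : ℝ) < (m + D : ℕ) := by exact_mod_cast (by omega : 0 < m + D)
  have hy0 : 0 < y := by positivity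
  have hK : ((m + D : ℕ) : ℝ) * (y * (2 * σ)) ≤ 1 := by
    rw [hy]; apply le_of_eq; field_simp
  have hz0 : 0 < 1 / μ := by positivity
  have hz1 : 1 / μ ≤ 1 := by rw [div_le_one hμ0]; exact hμ1
  have ht : 0 < y * (1 / μ) ^ D := by positivity
  refine final_contra (M := (m + D) * 4) hμ1 ht hν ?_
  intro q hq
  set t := y * (1 / μ) ^ D with htd
  set A := (seqs (sawF S m) (4 * q)).filter
    (fun p => SAW p.flatten ∧ ¬ kgood B (k + 1) p.flatten) with hA
  have hAsub : A ⊆ seqs (sawF S m) (4 * q) := Finset.filter_subset _ _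
  have hAs : ∀ p ∈ A, SAW p.flatten ∧ ¬ kgood B (k + 1) p.flatten := fun p hp =>
    (Finset.mem_filter.1 hp).2
  have c1 := count1 hST hw hwT hwS hm (by omega : 1 ≤ D) A hAsub (fun p hp => (hAs p hp).1)
    hy0.le hz0 hz1 hK
  have c2 := count2 (D := D) hST hEB hEB' hm A hAsub hAs hy0.le hz0 hz1 hK
  rw [← htd] at c1 c2
  have hAcard : μ ^ (m * (4 * q)) ≤ (A.card : ℝ) := by
    refine (hk1 (m * (4 * q)) (by nlinarith)).trans ?_
    have h5 := card_blocks S (fun l => ¬ kgood B (k + 1) l) m (4 * q)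
    refine Nat.cast_le.2 (h5.trans (le_of_eq ?_))
    rw [hA]; congr
  have hfew := few_bound (sawF S m) (kgood B k) (Q := (μ ^ m) ^ 2) (by positivity)
    (by gcongr) (by
      refine le_trans (le_of_eq ?_) hbm
      congr) q
  set A' := A.filter (fun p => 2 * q ≤ p.countP (fun U => kgood B k U)) with hA'
  have hA'card : μ ^ (m * (4 * q)) / 2 ≤ (A'.card : ℝ) := by
    have h1 : A.card ≤ A'.card + ((seqs (sawF S m) (4 * q)).filter
        (fun p => p.countP (fun U => kgood B k U) < 2 * q)).card := by
      refine (Finset.card_le_card (t := A' ∪ (seqs (sawF S m) (4 * q)).filter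
        (fun p => p.countP (fun U => kgood B k U) < 2 * q)) ?_).trans (Finset.card_union_le _ _)
      intro p hp
      by_cases h : 2 * q ≤ p.countP (fun U => kgood B k U)
      · exact Finset.mem_union_left _ (Finset.mem_filter.2 ⟨hp, h⟩)
      · exact Finset.mem_union_right _ (Finset.mem_filter.2 ⟨hAsub hp, not_le.1 h⟩)
    have h1' : (A.card : ℝ) ≤ A'.card + (((seqs (sawF S m) (4 * q)).filter
        (fun p => p.countP (fun U => kgood B k U) < 2 * q)).card : ℝ) := by exact_mod_cast h1
    have h2 : (((μ ^ m) ^ 2) ^ 2 / 16) ^ q ≤ μ ^ (m * (4 * q)) / 2 := by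
      have e : μ ^ (m * (4 * q)) = (((μ ^ m) ^ 2) ^ 2) ^ q := by
        rw [← pow_mul, ← pow_mul, ← pow_mul]; congr 1; ring
      rw [e, div_pow]
      have : (2 : ℝ) ≤ 16 ^ q := by
        calc (2 : ℝ) ≤ 16 ^ 1 := by norm_num
          _ ≤ 16 ^ q := pow_le_pow_right₀ (by norm_num) hq
      gcongr
    linarith
  have hlow : ∀ p ∈ A', (1 + t) ^ q ≤ (1 + t) ^ (p.countP (fun U => T1 T w U)) +
      (1 + t) ^ (p.countP (fun U => ∃ c, T2 S T B E k D U c)) := by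
    intro p hp
    rw [hA', Finset.mem_filter] at hp
    have h1 := countP_or p (T1 T w) (fun U => ∃ c, T2 S T B E k D U c) (kgood B k) (by
      intro U hU hg
      have hU' := mem_sawF.1 ((mem_seqs.1 (hAsub hp.1)).2 U hU)
      exact good_split hST hS hT hwT hwS hR hU'.2.1 hU'.2.2 hg)
    have h2 := hp.2.trans h1
    have ht1 : 1 ≤ 1 + t := by linarith
    by_cases h3 : q ≤ p.countP (fun U => T1 T w U)
    · have := pow_le_pow_right₀ ht1 h3
      have : 0 ≤ (1 + t) ^ (p.countP (fun U => ∃ c, T2 S T B E k D U c)) := by positivity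
      linarith
    · have h4 : q ≤ p.countP (fun U => ∃ c, T2 S T B E k D U c) := by omega
      have := pow_le_pow_right₀ ht1 h4
      have : 0 ≤ (1 + t) ^ (p.countP (fun U => T1 T w U)) := by positivity
      linarith
  set z := 1 / μ with hz
  have hsum : (A'.card : ℝ) * ((1 + t) ^ q * z ^ (m * (4 * q))) ≤
      ∑ p ∈ A, (1 + t) ^ (p.countP (fun U => T1 T w U)) * z ^ (m * (4 * q)) +
      ∑ p ∈ A, (1 + t) ^ (p.countP (fun U => ∃ c, T2 S T B E k D U c)) * z ^ (m * (4 * q)) := by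
    rw [← Finset.sum_add_distrib, ← nsmul_eq_mul, ← Finset.sum_const]
    refine (Finset.sum_le_sum fun p hp => ?_).trans
      (Finset.sum_le_sum_of_subset_of_nonneg (Finset.filter_subset _ _) fun _ _ _ => by positivity)
    rw [← add_mul]
    exact mul_le_mul_of_nonneg_right (hlow p hp) (by positivity)
  have hone : μ ^ (m * (4 * q)) * z ^ (m * (4 * q)) = 1 := by
    rw [← mul_pow, hz, mul_one_div_cancel hμ0.ne', one_pow]
  have hl : (1 + t) ^ q / 2 ≤ (A'.card : ℝ) * ((1 + t) ^ q * z ^ (m * (4 * q))) := by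
    calc (1 + t) ^ q / 2 = μ ^ (m * (4 * q)) / 2 * ((1 + t) ^ q * z ^ (m * (4 * q))) := by
          linear_combination (-(1 + t) ^ q / 2) * hone
      _ ≤ _ := by gcongr
  rw [mul_assoc (m + D) 4 q]
  linarith

lemma key [Infinite Γ]
    (S : Finset Γ)
    (hgen : Subgroup.closure (S : Set Γ) = ⊤)
    (hSinv : ∀ s ∈ S, s⁻¹ ∈ S)
    (h1S : (1 : Γ) ∉ S)
    (w : Γ) (hw1 : w ≠ 1) (hwS : w ∉ S)
    (μ μbar : ℝ)
    (hμ : Filter.Tendsto (fun n : ℕ => (sawCount (cayleyGraph (S : Set Γ)) 1 n : ℝ) ^ ((1 : ℝ) / n))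
      Filter.atTop (nhds μ))
    (hμbar : Filter.Tendsto (fun n : ℕ =>
        (sawCount (cayleyGraph ((S : Set Γ) ∪ {w, w⁻¹})) 1 n : ℝ) ^ ((1 : ℝ) / n))
      Filter.atTop (nhds μbar)) :
    μ < μbar := by
  set T : Finset Γ := S ∪ {w, w⁻¹} with hT
  have memT : ∀ x, x ∈ T ↔ x ∈ S ∨ x = w ∨ x = w⁻¹ := by
    intro x
    rw [hT, Finset.mem_union, Finset.mem_insert, Finset.mem_singleton]
  have hTc : (S : Set Γ) ∪ {w, w⁻¹} = (T : Set Γ) := by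
    ext x
    rw [Finset.mem_coe, memT]
    simp only [Set.mem_union, Set.mem_insert_iff, Set.mem_singleton_iff, Finset.mem_coe]
  have hTinv : ∀ s ∈ T, s⁻¹ ∈ T := by
    intro s hs
    rw [memT] at hs ⊢
    rcases hs with h | rfl | rfl
    · exact Or.inl (hSinv _ h)
    · simp
    · simp
  have h1T : (1 : Γ) ∉ T := by
    rw [memT]
    rintro (h | h | h)
    · exact h1S h
    · exact hw1 h.symm
    · exact hw1 (by simpa using h.symm)
  rw [hTc] at hμbar
  simp only [sawCount_eq hSinv h1S] at hμ
  simp only [sawCount_eq hTinv h1T] at hμbar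
  exact core (S := S) (T := T) Finset.subset_union_left hgen hSinv hTinv hw1
    ((memT w).2 (by simp)) hwS hμ hμbar

end SawP
/-- Declaring a non-trivial element `w ∉ S` to be a generator strictly increases the
connective constant of the Cayley graph. -/
theorem cayley_add_generator_strict_increase {Γ : Type*} [Group Γ] [Infinite Γ]
    (S : Finset Γ)
    (hgen : Subgroup.closure (S : Set Γ) = ⊤)
    (hSinv : ∀ s ∈ S, s⁻¹ ∈ S)
    (h1S : (1 : Γ) ∉ S)
    (w : Γ) (hw1 : w ≠ 1) (hwS : w ∉ S)
    (μ μbar : ℝ)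
    (hμ : Tendsto (fun n : ℕ => (sawCount (cayleyGraph (S : Set Γ)) 1 n : ℝ) ^ ((1 : ℝ) / n))
      atTop (nhds μ))
    (hμbar : Tendsto (fun n : ℕ =>
        (sawCount (cayleyGraph ((S : Set Γ) ∪ {w, w⁻¹})) 1 n : ℝ) ^ ((1 : ℝ) / n))
      atTop (nhds μbar)) :
    μ < μbar := by
  exact SawP.key S hgen hSinv h1S w hw1 hwS μ μbar hμ hμbar
end
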